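/- arXiv:1409.3473 — 2 statements merged into one kernel-verified Lean document; each statement's English description precedes it below -/
import Mathlib

section
/- Let (A, 𝔪) be a d-dimensional complete equidimensional reduced Noetherian local ring of prime characteristic p and let I ⊆ A be an 𝔪-primary ideal. Then (1/d!)·e(I) ≤ e_HK(I) ≤ e(I). Moreover, if d ≥ 2, then the left inequality is strict: (1/d!)·e(I) < e_HK(I). -/
open IsLocalRing Filter Topology
open scoped TensorProduct

/-- The Frobenius bracket power `I^{[q]}`: the ideal generated by `q`-th powers of elements of `I`. -/
def Ideal.bracketPow {R : Type*} [CommRing R] (I : Ideal R) (q : ℕ) : Ideal R :=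
  Ideal.span ((fun a => a ^ q) '' (I : Set R))

/-- `R°`: the set of elements of `R` not contained in any minimal prime ideal. -/
def ringCirc (R : Type*) [CommRing R] : Set R :=
  {c | ∀ P ∈ minimalPrimes R, c ∉ P}

/-- The tight closure of an ideal `I` in a ring of characteristic `p`:
`x ∈ I^*` iff there is `c ∈ R°` with `c * x ^ (p ^ e) ∈ I^{[p^e]}` for all sufficiently
large `e`. -/
def tightClosure {R : Type*} [CommRing R] (p : ℕ) (I : Ideal R) : Set R :=
  {x | ∃ c ∈ ringCirc R, ∃ N : ℕ, ∀ e : ℕ, N ≤ e → c * x ^ p ^ e ∈ I.bracketPow (p ^ e)}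

/-- `x` is integral over the ideal `J`: there are `n ≥ 1` and `aᵢ ∈ Jⁱ` with
`x ^ n + a₁ x ^ (n-1) + ⋯ + aₙ = 0`. -/
def IsIntegralOverIdeal {R : Type*} [CommRing R] (J : Ideal R) (x : R) : Prop :=
  ∃ n : ℕ, 0 < n ∧ ∃ a : ℕ → R, (∀ i ∈ Finset.Icc 1 n, a i ∈ J ^ i) ∧
    x ^ n + ∑ i ∈ Finset.Icc 1 n, a i * x ^ (n - i) = 0

/-- `R` is F-finite: `F_*R` is a finitely generated `R`-module, i.e. there is a finite set
of generators `s` such that every element of `R` is an `R`-linear combination of elements of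
`s` with respect to the Frobenius-twisted action `r • b = r ^ p * b`. -/
def FFinite (R : Type*) [CommRing R] (p : ℕ) : Prop :=
  ∃ s : Finset R, ∀ x : R, ∃ a : R → R, x = ∑ b ∈ s, a b ^ p * b

/-- The map `cF^e : R → F^e_* R`, `x ↦ c * x ^ (p ^ e)`, splits as an `R`-module
homomorphism: there is an additive `φ : R → R` with `φ (r ^ (p ^ e) * x) = r * φ x`
for all `r, x` and `φ c = 1`. -/
def FrobSplitsWith {R : Type*} [CommRing R] (p : ℕ) (c : R) (e : ℕ) : Prop :=
  ∃ φ : R →+ R, (∀ r x : R, φ (r ^ p ^ e * x) = r * φ x) ∧ φ c = 1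

/-- `R` is strongly F-regular: F-finite, reduced, and for every `c ∈ R°` some `cF^e` splits. -/
def StronglyFRegular (R : Type*) [CommRing R] (p : ℕ) : Prop :=
  FFinite R p ∧ IsReduced R ∧ ∀ c ∈ ringCirc R, ∃ e : ℕ, FrobSplitsWith p c e

/-- `R` is F-pure: the Frobenius map `R → F_* R` splits as an `R`-module homomorphism. -/
def FPure (R : Type*) [CommRing R] (p : ℕ) : Prop :=
  ∃ φ : R →+ R, (∀ r x : R, φ (r ^ p * x) = r * φ x) ∧ φ 1 = 1

/-- A regular local ring: a Noetherian local ring whose maximal ideal can be generated by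
`dim R` elements. -/
def IsRegularLocal (R : Type*) [CommRing R] [IsLocalRing R] : Prop :=
  IsNoetherianRing R ∧ ∃ (d : ℕ) (x : Fin d → R),
    ringKrullDim R = d ∧ IsLocalRing.maximalIdeal R = Ideal.span (Set.range x)

/-- The height of an ideal: the infimum of the heights of the primes containing it. -/
noncomputable def idealHeight {R : Type*} [CommRing R] (I : Ideal R) : ℕ∞ :=
  ⨅ (P : PrimeSpectrum R) (_ : I ≤ P.asIdeal), Order.height P

/-- A parameter ideal: an ideal generated by `ht I` elements. -/
def IsParameterIdeal {R : Type*} [CommRing R] (I : Ideal R) : Prop :=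
  ∃ n : ℕ, idealHeight I = n ∧ ∃ x : Fin n → R, I = Ideal.span (Set.range x)

/-- A local ring is F-rational if every parameter ideal is tightly closed. -/
def FRationalLocal (R : Type*) [CommRing R] [IsLocalRing R] (p : ℕ) : Prop :=
  ∀ I : Ideal R, IsParameterIdeal I → tightClosure p I = ↑I

/-- A Cohen–Macaulay local ring: every full system of parameters `x₁, …, x_d`
(`d = dim B`) is a regular sequence, i.e. `(x₁, …, xᵢ) : xᵢ₊₁ = (x₁, …, xᵢ)`. -/
def IsCohenMacaulayLocalRing (B : Type*) [CommRing B] [IsLocalRing B] : Prop :=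
  ∀ d : ℕ, ringKrullDim B = d →
    ∀ x : Fin d → B, (∀ i, x i ∈ IsLocalRing.maximalIdeal B) →
      (Ideal.span (Set.range x)).radical = IsLocalRing.maximalIdeal B →
      ∀ i : Fin d,
        Submodule.colon (Ideal.span (x '' {j | (j : ℕ) < (i : ℕ)})) (Ideal.span {x i}) =
          Ideal.span (x '' {j | (j : ℕ) < (i : ℕ)})

/-- The length `ℓ_R M` of a module, as an extended natural number: the supremum of the
lengths of chains of submodules below `⊤`. -/
noncomputable def moduleLength (R M : Type*) [Ring R] [AddCommGroup M] [Module R M] : ℕ∞ :=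
  Order.height (⊤ : Submodule R M)

/-- The Frobenius endomorphism `x ↦ x ^ p`, as a ring homomorphism, in prime
characteristic `p`. -/
noncomputable def frobeniusRingHom (R : Type*) [CommRing R] (p : ℕ) [Fact p.Prime] [CharP R p] :
    R →+* R :=
  frobenius R p

lemma HKB.pow_ineq_aux (m c d : ℕ) :
    (m + c) ^ (d + 1) ≤ m ^ (d + 1) + c * (d + 1) * (m + c) ^ d := by
  induction d with
  | zero => simp
  | succ d ih =>
    have h1 : m * (m + c) ^ (d + 1) ≤ m * (m ^ (d + 1) + c * (d + 1) * (m + c) ^ d) :=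
      Nat.mul_le_mul_left _ ih
    have h2 : m * (c * (d + 1) * (m + c) ^ d) ≤ (m + c) * (c * (d + 1) * (m + c) ^ d) :=
      Nat.mul_le_mul_right _ (Nat.le_add_right _ _)
    calc (m + c) ^ (d + 1 + 1) = m * (m + c) ^ (d + 1) + c * (m + c) ^ (d + 1) := by ring
      _ ≤ m * (m ^ (d + 1) + c * (d + 1) * (m + c) ^ d) + c * (m + c) ^ (d + 1) := by omega
      _ = m ^ (d + 1 + 1) + m * (c * (d + 1) * (m + c) ^ d) + c * (m + c) ^ (d + 1) := by ring
      _ ≤ m ^ (d + 1 + 1) + (m + c) * (c * (d + 1) * (m + c) ^ d) + c * (m + c) ^ (d + 1) := by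
        omega
      _ = _ := by ring

lemma HKB.pow_ineq (n c d : ℕ) :
    n ^ (d + 1) ≤ (n - c) ^ (d + 1) + c * (d + 1) * n ^ d := by
  rcases le_total c n with h | h
  · have := HKB.pow_ineq_aux (n - c) c d
    rwa [Nat.sub_add_cancel h] at this
  · calc n ^ (d + 1) = n * n ^ d := by ring
      _ ≤ (c * (d + 1)) * n ^ d := Nat.mul_le_mul_right _ (by nlinarith)
      _ ≤ _ := Nat.le_add_left _ _

def HKB.box (r n : ℕ) : Finset (Fin r → ℕ) := Fintype.piFinset fun _ => Finset.range n

def HKB.simplex (r n : ℕ) : Finset (Fin r → ℕ) := (HKB.box r n).filter (fun a => ∑ i, a i < n)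

lemma HKB.mem_box {r n : ℕ} {a : Fin r → ℕ} : a ∈ HKB.box r n ↔ ∀ i, a i < n := by
  simp [HKB.box]

lemma HKB.mem_simplex {r n : ℕ} {a : Fin r → ℕ} : a ∈ HKB.simplex r n ↔ ∑ i, a i < n := by
  simp only [HKB.simplex, Finset.mem_filter, HKB.mem_box, and_iff_right_iff_imp]
  intro h i
  exact lt_of_le_of_lt (Finset.single_le_sum (fun _ _ => Nat.zero_le _) (Finset.mem_univ i)) h

lemma HKB.sum_box_succ {r n : ℕ} (φ : (Fin (r + 1) → ℕ) → ℕ) :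
    ∑ a ∈ HKB.box (r + 1) n, φ a =
      ∑ t ∈ Finset.range n, ∑ b ∈ HKB.box r n, φ (Fin.cons t b) := by
  rw [← Finset.sum_product']
  symm
  refine Finset.sum_equiv (Fin.consEquiv (fun _ => ℕ)) ?_ ?_
  · rintro ⟨t, b⟩
    simp [HKB.mem_box, Fin.forall_fin_succ, Fin.consEquiv]
  · rintro ⟨t, b⟩ _
    simp [Fin.consEquiv]

lemma HKB.sum_simplex_mono {r m n : ℕ} (h : m ≤ n) (φ : (Fin r → ℕ) → ℕ) :
    ∑ a ∈ HKB.simplex r m, φ a ≤ ∑ a ∈ HKB.simplex r n, φ a := by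
  refine Finset.sum_le_sum_of_subset ?_
  intro a ha
  rw [HKB.mem_simplex] at *
  omega

lemma HKB.sum_simplex_succ {r n : ℕ} (φ : (Fin (r + 1) → ℕ) → ℕ) :
    ∑ t ∈ Finset.range n, ∑ b ∈ HKB.simplex r (n - t), φ (Fin.cons t b) =
      ∑ a ∈ HKB.simplex (r + 1) n, φ a := by
  rw [Finset.sum_sigma']
  refine Finset.sum_bij' (fun x _ => Fin.cons x.1 x.2) (fun a _ => ⟨a 0, Fin.tail a⟩) ?_ ?_ ?_ ?_ ?_
  · rintro ⟨t, b⟩ h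
    simp only [Finset.mem_sigma, Finset.mem_range, HKB.mem_simplex] at h
    simp only [HKB.mem_simplex, Fin.sum_univ_succ, Fin.cons_zero, Fin.cons_succ]
    omega
  · intro a h
    simp only [HKB.mem_simplex, Fin.sum_univ_succ] at h
    simp only [Finset.mem_sigma, Finset.mem_range, HKB.mem_simplex, Fin.tail]
    omega
  · rintro ⟨t, b⟩ h
    simp
  · intro a h
    simp
  · rintro ⟨t, b⟩ h
    simp

lemma HKB.stabilize {r : ℕ} (h : (Fin (r + 1) → ℕ) → ℕ) (hh : Antitone h) :
    ∃ T : ℕ, ∀ t, T ≤ t → ∀ b : Fin r → ℕ, h (Fin.cons t b) = h (Fin.cons T b) := by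
  by_contra hcon
  push Not at hcon
  have hanti : ∀ {s t : ℕ} {a b : Fin r → ℕ}, s ≤ t → a ≤ b →
      h (Fin.cons t b) ≤ h (Fin.cons s a) := by
    intro s t a b hst hab
    exact hh (Fin.cons_le_cons.2 ⟨hst, hab⟩)
  choose τ hτ a ha using hcon
  have ha' : ∀ T, h (Fin.cons (τ T) (a T)) < h (Fin.cons T (a T)) := fun T =>
    lt_of_le_of_ne (hanti (hτ T) le_rfl) (ha T)
  obtain ⟨g, hg⟩ := (wellQuasiOrdered_le (α := Fin r → ℕ)).exists_monotone_subseq a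
  have hdesc : ∀ i, ∃ j, h (Fin.cons (g j) (a (g j))) < h (Fin.cons (g i) (a (g i))) := by
    intro i
    refine ⟨max i (τ (g i)), lt_of_le_of_lt (hanti ?_ (hg i _ (le_max_left _ _))) (ha' (g i))⟩
    exact le_trans (le_max_right i _) (g.strictMono.le_apply)
  obtain ⟨i, hi⟩ : ∃ i, ∀ j, h (Fin.cons (g i) (a (g i))) ≤ h (Fin.cons (g j) (a (g j))) := by
    refine ⟨Function.argmin (fun i => h (Fin.cons (g i) (a (g i)))), fun j => ?_⟩
    exact Function.argmin_le (fun i => h (Fin.cons (g i) (a (g i)))) j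
  obtain ⟨j, hj⟩ := hdesc i
  exact absurd (hi j) (not_le.2 hj)

lemma HKB.sum_pow_lower (n k : ℕ) :
    (n : ℝ) ^ (k + 1) / ((k + 1).factorial : ℝ) ≤
      ∑ j ∈ Finset.range n, ((n - j : ℕ) : ℝ) ^ k / (k.factorial : ℝ) := by
  have key : n ^ (k + 1) ≤ (k + 1) * ∑ j ∈ Finset.range n, (n - j) ^ k := by
    induction n with
    | zero => simp
    | succ n ih =>
      rw [Finset.sum_range_succ']
      have := HKB.pow_ineq (n + 1) 1 k
      simp only [Nat.add_sub_add_right, Nat.sub_zero, mul_add, Nat.add_sub_cancel, one_mul] at *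
      omega
  have key' : (n : ℝ) ^ (k + 1) ≤ (k + 1) * ∑ j ∈ Finset.range n, ((n - j : ℕ) : ℝ) ^ k := by
    exact_mod_cast key
  rw [← Finset.sum_div, Nat.factorial_succ, Nat.cast_mul, div_le_div_iff₀ (by positivity)
    (by positivity)]
  push_cast
  calc _ ≤ ((k + 1) * ∑ j ∈ Finset.range n, ((n - j : ℕ) : ℝ) ^ k) * (k.factorial : ℝ) := by
        gcongr
    _ = _ := by ring

lemma HKB.combi (r : ℕ) : ∀ (h : (Fin r → ℕ) → ℕ), Antitone h →
    ∃ (L : Multiset ℕ) (U : ℕ), ∀ n : ℕ,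
      (((∑ a ∈ HKB.box r n, h a : ℕ) : ℝ) ≤ (L.map (fun k => (n : ℝ) ^ k)).sum) ∧
      (L.map (fun k => (n : ℝ) ^ k / (k.factorial : ℝ))).sum ≤
        ((∑ a ∈ HKB.simplex r (n + U), h a : ℕ) : ℝ) := by
  induction r with
  | zero =>
    intro h hh
    refine ⟨Multiset.replicate (h 0) 0, 1, fun n => ⟨?_, ?_⟩⟩
    · have : HKB.box 0 n = {0} := by
        ext a; simp [HKB.mem_box, Subsingleton.elim a 0]
      simp [this]
    · have : HKB.simplex 0 (n + 1) = {0} := by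
        ext a; simp [HKB.mem_simplex, Subsingleton.elim a 0]
      simp [this]
  | succ r ih =>
    intro h hh
    obtain ⟨T, hT⟩ := HKB.stabilize h hh
    have hcons : ∀ t : ℕ, Antitone (fun b : Fin r → ℕ => h (Fin.cons t b)) := by
      intro t a b hab
      exact hh (Fin.cons_le_cons.2 ⟨le_rfl, hab⟩)
    choose L U hLU using fun t : ℕ => ih _ (hcons t)
    refine ⟨(∑ t ∈ Finset.range T, L t) + (L T).map (fun k => k + 1),
      T + ∑ t ∈ Finset.range (T + 1), U t, fun n => ⟨?_, ?_⟩⟩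
    · rw [HKB.sum_box_succ]
      have h1 : ∑ t ∈ Finset.range n, ∑ b ∈ HKB.box r n, h (Fin.cons t b) ≤
          ∑ t ∈ Finset.range T, ∑ b ∈ HKB.box r n, h (Fin.cons t b) +
            n * ∑ b ∈ HKB.box r n, h (Fin.cons T b) := by
        calc _ ≤ ∑ t ∈ Finset.range (T + n), ∑ b ∈ HKB.box r n, h (Fin.cons t b) :=
              Finset.sum_le_sum_of_subset (by simp)
          _ = _ := by
              rw [Finset.sum_range_add]
              simp [hT]
      have h2 := (Nat.cast_le (α := ℝ)).2 h1
      refine h2.trans ?_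
      rw [Multiset.map_add, Multiset.sum_add, Nat.cast_add, Nat.cast_mul, Nat.cast_sum]
      refine add_le_add ?_ ?_
      · have e : ((∑ t ∈ Finset.range T, L t).map (fun k => (n : ℝ) ^ k)).sum =
          ∑ t ∈ Finset.range T, ((L t).map (fun k => (n : ℝ) ^ k)).sum := by
          rw [← Multiset.coe_mapAddMonoidHom, map_sum, ← Multiset.coe_sumAddMonoidHom, map_sum]
        rw [e]
        exact Finset.sum_le_sum fun t _ => (hLU t n).1
      · rw [Multiset.map_map]
        simp only [Function.comp_def, pow_succ']
        rw [Multiset.sum_map_mul_left]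
        exact mul_le_mul_of_nonneg_left (hLU T n).1 (Nat.cast_nonneg _)
    · rw [← HKB.sum_simplex_succ]
      have hUle : ∀ t ≤ T, U t ≤ ∑ t ∈ Finset.range (T + 1), U t := fun t ht =>
        Finset.single_le_sum (f := U) (fun _ _ => Nat.zero_le _) (by simp; omega)
      set V := ∑ t ∈ Finset.range (T + 1), U t with hV
      have h1 : ∑ t ∈ Finset.range T, ∑ b ∈ HKB.simplex r (n + U t), h (Fin.cons t b) +
          ∑ j ∈ Finset.range n, ∑ b ∈ HKB.simplex r ((n - j) + U T), h (Fin.cons T b) ≤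
          ∑ t ∈ Finset.range (n + (T + V)),
            ∑ b ∈ HKB.simplex r (n + (T + V) - t), h (Fin.cons t b) := by
        calc _ ≤ ∑ t ∈ Finset.range (T + n),
            ∑ b ∈ HKB.simplex r (n + (T + V) - t), h (Fin.cons t b) := by
              rw [Finset.sum_range_add]
              refine add_le_add ?_ ?_
              · refine Finset.sum_le_sum fun t ht => HKB.sum_simplex_mono ?_ _
                have := Finset.mem_range.1 ht
                have := hUle t (by omega)
                omega
              · refine Finset.sum_le_sum fun j hj => ?_
                simp only [hT (T + j) (Nat.le_add_right _ _)]
                refine HKB.sum_simplex_mono ?_ _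
                have := Finset.mem_range.1 hj
                have := hUle T le_rfl
                omega
          _ ≤ _ := Finset.sum_le_sum_of_subset (by
              intro x; simp only [Finset.mem_range]; omega)
      have h2 := (Nat.cast_le (α := ℝ)).2 h1
      refine le_trans ?_ h2
      rw [Multiset.map_add, Multiset.sum_add, Nat.cast_add, Nat.cast_sum, Nat.cast_sum]
      refine add_le_add ?_ ?_
      · have e : ((∑ t ∈ Finset.range T, L t).map
            (fun k => (n : ℝ) ^ k / (k.factorial : ℝ))).sum =
          ∑ t ∈ Finset.range T, ((L t).map (fun k => (n : ℝ) ^ k / (k.factorial : ℝ))).sum := by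
          rw [← Multiset.coe_mapAddMonoidHom, map_sum, ← Multiset.coe_sumAddMonoidHom, map_sum]
        rw [e]
        exact Finset.sum_le_sum fun t _ => (hLU t n).2
      · rw [Multiset.map_map]
        calc _ ≤ ((L T).map (fun k => ∑ j ∈ Finset.range n,
              ((n - j : ℕ) : ℝ) ^ k / (k.factorial : ℝ))).sum :=
              Multiset.sum_map_le_sum_map _ _ fun k _ => HKB.sum_pow_lower n k
          _ = ∑ j ∈ Finset.range n, ((L T).map (fun k =>
              ((n - j : ℕ) : ℝ) ^ k / (k.factorial : ℝ))).sum := by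
              generalize L T = M
              induction M using Multiset.induction_on with
              | empty => simp
              | cons a M ih => simp only [Multiset.map_cons, Multiset.sum_cons, ih,
                  Finset.sum_add_distrib]
          _ ≤ _ := Finset.sum_le_sum fun j _ => (hLU T (n - j)).2

section HKBalg
universe u
variable {R : Type u} [CommRing R]

/-- length of `R/J`. -/
noncomputable def HKB.len (J : Ideal R) : ℕ∞ := Module.length R (R ⧸ J)

lemma HKB.len_anti {J K : Ideal R} (h : J ≤ K) : HKB.len K ≤ HKB.len J :=
  Module.length_le_of_surjective (Submodule.factor h) (Submodule.factor_surjective h)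

lemma HKB.len_top : HKB.len (⊤ : Ideal R) = 0 := by
  have : Subsingleton (R ⧸ (⊤ : Ideal R)) := Ideal.Quotient.subsingleton_iff.2 rfl
  exact Module.length_eq_zero

lemma HKB.len_step (J : Ideal R) (y : R) :
    HKB.len J = HKB.len (J.colon {y}) + HKB.len (J ⊔ Ideal.span {y}) := by
  have hle : J.colon {y} ≤ Submodule.comap (LinearMap.mulRight R y) J := by
    intro a ha
    simpa [Submodule.mem_colon_singleton] using ha
  refine Module.length_eq_add_of_exact
    (Submodule.mapQ (J.colon {y}) J (LinearMap.mulRight R y) hle)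
    (Submodule.factor (le_sup_left : J ≤ J ⊔ Ideal.span {y})) ?_
    (Submodule.factor_surjective _) ?_
  · rw [← LinearMap.ker_eq_bot, LinearMap.ker_eq_bot']
    intro m hm
    obtain ⟨a, rfl⟩ := Submodule.Quotient.mk_surjective _ m
    rw [Submodule.mapQ_apply, Submodule.Quotient.mk_eq_zero] at hm
    rw [Submodule.Quotient.mk_eq_zero, Submodule.mem_colon_singleton]
    simpa using hm
  · intro m
    obtain ⟨a, rfl⟩ := Submodule.Quotient.mk_surjective _ m
    change (Submodule.Quotient.mk a : R ⧸ (J ⊔ Ideal.span {y})) = 0 ↔ _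
    rw [Submodule.Quotient.mk_eq_zero]
    constructor
    · intro h
      obtain ⟨j, hj, z, hz, rfl⟩ := Submodule.mem_sup.1 h
      obtain ⟨b, rfl⟩ := Ideal.mem_span_singleton'.1 hz
      refine ⟨Submodule.Quotient.mk b, ?_⟩
      rw [Submodule.mapQ_apply, Submodule.Quotient.eq]
      simpa using hj
    · rintro ⟨m, hm⟩
      obtain ⟨b, rfl⟩ := Submodule.Quotient.mk_surjective _ m
      rw [Submodule.mapQ_apply, Submodule.Quotient.eq] at hm
      have h2 : b * y ∈ J ⊔ Ideal.span {y} :=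
        Submodule.mem_sup_right (Ideal.mem_span_singleton'.2 ⟨b, rfl⟩)
      have h1 : b * y - a ∈ J ⊔ Ideal.span {y} := Submodule.mem_sup_left (by simpa using hm)
      have := Ideal.sub_mem _ h2 h1
      simpa using this

/-! ### finiteness -/

lemma HKB.len_ne_top [IsLocalRing R] [IsNoetherianRing R] (J : Ideal R)
    (hJ : IsLocalRing.maximalIdeal R ≤ J.radical) : HKB.len J ≠ ⊤ := by
  rcases eq_or_ne J ⊤ with rfl | hne
  · rw [HKB.len_top]; simp
  have hart : IsArtinianRing (R ⧸ J) := by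
    rw [isArtinianRing_iff_isNoetherianRing_krullDimLE_zero]
    refine ⟨inferInstance, Ring.krullDimLE_zero_iff.2 ?_⟩
    intro P hP
    have h1 : J ≤ P.comap (Ideal.Quotient.mk J) := by
      intro x hx
      rw [Ideal.mem_comap, Ideal.Quotient.eq_zero_iff_mem.2 hx]
      exact P.zero_mem
    have hp : (P.comap (Ideal.Quotient.mk J)).IsPrime := Ideal.comap_isPrime _ _
    have h2 : IsLocalRing.maximalIdeal R ≤ P.comap (Ideal.Quotient.mk J) :=
      hJ.trans (hp.radical_le_iff.2 h1)
    have h3 : (P.comap (Ideal.Quotient.mk J)).IsMaximal := by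
      rw [← (IsLocalRing.maximalIdeal.isMaximal R).eq_of_le hp.ne_top h2]
      infer_instance
    have h4 := Ideal.map_eq_top_or_isMaximal_of_surjective (Ideal.Quotient.mk J)
      Ideal.Quotient.mk_surjective h3
    rw [Ideal.map_comap_of_surjective _ Ideal.Quotient.mk_surjective] at h4
    exact h4.resolve_left hP.ne_top
  rw [HKB.len, Module.length_eq_of_surjective (S := R) (R := R ⧸ J) (M := R ⧸ J)
    Ideal.Quotient.mk_surjective]
  exact Module.length_ne_top

/-! ### lower bound for the bracket powers -/

lemma HKB.len_pow_le (I : Ideal R) (q s : ℕ) (T : Finset R) (hT : ∀ x ∈ T, x ∈ I) :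
    HKB.len (I ^ (q + s)) ≤ HKB.len (I ^ (q + s) ⊔ Ideal.span ((fun x => x ^ q) '' (T : Set R))) +
      T.card * HKB.len (I ^ s) := by
  classical
  induction T using Finset.induction_on with
  | empty => simp
  | insert a T ha ih =>
    refine (ih fun x hx => hT x (Finset.mem_insert_of_mem hx)).trans ?_
    rw [HKB.len_step _ (a ^ q), Finset.card_insert_of_notMem ha, Finset.coe_insert,
      Set.image_insert_eq, Ideal.span_insert, sup_comm (Ideal.span {a ^ q}), ← sup_assoc]
    have : HKB.len ((I ^ (q + s) ⊔ Ideal.span ((fun x => x ^ q) '' (T : Set R))).colon {a ^ q}) ≤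
        HKB.len (I ^ s) := by
      refine HKB.len_anti ?_
      intro z hz
      rw [Submodule.mem_colon_singleton]
      refine Submodule.mem_sup_left ?_
      rw [smul_eq_mul, mul_comm, pow_add]
      exact Ideal.mul_mem_mul (Ideal.pow_mem_pow (hT a (Finset.mem_insert_self _ _)) q) hz
    calc _ ≤ HKB.len (I ^ s) +
        HKB.len (I ^ (q + s) ⊔ Ideal.span ((fun x => x ^ q) '' (T : Set R)) ⊔ Ideal.span {a ^ q}) +
          T.card * HKB.len (I ^ s) := by gcongr
      _ = _ := by push_cast; ring

lemma HKB.bracket_eq (p : ℕ) [Fact p.Prime] [CharP R p] (e : ℕ) (S : Set R) :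
    (Ideal.span S).bracketPow (p ^ e) = Ideal.span ((fun x => x ^ p ^ e) '' S) := by
  have h : ∀ S : Set R, (fun x => x ^ p ^ e) '' S = (iterateFrobenius R p e) '' S := by
    intro S
    rfl
  rw [Ideal.bracketPow, h, h, ← Ideal.map_span, ← Ideal.map_span, Ideal.span_eq]

lemma HKB.lower (p : ℕ) [Fact p.Prime] [CharP R p] [IsNoetherianRing R] (I : Ideal R) :
    ∃ r : ℕ, ∀ e s : ℕ, HKB.len (I ^ (p ^ e + s)) ≤
      HKB.len (I.bracketPow (p ^ e)) + r * HKB.len (I ^ s) := by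
  obtain ⟨T, hT⟩ := (isNoetherianRing_iff_ideal_fg R).1 inferInstance I
  refine ⟨T.card, fun e s => ?_⟩
  refine (HKB.len_pow_le I (p ^ e) s T fun x hx => hT ▸ Ideal.subset_span hx).trans ?_
  gcongr
  refine HKB.len_anti ?_
  conv_lhs => rw [← hT]
  rw [HKB.bracket_eq]
  exact le_sup_right

/-! ### positivity of the multiplicity -/

lemma HKB.artinRees [IsNoetherianRing R] (I P : Ideal R) [P.IsPrime] (x : R) (hx : x ∉ P) :
    ∃ c : ℕ, 0 < c ∧ ∀ n, (P ⊔ I ^ n).colon {x} ≤ P ⊔ I ^ (n - c) := by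
  obtain ⟨k, hk⟩ := I.exists_pow_inf_eq_pow_smul
    (Submodule.span R {(Ideal.Quotient.mk P x : R ⧸ P)})
  have key : ∀ n ≥ k, (P ⊔ I ^ n).colon {x} ≤ P ⊔ I ^ (n - k) := by
    intro n hn a ha
    rw [Submodule.mem_colon_singleton, smul_eq_mul] at ha
    have hmem : (Ideal.Quotient.mk P (a * x)) ∈
        I ^ n • (⊤ : Submodule R (R ⧸ P)) ⊓ Submodule.span R {(Ideal.Quotient.mk P x : R ⧸ P)} := by
      refine ⟨?_, ?_⟩
      · obtain ⟨u, hu, v, hv, huv⟩ := Submodule.mem_sup.1 ha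
        rw [← huv, map_add, Ideal.Quotient.eq_zero_iff_mem.2 hu, zero_add]
        have : Ideal.Quotient.mk P v = v • (1 : R ⧸ P) := by
          rw [Algebra.smul_def, mul_one]; rfl
        rw [this]
        exact Submodule.smul_mem_smul hv trivial
      · refine Submodule.mem_span_singleton.2 ?_
        exact ⟨a, by rw [Algebra.smul_def, map_mul]; rfl⟩
    rw [hk n hn] at hmem
    have hmem2 : (Ideal.Quotient.mk P (a * x)) ∈
        I ^ (n - k) • Submodule.span R {(Ideal.Quotient.mk P x : R ⧸ P)} :=
      Submodule.smul_mono le_rfl inf_le_right hmem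
    obtain ⟨z, hz, hzx⟩ := Submodule.mem_smul_span_singleton.1 hmem2
    have : (z - a) * x ∈ P := by
      rw [← Ideal.Quotient.eq_zero_iff_mem, sub_mul, map_sub, ← hzx, Algebra.smul_def, map_mul,
        sub_eq_zero]
      rfl
    have h2 : z - a ∈ P := (Ideal.IsPrime.mem_or_mem inferInstance this).resolve_right hx
    have h3 := Ideal.sub_mem (P ⊔ I ^ (n - k)) (Submodule.mem_sup_right hz)
      (Submodule.mem_sup_left h2)
    simpa using h3
  refine ⟨k + 1, Nat.succ_pos _, fun n => ?_⟩
  rcases le_total k n with h | h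
  · refine (key n h).trans (sup_le_sup_left (Ideal.pow_le_pow_right (by omega)) _)
  · have : n - (k + 1) = 0 := by omega
    rw [this, pow_zero, Ideal.one_eq_top, sup_top_eq]
    exact le_top

lemma HKB.pos [IsLocalRing R] [IsNoetherianRing R] (I : Ideal R)
    (hI : I ≤ IsLocalRing.maximalIdeal R) (d : ℕ) :
    ∀ (c : LTSeries (PrimeSpectrum R)), c.length = d → ∀ Q : Ideal R, Q ≤ c.head.asIdeal →
      ∃ N : ℕ, ∀ n : ℕ, 0 < n → ((n ^ d : ℕ) : ℕ∞) ≤ N * HKB.len (Q ⊔ I ^ n) := by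
  induction d with
  | zero =>
    intro c hc Q hQ
    refine ⟨1, fun n hn => ?_⟩
    have hle : Q ⊔ I ^ n ≤ IsLocalRing.maximalIdeal R :=
      sup_le (hQ.trans (IsLocalRing.le_maximalIdeal c.head.2.ne_top))
        ((Ideal.pow_le_self hn.ne').trans hI)
    have : Nontrivial (R ⧸ (Q ⊔ I ^ n)) := Ideal.Quotient.nontrivial_iff.2 fun h =>
      (IsLocalRing.maximalIdeal.isMaximal R).ne_top (top_le_iff.1 (h ▸ hle))
    have h1 : 0 < HKB.len (Q ⊔ I ^ n) := Module.length_pos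
    simpa using Order.one_le_iff_pos.2 h1
  | succ d ih =>
    intro c hc Q hQ
    have hlt : c.head < (RelSeries.tail c (by omega)).head := by
      rw [RelSeries.head_tail]
      refine c.strictMono ?_
      rw [Fin.lt_def]
      have : 1 % (c.length + 1) = 1 := Nat.mod_eq_of_lt (by omega)
      simp [this]
    obtain ⟨x, hx1, hx0⟩ := SetLike.exists_of_lt (show c.head.asIdeal < _ from hlt)
    have : c.head.asIdeal.IsPrime := c.head.2
    obtain ⟨k, hk0, hk⟩ := HKB.artinRees I c.head.asIdeal x hx0
    obtain ⟨N, hN⟩ := ih (RelSeries.tail c (by omega)) (by simp [hc])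
      (c.head.asIdeal ⊔ Ideal.span {x})
      (sup_le hlt.le ((Ideal.span_singleton_le_iff_mem _).2 hx1))
    have step : ∀ n, HKB.len (c.head.asIdeal ⊔ I ^ (n - k)) +
        HKB.len (c.head.asIdeal ⊔ Ideal.span {x} ⊔ I ^ n) ≤ HKB.len (c.head.asIdeal ⊔ I ^ n) := by
      intro n
      rw [HKB.len_step (c.head.asIdeal ⊔ I ^ n) x, sup_right_comm]
      gcongr
      exact HKB.len_anti (hk n)
    have main : ∀ n : ℕ, ((n ^ (d + 1) : ℕ) : ℕ∞) ≤
        ((k * (d + 1) * N : ℕ) : ℕ∞) * HKB.len (c.head.asIdeal ⊔ I ^ n) := by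
      intro n
      induction n using Nat.strong_induction_on with
      | _ n ihn =>
        rcases Nat.eq_zero_or_pos n with rfl | hn
        · simp
        calc ((n ^ (d + 1) : ℕ) : ℕ∞)
            ≤ (((n - k) ^ (d + 1) + k * (d + 1) * n ^ d : ℕ) : ℕ∞) :=
              Nat.cast_le.2 (HKB.pow_ineq n k d)
          _ = (((n - k) ^ (d + 1) : ℕ) : ℕ∞) + ((k * (d + 1) : ℕ) : ℕ∞) * ((n ^ d : ℕ) : ℕ∞) := by
              push_cast; ring
          _ ≤ ((k * (d + 1) * N : ℕ) : ℕ∞) * HKB.len (c.head.asIdeal ⊔ I ^ (n - k)) +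
              ((k * (d + 1) : ℕ) : ℕ∞) *
                (N * HKB.len (c.head.asIdeal ⊔ Ideal.span {x} ⊔ I ^ n)) := by
              gcongr
              · exact ihn _ (by omega)
              · exact hN n hn
          _ = ((k * (d + 1) * N : ℕ) : ℕ∞) * (HKB.len (c.head.asIdeal ⊔ I ^ (n - k)) +
                HKB.len (c.head.asIdeal ⊔ Ideal.span {x} ⊔ I ^ n)) := by
              push_cast; ring
          _ ≤ _ := by gcongr; exact step n
    refine ⟨k * (d + 1) * N, fun n _ => (main n).trans ?_⟩
    gcongr
    exact HKB.len_anti (sup_le_sup_right hQ _)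

/-! ### upper bound -/

/-- monomial -/
def HKB.mon {r : ℕ} (x : Fin r → R) (a : Fin r → ℕ) : R := ∏ i, x i ^ a i

lemma HKB.mon_add {r : ℕ} (x : Fin r → R) (a b : Fin r → ℕ) :
    HKB.mon x (a + b) = HKB.mon x a * HKB.mon x b := by
  simp [HKB.mon, pow_add, Finset.prod_mul_distrib]

/-- degree-lexicographic key -/
def HKB.key {r : ℕ} (a : Fin r → ℕ) : ℕ ×ₗ Lex (Fin r → ℕ) := toLex (∑ i, a i, toLex a)

lemma HKB.key_add {r : ℕ} (a b : Fin r → ℕ) : HKB.key (a + b) = HKB.key a + HKB.key b := by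
  simp only [HKB.key, Pi.add_apply, Finset.sum_add_distrib]
  rfl

lemma HKB.key_inj {r : ℕ} : Function.Injective (HKB.key (r := r)) := by
  intro a b h
  have := congrArg (fun z => ofLex (ofLex z).2) h
  simpa [HKB.key] using this

lemma HKB.key_lt_of_deg {r : ℕ} {a b : Fin r → ℕ} (h : ∑ i, a i < ∑ i, b i) :
    HKB.key a < HKB.key b := Prod.Lex.toLex_lt_toLex.2 (Or.inl h)

lemma HKB.deg_le_of_key {r : ℕ} {a b : Fin r → ℕ} (h : HKB.key a ≤ HKB.key b) :
    ∑ i, a i ≤ ∑ i, b i := by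
  by_contra hc
  exact absurd h (not_le.2 (HKB.key_lt_of_deg (not_le.1 hc)))

/-- ideal generated by monomials with exponent in a set -/
def HKB.F {r : ℕ} (x : Fin r → R) (S : Set (Fin r → ℕ)) : Ideal R := Ideal.span (HKB.mon x '' S)

lemma HKB.chain {r : ℕ} (x : Fin r → R) (K : Ideal R) (m : ℕ) :
    ∀ T : Finset (Fin r → ℕ), T.card = m →
    (∀ a ∈ T, ∀ b, HKB.key b ≤ HKB.key a → b ∈ T) →
    HKB.len (K ⊔ HKB.F x {b | b ∉ T}) =
      ∑ a ∈ T, HKB.len ((K ⊔ HKB.F x {b | HKB.key a < HKB.key b}).colon {HKB.mon x a}) := by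
  classical
  induction m with
  | zero =>
    intro T hT _
    rw [Finset.card_eq_zero] at hT
    subst hT
    have : HKB.F x {b | b ∉ (∅ : Finset (Fin r → ℕ))} = ⊤ := by
      rw [Ideal.eq_top_iff_one]
      exact Ideal.subset_span ⟨0, by simp, by simp [HKB.mon]⟩
    rw [this, sup_top_eq, HKB.len_top]
    simp
  | succ m ih =>
    intro T hT hlow
    obtain ⟨a, haT, hmax⟩ := T.exists_max_image HKB.key (Finset.card_pos.1 (by omega))
    have e1 : {b | b ∉ T} = {b | HKB.key a < HKB.key b} := by
      ext b
      simp only [Set.mem_ofPred_eq]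
      constructor
      · intro hb
        by_contra hc
        exact hb (hlow a haT b (not_lt.1 hc))
      · intro hb hbT
        exact absurd (hmax b hbT) (not_le.2 hb)
    have e2 : {b | b ∉ T.erase a} = insert a {b | b ∉ T} := by
      ext b
      simp only [Finset.mem_erase, Set.mem_ofPred_eq, Set.mem_insert_iff]
      tauto
    have ih' := ih (T.erase a) (by rw [Finset.card_erase_of_mem haT]; omega) (by
      intro c hc b hb
      rw [Finset.mem_erase] at hc ⊢
      refine ⟨?_, hlow c hc.2 b hb⟩
      rintro rfl
      exact hc.1 (HKB.key_inj (le_antisymm (hmax c hc.2) hb)))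
    rw [HKB.len_step _ (HKB.mon x a), ← Finset.add_sum_erase _ _ haT, ← ih', e2]
    rw [e1, HKB.F, HKB.F, Set.image_insert_eq, Ideal.span_insert, sup_comm (Ideal.span _),
      ← sup_assoc]

/-- length of the graded piece -/
noncomputable def HKB.h {r : ℕ} (x : Fin r → R) (a : Fin r → ℕ) : ℕ∞ :=
  HKB.len ((HKB.F x {b | HKB.key a < HKB.key b}).colon {HKB.mon x a})

lemma HKB.h_anti {r : ℕ} (x : Fin r → R) : Antitone (HKB.h x) := by
  intro a b hab
  refine HKB.len_anti ?_
  intro z hz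
  obtain ⟨c, rfl⟩ : ∃ c, b = a + c := ⟨b - a, (add_tsub_cancel_of_le hab).symm⟩
  rw [Submodule.mem_colon_singleton, smul_eq_mul] at hz ⊢
  rw [HKB.mon_add, ← mul_assoc, mul_comm]
  have h1 : HKB.mon x c * (z * HKB.mon x a) ∈
      Ideal.span {HKB.mon x c} * HKB.F x {b | HKB.key a < HKB.key b} :=
    Ideal.mul_mem_mul (Ideal.mem_span_singleton_self _) hz
  refine (?_ : Ideal.span {HKB.mon x c} * HKB.F x {b | HKB.key a < HKB.key b} ≤ _) h1
  rw [HKB.F, Ideal.span_mul_span', Ideal.span_le]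
  rintro _ ⟨_, rfl, _, ⟨b, hb, rfl⟩, rfl⟩
  refine Ideal.subset_span ⟨b + c, ?_, ?_⟩
  · simp only [Set.mem_ofPred_eq, HKB.key_add] at hb ⊢
    exact add_lt_add_left hb _
  · simp only [HKB.mon_add, mul_comm]

lemma HKB.pow_le_F {r : ℕ} (x : Fin r → R) (n : ℕ) :
    (Ideal.span (Set.range x)) ^ n ≤ HKB.F x {b | n ≤ ∑ i, b i} := by
  induction n with
  | zero =>
    have : HKB.F x {b | 0 ≤ ∑ i, b i} = ⊤ := by
      rw [Ideal.eq_top_iff_one]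
      exact Ideal.subset_span ⟨0, by simp, by simp [HKB.mon]⟩
    rw [this]; exact le_top
  | succ n ih =>
    rw [pow_succ]
    refine (Ideal.mul_mono_left ih).trans ?_
    rw [HKB.F, Ideal.span_mul_span', Ideal.span_le]
    rintro _ ⟨_, ⟨b, hb, rfl⟩, _, ⟨i, rfl⟩, rfl⟩
    refine Ideal.subset_span ⟨b + Pi.single i 1, ?_, ?_⟩
    · simp only [Set.mem_ofPred_eq, Pi.add_apply, Finset.sum_add_distrib,
        Finset.sum_pi_single', Finset.mem_univ, if_true] at hb ⊢
      simpa using hb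
    · rw [HKB.mon_add]
      simp [HKB.mon, Pi.single_apply, pow_ite]

lemma HKB.simplex_low {r n : ℕ} : ∀ a ∈ HKB.simplex r n, ∀ b, HKB.key b ≤ HKB.key a →
    b ∈ HKB.simplex r n := by
  intro a ha b hb
  rw [HKB.mem_simplex] at *
  exact lt_of_le_of_lt (HKB.deg_le_of_key hb) ha

lemma HKB.sum_h_le {r : ℕ} (x : Fin r → R) (n : ℕ) :
    ∑ a ∈ HKB.simplex r n, HKB.h x a ≤ HKB.len ((Ideal.span (Set.range x)) ^ n) := by
  have := HKB.chain x ⊥ _ (HKB.simplex r n) rfl HKB.simplex_low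
  simp only [bot_sup_eq] at this
  unfold HKB.h
  rw [← this]
  refine HKB.len_anti ((HKB.pow_le_F x n).trans (le_of_eq ?_))
  simp only [HKB.mem_simplex, not_lt]

lemma HKB.len_box_le {r : ℕ} (x : Fin r → R) (q : ℕ) (K : Ideal R) (hK : ∀ i, x i ^ q ∈ K) :
    HKB.len K ≤ ∑ a ∈ HKB.box r q, HKB.h x a := by
  classical
  have hmon : ∀ a : Fin r → ℕ, (∃ i, q ≤ a i) → HKB.mon x a ∈ K := by
    rintro a ⟨i, hi⟩
    rw [HKB.mon, ← Finset.mul_prod_erase _ _ (Finset.mem_univ i)]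
    refine Ideal.mul_mem_right _ _ ?_
    rw [← Nat.sub_add_cancel hi, pow_add]
    exact Ideal.mul_mem_left _ _ (hK i)
  have hch := HKB.chain x K _ (HKB.simplex r (r * q + 1)) rfl HKB.simplex_low
  have e : K ⊔ HKB.F x {b | b ∉ HKB.simplex r (r * q + 1)} = K := by
    rw [sup_eq_left, HKB.F, Ideal.span_le]
    rintro _ ⟨b, hb, rfl⟩
    refine hmon b ?_
    by_contra hc
    push Not at hc
    apply hb
    rw [HKB.mem_simplex]
    have := Finset.sum_le_card_nsmul Finset.univ b q (fun i _ => (hc i).le)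
    simp only [Finset.card_univ, Fintype.card_fin, smul_eq_mul] at this
    exact Nat.lt_succ_of_le this
  rw [e] at hch
  rw [hch]
  calc _ ≤ ∑ a ∈ HKB.simplex r (r * q + 1), if a ∈ HKB.box r q then HKB.h x a else 0 := by
        refine Finset.sum_le_sum fun a _ => ?_
        split_ifs with hab
        · exact HKB.len_anti (Submodule.colon_mono le_sup_right le_rfl)
        · rw [HKB.mem_box] at hab
          push Not at hab
          have : (K ⊔ HKB.F x {b | HKB.key a < HKB.key b}).colon {HKB.mon x a} = ⊤ := by
            rw [Submodule.colon_eq_top_iff_subset, Set.singleton_subset_iff]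
            exact Submodule.mem_sup_left (hmon a hab)
          rw [this, HKB.len_top]
    _ = ∑ a ∈ HKB.simplex r (r * q + 1) ∩ HKB.box r q, HKB.h x a := by
        rw [Finset.sum_ite_mem]
    _ ≤ _ := Finset.sum_le_sum_of_subset Finset.inter_subset_right

lemma HKB.h_le {r : ℕ} (x : Fin r → R) (a : Fin r → ℕ) :
    HKB.h x a ≤ HKB.len (Ideal.span (Set.range x)) := by
  refine HKB.len_anti ?_
  rw [Ideal.span_le]
  rintro _ ⟨i, rfl⟩
  rw [SetLike.mem_coe, Submodule.mem_colon_singleton]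
  refine Ideal.subset_span ⟨a + Pi.single i 1, ?_, ?_⟩
  · refine HKB.key_lt_of_deg ?_
    simp [Finset.sum_add_distrib]
  · rw [HKB.mon_add]
    simp [HKB.mon, Pi.single_apply, pow_ite, mul_comm]

end HKBalg

lemma HKB.tendsto_shift (f : ℕ → ℝ) (d U : ℕ) (E : ℝ)
    (hf : Tendsto (fun n : ℕ => f n / (n : ℝ) ^ d) atTop (𝓝 E)) :
    Tendsto (fun n : ℕ => f (n + U) / (n : ℝ) ^ d) atTop (𝓝 E) := by
  have h1 : Tendsto (fun n : ℕ => f (n + U) / ((n + U : ℕ) : ℝ) ^ d) atTop (𝓝 E) :=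
    hf.comp (tendsto_add_atTop_nat U)
  have h2 : Tendsto (fun n : ℕ => (1 + (U : ℝ) / (n : ℝ)) ^ d) atTop (𝓝 ((1 + 0) ^ d)) :=
    ((tendsto_const_div_atTop_nhds_zero_nat (U : ℝ)).const_add 1).pow d
  have h3 := h1.mul h2
  rw [add_zero, one_pow, mul_one] at h3
  refine h3.congr' ?_
  filter_upwards [eventually_gt_atTop 0] with n hn
  have hn' : (n : ℝ) ≠ 0 := by positivity
  have hn2 : ((n + U : ℕ) : ℝ) ≠ 0 := by positivity
  have : (1 + (U : ℝ) / (n : ℝ)) = ((n + U : ℕ) : ℝ) / n := by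
    push_cast; field_simp
  rw [this, div_pow]
  field_simp

lemma HKB.upper_real (f : ℕ → ℝ) (d U : ℕ) (E : ℝ) (L : Multiset ℕ) (G : ℕ → ℝ)
    (hf : Tendsto (fun n : ℕ => f n / (n : ℝ) ^ d) atTop (𝓝 E))
    (h1 : ∀ n : ℕ, G n ≤ (L.map (fun k => (n : ℝ) ^ k)).sum)
    (h2 : ∀ n : ℕ, (L.map (fun k => (n : ℝ) ^ k / (k.factorial : ℝ))).sum ≤ f (n + U)) :
    ∀ n, G n ≤ (d.factorial : ℝ) * f (n + U) := by
  have hs := HKB.tendsto_shift f d U E hf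
  have hk : ∀ k ∈ L, k ≤ d := by
    intro k hkL
    by_contra hkd
    have hkd : d + 1 ≤ k := by omega
    have hev : ∀ᶠ n : ℕ in atTop, f (n + U) / (n : ℝ) ^ d < E + 1 :=
      hs.eventually_lt_const (by linarith)
    have hbig : ∀ᶠ n : ℕ in atTop, (E + 1) * (k.factorial : ℝ) < (n : ℝ) :=
      tendsto_natCast_atTop_atTop.eventually_gt_atTop _
    obtain ⟨n, ha, hb, hn⟩ := (hev.and (hbig.and (eventually_gt_atTop 0))).exists
    have hle : (n : ℝ) ^ k / (k.factorial : ℝ) ≤ f (n + U) := by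
      refine le_trans ?_ (h2 n)
      refine Multiset.single_le_sum ?_ _ (Multiset.mem_map_of_mem _ hkL)
      intro y hy
      obtain ⟨j, _, rfl⟩ := Multiset.mem_map.1 hy
      positivity
    have hn1 : (1 : ℝ) ≤ n := by exact_mod_cast hn
    have hpos : (0 : ℝ) < (n : ℝ) ^ d := by positivity
    have hfac : (0 : ℝ) < k.factorial := by positivity
    rw [div_lt_iff₀ hpos] at ha
    rw [div_le_iff₀ hfac] at hle
    have hpk : (n : ℝ) ^ (d + 1) ≤ (n : ℝ) ^ k := pow_le_pow_right₀ hn1 hkd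
    have : (n : ℝ) * (n : ℝ) ^ d < (n : ℝ) * (n : ℝ) ^ d := by
      calc (n : ℝ) * (n : ℝ) ^ d = (n : ℝ) ^ (d + 1) := by ring
        _ ≤ f (n + U) * k.factorial := hpk.trans hle
        _ < ((E + 1) * (n : ℝ) ^ d) * k.factorial := by gcongr
        _ = ((E + 1) * k.factorial) * (n : ℝ) ^ d := by ring
        _ < (n : ℝ) * (n : ℝ) ^ d := by gcongr
    exact lt_irrefl _ this
  intro n
  calc G n ≤ (L.map (fun k => (n : ℝ) ^ k)).sum := h1 n
    _ ≤ (L.map (fun k => (d.factorial : ℝ) * ((n : ℝ) ^ k / (k.factorial : ℝ)))).sum := by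
        refine Multiset.sum_map_le_sum_map _ _ fun k hkL => ?_
        have : (k.factorial : ℝ) ≤ d.factorial := by
          exact_mod_cast Nat.factorial_le (hk k hkL)
        have hfac : (0 : ℝ) < k.factorial := by positivity
        rw [← mul_div_assoc, le_div_iff₀ hfac, mul_comm]
        gcongr
    _ = (d.factorial : ℝ) * (L.map (fun k => (n : ℝ) ^ k / (k.factorial : ℝ))).sum := by
        rw [Multiset.sum_map_mul_left]
    _ ≤ _ := by gcongr; exact h2 n

lemma HKB.strict_real {E H : ℝ} {p r d : ℕ} (hp : 1 < p) (hd : 2 ≤ d) (hE : 0 < E)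
    (h : ∀ k : ℕ, E * ((p ^ k : ℕ) + 1 : ℝ) ^ d ≤ H * ((p ^ k : ℕ) : ℝ) ^ d + r * E) : E < H := by
  obtain ⟨k, hk⟩ : ∃ k, r < p ^ k := ⟨r, Nat.lt_pow_self hp⟩
  have h := h k
  set P := p ^ k
  have hP : (r : ℝ) < P := by exact_mod_cast hk
  have hP1 : (1 : ℝ) ≤ P := by exact_mod_cast (by omega : 1 ≤ P)
  have h1 : (P : ℝ) ^ d + P ≤ ((P : ℝ) + 1) ^ d := by
    obtain ⟨j, rfl⟩ : ∃ j, d = j + 2 := ⟨d - 2, by omega⟩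
    have a1 : (P : ℝ) ^ (j + 1) ≤ ((P : ℝ) + 1) ^ (j + 1) := by gcongr; linarith
    have a2 : (P : ℝ) + 1 ≤ ((P : ℝ) + 1) ^ (j + 1) :=
      le_self_pow₀ (by linarith) (by omega)
    calc (P : ℝ) ^ (j + 2) + P = P * (P : ℝ) ^ (j + 1) + P := by ring
      _ ≤ P * ((P : ℝ) + 1) ^ (j + 1) + ((P : ℝ) + 1) ^ (j + 1) := by
          gcongr; linarith
      _ = _ := by ring
  have hPd : (0 : ℝ) < (P : ℝ) ^ d := by positivity
  by_contra hc
  push Not at hc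
  have h2 : E * ((P : ℝ) ^ d + P) ≤ E * ((P : ℝ) + 1) ^ d := by gcongr
  have h3 : H * (P : ℝ) ^ d ≤ E * (P : ℝ) ^ d := by gcongr
  nlinarith

/-- For an `𝔪`-primary ideal `I` of a `d`-dimensional complete equidimensional reduced
Noetherian local ring of characteristic `p`, one has `e(I)/d! ≤ e_HK(I) ≤ e(I)`;
moreover the left inequality is strict when `d ≥ 2`. -/
theorem hilbert_kunz_between (A : Type*) [CommRing A] [IsLocalRing A]
    [IsNoetherianRing A] [IsReduced A] (p : ℕ) [Fact p.Prime] [CharP A p]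
    (hcomp : IsAdicComplete (IsLocalRing.maximalIdeal A) A)
    (d : ℕ) (hd : ringKrullDim A = d)
    (hequi : ∀ P ∈ minimalPrimes A, ringKrullDim (A ⧸ P) = d)
    (I : Ideal A) (hI : I.radical = IsLocalRing.maximalIdeal A)
    (eI eHK : ℝ)
    (heI : Filter.Tendsto
      (fun n : ℕ =>
        (d.factorial : ℝ) * ((moduleLength A (A ⧸ I ^ n)).toNat : ℝ) / (n : ℝ) ^ d)
      Filter.atTop (nhds eI))
    (heHK : Filter.Tendsto
      (fun e : ℕ =>
        ((moduleLength A (A ⧸ I.bracketPow (p ^ e))).toNat : ℝ) / (p : ℝ) ^ (e * d))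
      Filter.atTop (nhds eHK)) :
    eI / (d.factorial : ℝ) ≤ eHK ∧ eHK ≤ eI ∧ (2 ≤ d → eI / (d.factorial : ℝ) < eHK) := by
  have hlen : ∀ J : Ideal A, moduleLength A (A ⧸ J) = HKB.len J := fun J =>
    (Module.length_eq_height A (A ⧸ J)).symm
  simp only [hlen] at heI heHK
  have hp : p.Prime := Fact.out
  have hIm : I ≤ IsLocalRing.maximalIdeal A := hI ▸ Ideal.le_radical
  -- finiteness
  have hfin : ∀ n, HKB.len (I ^ n) ≠ ⊤ := by
    intro n
    refine HKB.len_ne_top _ ?_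
    rw [← hI]
    rcases Nat.eq_zero_or_pos n with rfl | hn
    · rw [pow_zero, Ideal.one_eq_top, Ideal.radical_top]; exact le_top
    · rw [Ideal.radical_pow I hn.ne']
  have hfinB : ∀ e, HKB.len (I.bracketPow (p ^ e)) ≠ ⊤ := by
    intro e
    refine HKB.len_ne_top _ ?_
    rw [← hI, Ideal.radical_le_radical_iff]
    intro a ha
    exact ⟨p ^ e, Ideal.subset_span ⟨a, ha, rfl⟩⟩
  set f : ℕ → ℝ := fun n => ((HKB.len (I ^ n)).toNat : ℝ) with hf
  set g : ℕ → ℝ := fun e => ((HKB.len (I.bracketPow (p ^ e))).toNat : ℝ) with hg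
  have hfac : (0 : ℝ) < (d.factorial : ℝ) := by positivity
  have hfE : Tendsto (fun n : ℕ => f n / (n : ℝ) ^ d) atTop (𝓝 (eI / d.factorial)) := by
    refine (heI.div_const (d.factorial : ℝ)).congr fun n => ?_
    rw [mul_div_assoc, mul_div_cancel_left₀ _ hfac.ne']
  have hgH : Tendsto (fun e : ℕ => g e / ((p ^ e : ℕ) : ℝ) ^ d) atTop (𝓝 eHK) := by
    refine heHK.congr fun e => ?_
    rw [Nat.cast_pow, ← pow_mul]
  have hpe : Tendsto (fun e : ℕ => p ^ e) atTop atTop :=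
    tendsto_pow_atTop_atTop_of_one_lt hp.one_lt
  have hppos : ∀ e : ℕ, (0 : ℝ) < ((p ^ e : ℕ) : ℝ) := fun e => by
    exact_mod_cast Nat.pow_pos hp.pos
  -- the basic lower estimate
  obtain ⟨r, hr⟩ := HKB.lower p I
  have hlow : ∀ e s, f (p ^ e + s) ≤ g e + r * f s := by
    intro e s
    have h1 := hr e s
    rw [← ENat.natCast_toNat (hfin (p ^ e + s)), ← ENat.natCast_toNat (hfin s),
      ← ENat.natCast_toNat (hfinB e)] at h1
    have h2 : (HKB.len (I ^ (p ^ e + s))).toNat ≤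
        (HKB.len (I.bracketPow (p ^ e))).toNat + r * (HKB.len (I ^ s)).toNat := by
      exact_mod_cast h1
    simp only [hf, hg]
    exact_mod_cast h2
  have hf0 : f 0 = 0 := by
    simp only [hf, pow_zero, Ideal.one_eq_top, HKB.len_top]
    simp
  refine ⟨?_, ?_, ?_⟩
  · refine le_of_tendsto_of_tendsto' (hfE.comp hpe) hgH fun e => ?_
    have := hlow e 0
    rw [hf0, mul_zero, add_zero, add_zero] at this
    have h0 := hppos e
    simp only [Function.comp_apply]
    gcongr
  · -- upper bound
    obtain ⟨m, x, hx⟩ := Submodule.fg_iff_exists_fin_generating_family.1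
      ((isNoetherianRing_iff_ideal_fg A).1 inferInstance I)
    have hx : Ideal.span (Set.range x) = I := hx
    have hhfin : ∀ a, HKB.h x a ≠ ⊤ := by
      intro a
      refine ne_top_of_le_ne_top ?_ (HKB.h_le x a)
      rw [hx]
      simpa using hfin 1
    obtain ⟨L, U, hLU⟩ := HKB.combi m (fun a => (HKB.h x a).toNat) (by
      intro a b hab
      exact ENat.toNat_le_toNat (HKB.h_anti x hab) (hhfin a))
    have hsum : ∀ S : Finset (Fin m → ℕ), ∑ a ∈ S, HKB.h x a =
        ((∑ a ∈ S, (HKB.h x a).toNat : ℕ) : ℕ∞) := by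
      intro S
      rw [Nat.cast_sum]
      exact Finset.sum_congr rfl fun a _ => (ENat.natCast_toNat (hhfin a)).symm
    have hU := HKB.upper_real f d U (eI / d.factorial) L _ hfE (fun n => (hLU n).1) (by
      intro n
      refine (hLU n).2.trans ?_
      have h1 := HKB.sum_h_le x (n + U)
      rw [hx, hsum, ← ENat.natCast_toNat (hfin (n + U))] at h1
      exact Nat.cast_le.2 (Nat.cast_le.1 h1))
    have hgle : ∀ e, g e ≤ (d.factorial : ℝ) * f (p ^ e + U) := by
      intro e
      refine le_trans ?_ (hU (p ^ e))
      have h1 := HKB.len_box_le x (p ^ e) (I.bracketPow (p ^ e)) (fun i =>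
        Ideal.subset_span ⟨x i, hx ▸ Ideal.subset_span ⟨i, rfl⟩, rfl⟩)
      rw [hsum, ← ENat.natCast_toNat (hfinB e)] at h1
      exact Nat.cast_le.2 (Nat.cast_le.1 h1)
    have hlim := ((HKB.tendsto_shift f d U _ hfE).comp hpe).const_mul (d.factorial : ℝ)
    rw [mul_div_cancel₀ _ hfac.ne'] at hlim
    refine le_of_tendsto_of_tendsto' hgH hlim fun e => ?_
    have h0 := hppos e
    simp only [Function.comp_apply]
    rw [← mul_div_assoc]
    gcongr
    exact hgle e
  · intro hd2
    -- positivity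
    have hpos : 0 < eI / (d.factorial : ℝ) := by
      obtain ⟨c, hc⟩ : ∃ c : LTSeries (PrimeSpectrum A), c.length = d :=
        Order.le_krullDim_iff.1 (le_of_eq hd.symm)
      obtain ⟨N, hN⟩ := HKB.pos I hIm d c hc ⊥ bot_le
      have hN' : ∀ n : ℕ, 0 < n → (1 : ℝ) ≤ N * (f n / (n : ℝ) ^ d) := by
        intro n hn
        have h1 := hN n hn
        rw [bot_sup_eq, ← ENat.natCast_toNat (hfin n)] at h1
        have h2 : n ^ d ≤ N * (HKB.len (I ^ n)).toNat := by exact_mod_cast h1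
        have h3 : (n : ℝ) ^ d ≤ N * f n := by
          simp only [hf]
          exact_mod_cast h2
        have hn' : (0 : ℝ) < (n : ℝ) ^ d := by positivity
        rw [← mul_div_assoc, le_div_iff₀ hn', one_mul]
        exact h3
      have hlim := hfE.const_mul (N : ℝ)
      have h1 : (1 : ℝ) ≤ N * (eI / d.factorial) := by
        refine ge_of_tendsto hlim ?_
        filter_upwards [eventually_gt_atTop 0] with n hn using hN' n hn
      by_contra hc
      push Not at hc
      have : (N : ℝ) * (eI / d.factorial) ≤ 0 :=
        mul_nonpos_of_nonneg_of_nonpos (Nat.cast_nonneg _) hc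
      linarith
    refine HKB.strict_real (p := p) (r := r) hp.one_lt hd2 hpos fun k => ?_
    have hpk := hppos k
    have l1 : Tendsto (fun e : ℕ => (f (p ^ (e + k) + p ^ e) / ((p ^ e : ℕ) : ℝ) ^ d)) atTop
        (𝓝 (eI / d.factorial * ((p ^ k : ℕ) + 1 : ℝ) ^ d)) := by
      have hq : Tendsto (fun e : ℕ => p ^ (e + k) + p ^ e) atTop atTop :=
        tendsto_atTop_mono (fun e => Nat.le_add_left _ _) hpe
      refine ((hfE.comp hq).mul_const (((p ^ k : ℕ) + 1 : ℝ) ^ d)).congr fun e => ?_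
      have h0 := hppos e
      simp only [Function.comp_apply]
      have : ((p ^ (e + k) + p ^ e : ℕ) : ℝ) = ((p ^ e : ℕ) : ℝ) * ((p ^ k : ℕ) + 1 : ℝ) := by
        push_cast; ring
      rw [this, mul_pow]
      have h5 : (0 : ℝ) < ((p ^ k : ℕ) + 1 : ℝ) := by linarith
      field_simp
    have l2 : Tendsto (fun e : ℕ => (g (e + k) / ((p ^ e : ℕ) : ℝ) ^ d)) atTop
        (𝓝 (eHK * ((p ^ k : ℕ) : ℝ) ^ d)) := by
      refine (((tendsto_add_atTop_iff_nat k).2 hgH).mul_const (((p ^ k : ℕ) : ℝ) ^ d)).congr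
        fun e => ?_
      have h0 := hppos e
      have : ((p ^ (e + k) : ℕ) : ℝ) = ((p ^ e : ℕ) : ℝ) * ((p ^ k : ℕ) : ℝ) := by
        push_cast; ring
      rw [this, mul_pow]
      field_simp
    have l3 := (hfE.comp hpe).const_mul (r : ℝ)
    refine le_of_tendsto_of_tendsto' l1 (l2.add l3) fun e => ?_
    have h0 := hppos e
    simp only [Function.comp_apply]
    rw [← mul_div_assoc, ← add_div]
    gcongr
    exact hlow (e + k) (p ^ e)
end

section
/- (Rees) Let (A, 𝔪) be a d-dimensional complete equidimensional reduced Noetherian local ring of prime characteristic p and let I ⊆ I' be 𝔪-primary ideals of A. Then e(I') = e(I) if and only if every element of I' is integral over I. -/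
open IsLocalRing Filter Topology
open scoped TensorProduct

namespace ReesCrit
open Polynomial

theorem exists_section {k D : Type*} [Field k] [CommRing D] (p : ℕ) [Fact p.Prime] [CharP k p]
    [CharP D p] (π : D →+* k) (hπ : Function.Surjective π)
    (hsq : ∀ x y : D, π x = 0 → π y = 0 → x * y = 0) :
    ∃ g : k →+* D, ∀ x, π (g x) = x := by
  have hp := Fact.out (p := p.Prime)
  have hDnt : Nontrivial D := hπ.nontrivial
  let Z : Set (Subring D) := {S | (frobenius D p).range ≤ S ∧ ∀ s ∈ S, π s = 0 → s = 0}
  have hZ0 : (frobenius D p).range ∈ Z := by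
    refine ⟨le_rfl, ?_⟩
    rintro _ ⟨b, rfl⟩ hb
    rw [frobenius_def, map_pow] at hb
    have hb' := eq_zero_of_pow_eq_zero hb
    rw [frobenius_def]
    have h2 : b ^ 2 = 0 := by rw [pow_two]; exact hsq b b hb' hb'
    exact pow_eq_zero_of_le hp.two_le h2
  obtain ⟨S, -, hSmax⟩ := zorn_le_nonempty₀ Z (by
    intro c hc hchain y hy
    refine ⟨sSup c, ⟨(hc hy).1.trans (le_sSup hy), ?_⟩, fun z hz => le_sSup hz⟩
    intro s hs h0
    obtain ⟨T, hT, hsT⟩ := (Subring.mem_sSup_of_directedOn ⟨y, hy⟩ hchain.directedOn).1 hs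
    exact (hc hT).2 s hsT h0) _ hZ0
  have hS : S ∈ Z := hSmax.prop
  have hpow : ∀ b : D, b ^ p ∈ S := fun b => hS.1 ⟨b, rfl⟩
  let L : Subfield k :=
    { S.map π with
      inv_mem' := by
        rintro _ ⟨s, hs, rfl⟩
        by_cases h0 : π s = 0
        · refine ⟨0, S.zero_mem, by simp [h0]⟩
        · obtain ⟨t, ht⟩ := hπ (π s)⁻¹
          refine ⟨s ^ (p - 1) * t ^ p, S.mul_mem (S.pow_mem hs _) (hpow t), ?_⟩
          rw [map_mul, map_pow, map_pow, ht]
          obtain ⟨m, hm⟩ : ∃ m, p = m + 1 := ⟨p - 1, by have := hp.pos; omega⟩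
          rw [hm, Nat.add_sub_cancel, pow_succ, ← mul_assoc, ← mul_pow, mul_inv_cancel₀ h0]
          simp }
  have hmemL : ∀ s ∈ S, π s ∈ L := fun s hs => ⟨s, hs, rfl⟩
  have hsurj : ∀ x : k, ∃ s ∈ S, π s = x := by
    intro x
    by_contra hx
    have hxL : x ∉ L := fun ⟨s, hs, h⟩ => hx ⟨s, hs, h⟩
    obtain ⟨t, ht⟩ := hπ x
    have hirr : Irreducible (X ^ p - C (⟨x ^ p, by rw [← ht, ← map_pow]; exact hmemL _ (hpow t)⟩ : L)) := by
      apply X_pow_sub_C_irreducible_of_prime hp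
      intro b hb
      have hb' : (b : k) ^ p = x ^ p := congrArg Subtype.val hb
      have : (b : k) = x := by
        have := frobenius_inj k p
        exact this (by simpa [frobenius_def] using hb')
      exact hxL (this ▸ b.2)
    let πS : S →+* L := (π.comp S.subtype).codRestrict L (fun s => hmemL _ s.2)
    have key : ∀ q : S[X], π (q.eval₂ S.subtype t) = 0 → q.eval₂ S.subtype t = 0 := by
      intro q hq
      let m : S[X] := X ^ p - C ⟨t ^ p, hpow t⟩
      have hm : m.Monic := monic_X_pow_sub_C _ hp.ne_zero
      have hmt : m.eval₂ S.subtype t = 0 := by simp [m]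
      have hqr : q.eval₂ S.subtype t = (q %ₘ m).eval₂ S.subtype t := by
        conv_lhs => rw [← modByMonic_add_div q m]
        rw [eval₂_add, eval₂_mul, hmt]; simp
      rw [hqr] at hq ⊢
      set r := q %ₘ m with hr
      have hdeg : r.degree < p := by
        have := degree_modByMonic_lt q hm
        rwa [degree_X_pow_sub_C hp.pos] at this
      have h1 : aeval x (r.map πS) = 0 := by
        rw [aeval_def, eval₂_map]
        have hc : (algebraMap L k).comp πS = π.comp S.subtype := rfl
        rw [hc, ← ht, ← hom_eval₂, hq]
      have h2 : r.map πS = 0 := by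
        by_contra hne
        have hmin := minpoly.eq_of_irreducible_of_monic (x := x) hirr (by
          rw [map_sub, map_pow, aeval_X, aeval_C]; exact sub_self _)
          (monic_X_pow_sub_C _ hp.ne_zero)
        have hd := degree_le_of_dvd (minpoly.dvd L x h1) hne
        rw [← hmin] at hd
        rw [degree_X_pow_sub_C hp.pos] at hd
        exact absurd (hd.trans (degree_map_le (f := πS) (p := r))) (not_le.2 hdeg)
      have h3 : r = 0 := by
        ext i
        have := congrArg (fun u => ((u.coeff i : L) : k)) h2
        simp only [coeff_map, coeff_zero] at this
        have h4 : (r.coeff i : D) = 0 := hS.2 _ (r.coeff i).2 (by simpa [πS] using this)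
        simpa using h4
      rw [h3]; simp
    let S' : Subring D := (eval₂RingHom S.subtype t).range
    have hSS' : S ≤ S' := fun s hs => ⟨C ⟨s, hs⟩, by simp⟩
    have hS'Z : S' ∈ Z := by
      refine ⟨hS.1.trans hSS', ?_⟩
      rintro _ ⟨q, rfl⟩ h
      exact key q h
    have hle : S' ≤ S := hSmax.le_of_ge hS'Z hSS'
    exact hx ⟨t, hle ⟨X, by simp⟩, ht⟩
  choose g hg hg' using hsurj
  have huniq : ∀ a ∈ S, ∀ b ∈ S, π a = π b → a = b := by
    intro a ha b hb h
    exact sub_eq_zero.1 (hS.2 _ (S.sub_mem ha hb) (by rw [map_sub, h, sub_self]))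
  refine ⟨{ toFun := g, map_one' := ?_, map_mul' := ?_, map_zero' := ?_, map_add' := ?_ }, hg'⟩
  · exact huniq _ (hg 1) _ S.one_mem (by rw [hg', map_one])
  · intro x y
    exact huniq _ (hg _) _ (S.mul_mem (hg x) (hg y)) (by simp [hg'])
  · exact huniq _ (hg 0) _ S.zero_mem (by rw [hg', map_zero])
  · intro x y
    exact huniq _ (hg _) _ (S.add_mem (hg x) (hg y)) (by simp [hg'])


theorem formallySmooth_zmod (k : Type*) [Field k] (p : ℕ) [Fact p.Prime] [CharP k p]
    [Algebra (ZMod p) k] : Algebra.FormallySmooth (ZMod p) k := by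
  refine .of_comp_surjective fun B _ _ J hJ f => ?_
  rcases subsingleton_or_nontrivial (B ⧸ J) with hsub | hnt
  · have hJt : J = ⊤ := Ideal.Quotient.subsingleton_iff.1 hsub
    have : (1 : B) ∈ J ^ 2 := by rw [hJt, pow_two, Ideal.top_mul]; trivial
    rw [hJ, Ideal.mem_bot] at this
    have hB : Subsingleton B := subsingleton_of_zero_eq_one this.symm
    refine ⟨⟨⟨⟨⟨fun _ => 0, ?_⟩, ?_⟩, ?_, ?_⟩, ?_⟩, ?_⟩ <;> intros <;>
      first | exact Subsingleton.elim _ _ | (ext; exact Subsingleton.elim _ _)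
  have hf : Function.Injective f := f.toRingHom.injective
  have : Nontrivial B := (Ideal.Quotient.mk_surjective (I := J)).nontrivial
  have : CharP B p := charP_of_injective_algebraMap (algebraMap (ZMod p) B).injective p
  let D : Subring B := f.toRingHom.range.comap (Ideal.Quotient.mk J)
  let e : k ≃+* f.toRingHom.range := RingEquiv.ofBijective f.toRingHom.rangeRestrict
    ⟨fun a b h => hf (congrArg Subtype.val h), f.toRingHom.rangeRestrict_surjective⟩
  let π0 : D →+* f.toRingHom.range :=
    ((Ideal.Quotient.mk J).comp D.subtype).codRestrict _ (fun s => s.2)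
  let π : D →+* k := (e.symm : _ →+* k).comp π0
  have hπ : ∀ x : D, f (π x) = Ideal.Quotient.mk J x := by
    intro x
    have := congrArg Subtype.val (e.apply_symm_apply (π0 x))
    exact this
  obtain ⟨g, hg⟩ := exists_section (D := D) p π (by
      intro x
      obtain ⟨b, hb⟩ := Ideal.Quotient.mk_surjective (f x)
      exact ⟨⟨b, ⟨x, hb.symm⟩⟩, hf (by rw [hπ]; exact hb)⟩) (by
      intro x y hx hy
      have hx' : (x : B) ∈ J := Ideal.Quotient.eq_zero_iff_mem.1 (by rw [← hπ, hx, map_zero])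
      have hy' : (y : B) ∈ J := Ideal.Quotient.eq_zero_iff_mem.1 (by rw [← hπ, hy, map_zero])
      have := Ideal.mul_mem_mul hx' hy'
      rw [← pow_two, hJ, Ideal.mem_bot] at this
      exact Subtype.ext this)
  refine ⟨{ (D.subtype.comp g) with commutes' := fun r => ?_ }, ?_⟩
  · exact congrFun (congrArg DFunLike.coe
      (Subsingleton.elim ((D.subtype.comp g).comp (algebraMap (ZMod p) k)) (algebraMap (ZMod p) B))) r
  · ext x
    change Ideal.Quotient.mk J (g x) = f x
    rw [← hπ, hg]

/-- Coefficient field. -/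
theorem exists_coefficientField (A : Type*) [CommRing A] [IsLocalRing A] (p : ℕ) [Fact p.Prime]
    [CharP A p] (hcomp : IsAdicComplete (IsLocalRing.maximalIdeal A) A) :
    ∃ g : IsLocalRing.ResidueField A →+* A, ∀ x, IsLocalRing.residue A (g x) = x := by
  letI : Algebra (ZMod p) A := ZMod.algebra A p
  letI : Algebra (ZMod p) (IsLocalRing.ResidueField A) :=
    ((IsLocalRing.residue A).comp (algebraMap (ZMod p) A)).toAlgebra
  haveI : CharP (IsLocalRing.ResidueField A) p :=
    charP_of_injective_algebraMap (algebraMap (ZMod p) (IsLocalRing.ResidueField A)).injective p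
  haveI := formallySmooth_zmod (IsLocalRing.ResidueField A) p
  obtain ⟨g, hg⟩ := Algebra.FormallySmooth.exists_mkₐ_comp_eq_of_isAdicComplete
    (R := ZMod p) (A := IsLocalRing.ResidueField A) (I := IsLocalRing.maximalIdeal A)
    ({ RingHom.id _ with commutes' := fun r => rfl } :
      IsLocalRing.ResidueField A →ₐ[ZMod p] A ⧸ IsLocalRing.maximalIdeal A)
  exact ⟨g.toRingHom, fun x => congrArg (fun h => h x) hg⟩

end ReesCrit

namespace ReesCrit
open MvPolynomial
attribute [local instance] MvPolynomial.gradedAlgebra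

section quot
variable {k Q : Type*} [Field k] [CommRing Q] [Algebra k Q]

theorem finite_quot_of_le {K K' : Ideal Q} (h : K ≤ K') [Module.Finite k (Q ⧸ K)] :
    Module.Finite k (Q ⧸ K') :=
  Module.Finite.of_surjective (Ideal.Quotient.factorₐ k h).toLinearMap
    (Ideal.Quotient.factor_surjective h)

theorem finrank_quot_le {K K' : Ideal Q} (h : K ≤ K') [Module.Finite k (Q ⧸ K)] :
    Module.finrank k (Q ⧸ K') ≤ Module.finrank k (Q ⧸ K) :=
  LinearMap.finrank_le_finrank_of_surjective (f := (Ideal.Quotient.factorₐ k h).toLinearMap)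
    (Ideal.Quotient.factor_surjective h)

theorem finrank_colon {K K' : Ideal Q} (g : Q) [Module.Finite k (Q ⧸ K)]
    (h : ∀ f, f * g ∈ K → f ∈ K') :
    Module.finrank k (Q ⧸ (K ⊔ Ideal.span {g})) + Module.finrank k (Q ⧸ K') ≤
      Module.finrank k (Q ⧸ K) := by
  let T : (Q ⧸ K) →ₗ[k] (Q ⧸ (K ⊔ Ideal.span {g})) :=
    (Ideal.Quotient.factorₐ k le_sup_left).toLinearMap
  have hT : Function.Surjective T := Ideal.Quotient.factor_surjective le_sup_left
  let U : Q →ₗ[k] (Q ⧸ K) :=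
    (Ideal.Quotient.mkₐ k K).toLinearMap ∘ₗ (LinearMap.mulRight k g)
  have hU : ∀ f, U f = Ideal.Quotient.mk K (f * g) := fun f => rfl
  have h1 : LinearMap.range U ≤ LinearMap.ker T := by
    rintro _ ⟨f, rfl⟩
    rw [LinearMap.mem_ker, hU]
    change Ideal.Quotient.mk _ (f * g) = 0
    rw [Ideal.Quotient.eq_zero_iff_mem]
    exact Ideal.mul_mem_left _ _ (Ideal.mem_sup_right (Ideal.mem_span_singleton_self g))
  have h2 : LinearMap.ker U ≤ LinearMap.ker (Ideal.Quotient.mkₐ k K').toLinearMap := by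
    intro f hf
    rw [LinearMap.mem_ker, hU, Ideal.Quotient.eq_zero_iff_mem] at hf
    exact Ideal.Quotient.eq_zero_iff_mem.2 (h f hf)
  have h3 : Module.finrank k (Q ⧸ K') ≤ Module.finrank k (LinearMap.range U) := by
    let V := (LinearMap.ker U).liftQ (Ideal.Quotient.mkₐ k K').toLinearMap h2
    have hV : Function.Surjective V := by
      intro x
      obtain ⟨q, rfl⟩ := Ideal.Quotient.mk_surjective x
      exact ⟨Submodule.Quotient.mk q, rfl⟩
    have : Module.Finite k (Q ⧸ LinearMap.ker U) :=
      Module.Finite.equiv U.quotKerEquivRange.symm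
    rw [← U.quotKerEquivRange.finrank_eq]
    exact LinearMap.finrank_le_finrank_of_surjective (f := V) hV
  have h4 := Submodule.finrank_mono h1
  have h5 := LinearMap.finrank_range_add_finrank_ker T
  rw [LinearMap.range_eq_top.2 hT, finrank_top] at h5
  omega

end quot

section hom
variable {σ k : Type*} [Field k]

theorem hC_mul_of_homog (f g : MvPolynomial σ k) {e : ℕ} (hg : g.IsHomogeneous e) (n : ℕ) :
    homogeneousComponent (n + e) (f * g) = homogeneousComponent n f * g := by
  conv_lhs => rw [← sum_homogeneousComponent f, Finset.sum_mul, map_sum]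
  have : ∀ i, homogeneousComponent (n + e) (homogeneousComponent i f * g) =
      if i = n then homogeneousComponent n f * g else 0 := by
    intro i
    rw [homogeneousComponent_of_mem
      ((mem_homogeneousSubmodule _ _).2 ((homogeneousComponent_isHomogeneous i f).mul hg))]
    by_cases h : i = n
    · simp [h]
    · rw [if_neg h, if_neg (by omega)]
  simp only [this]
  rw [Finset.sum_ite_eq']
  split_ifs with h
  · rfl
  · rw [homogeneousComponent_eq_zero n f (by simpa using h), zero_mul]

theorem hC_mul_of_homog_lt (f g : MvPolynomial σ k) {e : ℕ} (hg : g.IsHomogeneous e) (n : ℕ)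
    (hn : n < e) : homogeneousComponent n (f * g) = 0 := by
  conv_lhs => rw [← sum_homogeneousComponent f, Finset.sum_mul, map_sum]
  refine Finset.sum_eq_zero fun i _ => ?_
  rw [homogeneousComponent_of_mem
      ((mem_homogeneousSubmodule _ _).2 ((homogeneousComponent_isHomogeneous i f).mul hg)),
      if_neg (by omega)]

theorem homog_mem_pow {f : MvPolynomial σ k} {n m : ℕ} (hf : f.IsHomogeneous n) (h : m ≤ n) :
    f ∈ idealOfVars σ k ^ m := by
  rw [mem_pow_idealOfVars_iff']
  intro x hx
  exact hf.coeff_eq_zero (by omega)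

theorem hC_eq_zero_of_mem_pow {f : MvPolynomial σ k} {n m : ℕ} (hf : f ∈ idealOfVars σ k ^ m)
    (h : n < m) : homogeneousComponent n f = 0 := by
  ext x
  rw [coeff_homogeneousComponent]
  split_ifs with hx
  · rw [(mem_pow_idealOfVars_iff' m f).1 hf x (by omega)]; simp
  · simp

theorem finite_quot_pow [Finite σ] (n : ℕ) :
    Module.Finite k (MvPolynomial σ k ⧸ idealOfVars σ k ^ n) := by
  induction n with
  | zero =>
    rw [pow_zero, Ideal.one_eq_top]
    infer_instance
  | succ n ih =>
    let T : (MvPolynomial σ k ⧸ idealOfVars σ k ^ (n+1)) →ₗ[k] (MvPolynomial σ k ⧸ idealOfVars σ k ^ n) :=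
      (Ideal.Quotient.factorₐ k (Ideal.pow_le_pow_right n.le_succ)).toLinearMap
    let U : homogeneousSubmodule σ k n →ₗ[k] (MvPolynomial σ k ⧸ idealOfVars σ k ^ (n+1)) :=
      (Ideal.Quotient.mkₐ k _).toLinearMap ∘ₗ Submodule.subtype _
    have hfg : Module.Finite k (homogeneousSubmodule σ k n) :=
      Module.Finite.iff_fg.2 (homogeneousSubmodule_fg σ k n)
    have hT : LinearMap.ker T ≤ LinearMap.range U := by
      intro x hx
      obtain ⟨f, rfl⟩ := Ideal.Quotient.mk_surjective x
      have hf : f ∈ idealOfVars σ k ^ n := Ideal.Quotient.eq_zero_iff_mem.1 hx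
      refine ⟨⟨homogeneousComponent n f, homogeneousComponent_mem n f⟩, ?_⟩
      change Ideal.Quotient.mk _ _ = Ideal.Quotient.mk _ _
      rw [Ideal.Quotient.eq, mem_pow_idealOfVars_iff']
      intro x hx
      change coeff x (homogeneousComponent n f - f) = 0
      rw [coeff_sub, coeff_homogeneousComponent]
      split_ifs with h
      · simp
      · rw [(mem_pow_idealOfVars_iff' n f).1 hf x (by omega)]; simp
    have : Module.Finite k (LinearMap.ker T) := Submodule.finiteDimensional_of_le hT
    have : Module.Finite k (_ ⧸ LinearMap.ker T) := Module.Finite.equiv T.quotKerEquivRange.symm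
    exact Module.Finite.of_submodule_quotient (LinearMap.ker T)

end hom
end ReesCrit

namespace ReesCrit
open MvPolynomial
attribute [local instance] MvPolynomial.gradedAlgebra

section avoid
variable {σ k : Type*} [Field k]

theorem exists_avoid (s : Finset (Ideal (MvPolynomial σ k)))
    (hprime : ∀ P ∈ s, P.IsPrime) (hhom : ∀ P ∈ s, P.IsHomogeneous (homogeneousSubmodule σ k))
    (hanti : ∀ P ∈ s, ∀ P' ∈ s, P ≤ P' → P = P')
    (hM : ∀ P ∈ s, ¬ idealOfVars σ k ≤ P) :
    ∃ (g : MvPolynomial σ k) (e : ℕ), 0 < e ∧ g.IsHomogeneous e ∧ ∀ P ∈ s, g ∉ P := by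
  classical
  induction s using Finset.induction_on with
  | empty => exact ⟨0, 1, one_pos, isHomogeneous_zero _ _ _, by simp⟩
  | insert P s hPs ih =>
    obtain ⟨g, e, he, hg, hgs⟩ := ih (fun P h => hprime P (Finset.mem_insert_of_mem h))
      (fun P h => hhom P (Finset.mem_insert_of_mem h))
      (fun P h P' h' => hanti P (Finset.mem_insert_of_mem h) P' (Finset.mem_insert_of_mem h'))
      (fun P h => hM P (Finset.mem_insert_of_mem h))
    by_cases hgP : g ∉ P
    · refine ⟨g, e, he, hg, fun P' hP' => ?_⟩
      rcases Finset.mem_insert.1 hP' with rfl | h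
      · exact hgP
      · exact hgs _ h
    push Not at hgP
    have hPp := hprime P (Finset.mem_insert_self _ _)
    have hX : ∃ l, (X l : MvPolynomial σ k) ∉ P := by
      by_contra hcon
      push Not at hcon
      exact hM P (Finset.mem_insert_self _ _) (Ideal.span_le.2 (by rintro _ ⟨l, rfl⟩; exact hcon l))
    obtain ⟨l, hl⟩ := hX
    have hh : ∀ P' : Ideal (MvPolynomial σ k), ∃ (h : MvPolynomial σ k) (n : ℕ), P' ∈ s →
        h.IsHomogeneous n ∧ h ∈ P' ∧ h ∉ P := by
      intro P'
      by_cases hP' : P' ∈ s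
      · have hnle : ¬ P' ≤ P := fun h => hPs (hanti P' (Finset.mem_insert_of_mem hP') P
          (Finset.mem_insert_self _ _) h ▸ hP')
        obtain ⟨f, hf, hfP⟩ := SetLike.not_le_iff_exists.1 hnle
        rw [mem_iff_homogeneousComponent_mem (hhom P (Finset.mem_insert_self _ _))] at hfP
        push Not at hfP
        obtain ⟨n, hn⟩ := hfP
        exact ⟨homogeneousComponent n f, n, fun _ => ⟨homogeneousComponent_isHomogeneous _ _,
          homogeneousComponent_mem_of_mem (hhom P' (Finset.mem_insert_of_mem hP')) hf n, hn⟩⟩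
      · exact ⟨0, 0, fun h => absurd h hP'⟩
    choose h n hh using hh
    let H := X l * ∏ P' ∈ s, h P'
    let D := 1 + ∑ P' ∈ s, n P'
    have hH : H.IsHomogeneous D := (isHomogeneous_X k l).mul
      (IsHomogeneous.prod s h n (fun P' hP' => (hh P' hP').1))
    have hHP : H ∉ P := by
      intro hc
      rcases hPp.mem_or_mem hc with h1 | h1
      · exact hl h1
      · obtain ⟨P', hP', h2⟩ := hPp.prod_mem_iff.1 h1
        exact (hh P' hP').2.2 h2
    have hHs : ∀ P' ∈ s, H ∈ P' := fun P' hP' =>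
      Ideal.mul_mem_left _ _ (Ideal.mem_of_dvd _ (Finset.dvd_prod_of_mem h hP') (hh P' hP').2.1)
    have hD : 0 < D := by simp [D]
    refine ⟨g ^ D + H ^ e, e * D, Nat.mul_pos he hD, (hg.pow D).add (by
      rw [mul_comm e D]; exact hH.pow e), fun P' hP' hmem => ?_⟩
    rcases Finset.mem_insert.1 hP' with rfl | hP's
    · have : H ^ e ∈ P' := (Ideal.add_mem_iff_right _ (Ideal.pow_mem_of_mem _ hgP D hD)).1 hmem
      exact hHP (hPp.mem_of_pow_mem _ this)
    · have : g ^ D ∈ P' :=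
        (Ideal.add_mem_iff_left _ (Ideal.pow_mem_of_mem _ (hHs _ hP's) e he)).1 hmem
      exact hgs _ hP's ((hprime _ hP').mem_of_pow_mem _ this)

theorem exists_nzd [Finite σ] (𝔞 : Ideal (MvPolynomial σ k))
    (hhom : 𝔞.IsHomogeneous (homogeneousSubmodule σ k)) (hrad : 𝔞.IsRadical)
    (hM : ¬ idealOfVars σ k ≤ 𝔞) :
    ∃ (g : MvPolynomial σ k) (e : ℕ), 0 < e ∧ g.IsHomogeneous e ∧
      ∀ f, f * g ∈ 𝔞 → f ∈ 𝔞 := by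
  classical
  have hfin : 𝔞.minimalPrimes.Finite := Ideal.finite_minimalPrimes_of_isNoetherianRing _ 𝔞
  have hinf : sInf 𝔞.minimalPrimes = 𝔞 := by rw [Ideal.sInf_minimalPrimes, hrad.radical]
  have hPhom : ∀ P ∈ 𝔞.minimalPrimes, P.IsHomogeneous (homogeneousSubmodule σ k) := by
    intro P hP
    have hPp : P.IsPrime := hP.1.1
    have h1 := Ideal.IsPrime.homogeneousCore (𝒜 := homogeneousSubmodule σ k) hPp
    have h2 : 𝔞 ≤ (P.homogeneousCore (homogeneousSubmodule σ k)).toIdeal :=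
      hhom.toIdeal_homogeneousCore_eq_self.symm.trans_le (Ideal.homogeneousCore_mono _ hP.1.2)
    have h3 := Ideal.toIdeal_homogeneousCore_le (homogeneousSubmodule σ k) P
    exact (Ideal.IsHomogeneous.iff_eq _ _).2 (le_antisymm h3 (hP.2 ⟨h1, h2⟩ h3))
  have hle : ∀ P ∈ 𝔞.minimalPrimes, P ≤ idealOfVars σ k := by
    intro P hP f hf
    have h0 := homogeneousComponent_mem_of_mem (hPhom P hP) hf 0
    rw [homogeneousComponent_zero] at h0
    have hc : coeff 0 f = 0 := by
      by_contra hne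
      refine hP.1.1.ne_top (Ideal.eq_top_of_isUnit_mem _ h0 ?_)
      exact (IsUnit.mk0 _ hne).map C
    have := (mem_pow_idealOfVars_iff' 1 f).2 (by
      intro x hx
      have : x = 0 := by rw [← Finsupp.degree_eq_zero_iff]; omega
      rw [this, hc])
    simpa using this
  obtain ⟨g, e, he, hg, hgP⟩ := exists_avoid hfin.toFinset
    (fun P hP => ((hfin.mem_toFinset).1 hP).1.1) (fun P hP => hPhom P ((hfin.mem_toFinset).1 hP))
    (fun P hP P' hP' hPP' => le_antisymm hPP'
      (((hfin.mem_toFinset).1 hP').2 ((hfin.mem_toFinset).1 hP).1 hPP'))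
    (fun P hP hc => by
      have hP := (hfin.mem_toFinset).1 hP
      refine hM ?_
      rw [← hinf]
      refine le_sInf fun P' hP' => hc.trans ?_
      exact hP.2 hP'.1 ((hle P' hP').trans hc))
  refine ⟨g, e, he, hg, fun f hf => ?_⟩
  rw [← hinf] at hf ⊢
  rw [Submodule.mem_sInf] at hf ⊢
  intro P hP
  exact (hP.1.1.mem_or_mem (hf P hP)).resolve_right (hgP P ((hfin.mem_toFinset).2 hP))

theorem finite_quot_sup [Finite σ] (𝔞 : Ideal (MvPolynomial σ k)) (n : ℕ) :
    Module.Finite k (MvPolynomial σ k ⧸ (𝔞 ⊔ idealOfVars σ k ^ n)) := by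
  have := finite_quot_pow (σ := σ) (k := k) n
  exact finite_quot_of_le (K := idealOfVars σ k ^ n) le_sup_right

theorem hilb_base [Finite σ] (𝔞 : Ideal (MvPolynomial σ k))
    (hhom : 𝔞.IsHomogeneous (homogeneousSubmodule σ k)) (c : ℕ)
    (hb : ∀ n, 0 < n → Module.finrank k (MvPolynomial σ k ⧸ (𝔞 ⊔ idealOfVars σ k ^ n)) ≤ c) :
    idealOfVars σ k ≤ 𝔞.radical := by
  have hfin := finite_quot_sup 𝔞
  let H : ℕ → ℕ := fun n => Module.finrank k (MvPolynomial σ k ⧸ (𝔞 ⊔ idealOfVars σ k ^ n))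
  have hle : ∀ n, 𝔞 ⊔ idealOfVars σ k ^ (n+1) ≤ 𝔞 ⊔ idealOfVars σ k ^ n := fun n =>
    sup_le_sup_left (Ideal.pow_le_pow_right n.le_succ) _
  have hmono : Monotone H := monotone_nat_of_le_succ fun n => finrank_quot_le (hle n)
  have hex : ∃ n, 0 < n ∧ H n = H (n+1) := by
    by_contra hcon
    push Not at hcon
    have : ∀ n, n ≤ H (n+1) := by
      intro n
      induction n with
      | zero => omega
      | succ n ih =>
        have h1 := hcon (n+1) (by omega)
        have h2 := hmono (Nat.le_succ (n+1))
        simp only [Nat.succ_eq_add_one] at h2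
        omega
    have h1 := this (c+1)
    have h2 : H (c+1+1) ≤ c := hb _ (by omega)
    omega
  obtain ⟨n, hn, hH⟩ := hex
  have heq : 𝔞 ⊔ idealOfVars σ k ^ n ≤ 𝔞 ⊔ idealOfVars σ k ^ (n+1) := by
    let T := (Ideal.Quotient.factorₐ k (hle n)).toLinearMap
    have hT : Function.Surjective T := Ideal.Quotient.factor_surjective (hle n)
    have hTi : Function.Injective T :=
      (LinearMap.injective_iff_surjective_of_finrank_eq_finrank hH.symm).2 hT
    intro f hf
    rw [← Ideal.Quotient.eq_zero_iff_mem]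
    apply hTi
    rw [map_zero]
    exact Ideal.Quotient.eq_zero_iff_mem.2 hf
  have hn' : idealOfVars σ k ^ n ≤ 𝔞 := by
    rw [pow_idealOfVars_eq_span]
    rw [Ideal.span_le]
    rintro _ ⟨x, hx, rfl⟩
    have hxd : x.degree = n := by simpa using hx
    have hh : (monomial x (1:k)).IsHomogeneous n := isHomogeneous_monomial _ hxd
    have := heq (Ideal.mem_sup_right (homog_mem_pow hh le_rfl))
    obtain ⟨u, hu, v, hv, huv⟩ := Submodule.mem_sup.1 this
    have h1 := congrArg (homogeneousComponent n) huv
    rw [map_add, hC_eq_zero_of_mem_pow hv (by omega), add_zero, homogeneousComponent_eq_self hh] at h1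
    change monomial x (1:k) ∈ 𝔞
    rw [← h1]
    exact homogeneousComponent_mem_of_mem hhom hu n
  exact fun f hf => ⟨n, hn' (Ideal.pow_mem_pow hf n)⟩

theorem hilb_step [Finite σ] (𝔞 : Ideal (MvPolynomial σ k))
    (hhom : 𝔞.IsHomogeneous (homogeneousSubmodule σ k)) (g : MvPolynomial σ k) (e : ℕ)
    (hg : g.IsHomogeneous e) (hnzd : ∀ f, f * g ∈ 𝔞 → f ∈ 𝔞) (c d : ℕ)
    (hb : ∀ n, 0 < n → Module.finrank k (MvPolynomial σ k ⧸ (𝔞 ⊔ idealOfVars σ k ^ n)) ≤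
      c * n ^ (d+1)) : ∀ n, 0 < n →
      Module.finrank k (MvPolynomial σ k ⧸ ((𝔞 ⊔ Ideal.span {g}) ⊔ idealOfVars σ k ^ n)) ≤
      (c * (1 + e) ^ (d + 1)) * n ^ d := by
  have hfin := finite_quot_sup 𝔞
  have hfin' := finite_quot_sup (𝔞 ⊔ Ideal.span {g})
  let H : ℕ → ℕ := fun n => Module.finrank k (MvPolynomial σ k ⧸ (𝔞 ⊔ idealOfVars σ k ^ n))
  let H' : ℕ → ℕ := fun n =>
    Module.finrank k (MvPolynomial σ k ⧸ ((𝔞 ⊔ Ideal.span {g}) ⊔ idealOfVars σ k ^ n))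
  have hmono : Monotone H' := monotone_nat_of_le_succ fun n => finrank_quot_le
    (sup_le_sup_left (Ideal.pow_le_pow_right n.le_succ) _)
  have hstep : ∀ m, H' (m + e) + H m ≤ H (m + e) := by
    intro m
    have := finrank_colon (k := k) (K := 𝔞 ⊔ idealOfVars σ k ^ (m+e))
      (K' := 𝔞 ⊔ idealOfVars σ k ^ m) g (by
        intro f hf
        obtain ⟨u, hu, v, hv, huv⟩ := Submodule.mem_sup.1 hf
        rw [← sum_homogeneousComponent f]
        refine Ideal.sum_mem _ fun j _ => ?_
        by_cases hj : m ≤ j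
        · exact Ideal.mem_sup_right (homog_mem_pow (homogeneousComponent_isHomogeneous j f) hj)
        · refine Ideal.mem_sup_left (hnzd _ ?_)
          rw [← hC_mul_of_homog f g hg j, ← huv, map_add,
            hC_eq_zero_of_mem_pow hv (by omega), add_zero]
          exact homogeneousComponent_mem_of_mem hhom hu _)
    rw [sup_right_comm] at this
    exact this
  have hsum : ∀ m j, j * H' m ≤ H (m + j * e) := by
    intro m j
    induction j with
    | zero => simp
    | succ j ih =>
      have h1 := hstep (m + j * e)
      have h2 : H' m ≤ H' (m + j * e + e) := hmono (by omega)
      have h3 : m + (j+1) * e = m + j * e + e := by ring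
      rw [h3, add_mul, one_mul]
      omega
  intro n hn
  have h1 := (hsum n n).trans (hb (n + n * e) (by omega))
  refine Nat.le_of_mul_le_mul_left (h1.trans (le_of_eq ?_)) hn
  have : n + n * e = n * (1 + e) := by ring
  rw [this, mul_pow]
  ring

theorem hilb_main [Finite σ] (d : ℕ) (𝔞 : Ideal (MvPolynomial σ k))
    (hhom : 𝔞.IsHomogeneous (homogeneousSubmodule σ k)) (c : ℕ)
    (hb : ∀ n, 0 < n → Module.finrank k (MvPolynomial σ k ⧸ (𝔞 ⊔ idealOfVars σ k ^ n)) ≤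
      c * n ^ d) :
    ∃ (g : Fin d → MvPolynomial σ k) (e : Fin d → ℕ), (∀ i, 0 < e i) ∧
      (∀ i, (g i).IsHomogeneous (e i)) ∧
      idealOfVars σ k ≤ (𝔞 ⊔ Ideal.span (Set.range g)).radical := by
  induction d generalizing 𝔞 c with
  | zero =>
    refine ⟨fun _ => 0, fun _ => 1, fun _ => one_pos, fun _ => isHomogeneous_zero _ _ _, ?_⟩
    refine (hilb_base 𝔞 hhom c (by simpa using hb)).trans (Ideal.radical_mono le_sup_left)
  | succ d ih =>
    have hfin := finite_quot_sup 𝔞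
    by_cases hM : idealOfVars σ k ≤ 𝔞.radical
    · exact ⟨fun _ => 0, fun _ => 1, fun _ => one_pos, fun _ => isHomogeneous_zero _ _ _,
        hM.trans (Ideal.radical_mono le_sup_left)⟩
    obtain ⟨g0, e0, he0, hg0, hnzd⟩ := exists_nzd 𝔞.radical hhom.radical 𝔞.radical_isRadical hM
    have hb' := hilb_step 𝔞.radical hhom.radical g0 e0 hg0 hnzd c d (fun n hn =>
      (finrank_quot_le (sup_le_sup_right Ideal.le_radical _)).trans (hb n hn))
    obtain ⟨g, e, he, hg, hr⟩ := ih (𝔞.radical ⊔ Ideal.span {g0})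
      (hhom.radical.sup (Ideal.homogeneous_span _ _ (by
        rintro x rfl
        exact ⟨e0, hg0⟩))) _ hb'
    refine ⟨Fin.cons g0 g, Fin.cons e0 e, ?_, ?_, hr.trans ?_⟩
    · intro i
      refine Fin.cases ?_ (fun j => ?_) i <;> simp [he0, he]
    · intro i
      refine Fin.cases ?_ (fun j => ?_) i <;> simp [hg0, hg]
    · rw [Ideal.radical_le_radical_iff, Fin.range_cons, Set.insert_eq, Ideal.span_union]
      refine sup_le (sup_le (Ideal.radical_mono le_sup_left) ?_) ?_
      · exact (le_sup_left.trans le_sup_right).trans Ideal.le_radical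
      · exact (le_sup_right.trans le_sup_right).trans Ideal.le_radical

theorem hilb_main' [Finite σ] (d : ℕ) (𝔞 : Ideal (MvPolynomial σ k))
    (hhom : 𝔞.IsHomogeneous (homogeneousSubmodule σ k)) (c : ℕ)
    (hb : ∀ n, 0 < n → Module.finrank k (MvPolynomial σ k ⧸ (𝔞 ⊔ idealOfVars σ k ^ n)) ≤
      c * n ^ d) :
    ∃ (g : Fin d → MvPolynomial σ k) (N : ℕ), 0 < N ∧
      (∀ i, (g i).IsHomogeneous N) ∧
      ∃ m, idealOfVars σ k ^ m ≤ 𝔞 ⊔ Ideal.span (Set.range g) := by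
  obtain ⟨g, e, he, hg, hr⟩ := hilb_main d 𝔞 hhom c hb
  have hdiv : ∀ i, e i * ∏ j ∈ Finset.univ.erase i, e j = ∏ j, e j := fun i =>
    Finset.mul_prod_erase _ _ (Finset.mem_univ i)
  refine ⟨fun i => g i ^ ∏ j ∈ Finset.univ.erase i, e j, ∏ j, e j,
    Finset.prod_pos fun i _ => he i, fun i => hdiv i ▸ (hg i).pow _, ?_⟩
  refine Ideal.exists_pow_le_of_le_radical_of_fg (hr.trans ?_) (idealOfVars_fg σ k)
  rw [Ideal.radical_le_radical_iff]
  refine sup_le (le_sup_left.trans Ideal.le_radical) (Ideal.span_le.2 ?_)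
  rintro _ ⟨i, rfl⟩
  exact ⟨_, Ideal.mem_sup_right (Ideal.subset_span ⟨i, rfl⟩)⟩

end avoid
end ReesCrit

namespace ReesCrit
open MvPolynomial
attribute [local instance] MvPolynomial.gradedAlgebra

section red
variable {σ k A : Type*} [Field k] [CommRing A] [Algebra k A]

theorem aeval_mem_pow (a : σ → A) {f : MvPolynomial σ k} {n : ℕ} (hf : f.IsHomogeneous n) :
    aeval a f ∈ Ideal.span (Set.range a) ^ n := by
  rw [Ideal.mem_span_pow_iff_exists_isHomogeneous]
  refine ⟨map (algebraMap k A) f, hf.map _, ?_⟩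
  rw [eval_map, aeval_def]

theorem mem_span_comp (a : σ → A) (K : ℕ → Ideal A)
    (hK : ∀ i e, Ideal.span (Set.range a) ^ i * K e ≤ K (i + e))
    (G : Set (MvPolynomial σ k)) (hG : ∀ g ∈ G, ∃ e, g.IsHomogeneous e ∧ aeval a g ∈ K e)
    (f : MvPolynomial σ k) (hf : f ∈ Ideal.span G) (n : ℕ) :
    aeval a (homogeneousComponent n f) ∈ K n := by
  induction hf using Submodule.closure_induction with
  | zero => simp
  | add x y hx hy h1 h2 => rw [map_add, map_add]; exact add_mem h1 h2
  | smul_mem r x hx =>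
    obtain ⟨e, he, hxe⟩ := hG x hx
    rw [smul_eq_mul]
    rcases le_or_gt e n with h | h
    · obtain ⟨i, rfl⟩ := Nat.exists_eq_add_of_le' h
      rw [hC_mul_of_homog r x he i, map_mul]
      exact hK i e (Ideal.mul_mem_mul (aeval_mem_pow a (homogeneousComponent_isHomogeneous i r)) hxe)
    · rw [hC_mul_of_homog_lt r x he n h, map_zero]; exact zero_mem _

theorem hilb_le (a : σ → A) [Finite σ] (𝔪 : Ideal A) (hI : Ideal.span (Set.range a) ≤ 𝔪)
    (hfin : ∀ n, Module.Finite k (A ⧸ Ideal.span (Set.range a) ^ n)) (n : ℕ) :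
    Module.finrank k (MvPolynomial σ k ⧸ (Ideal.span {g : MvPolynomial σ k |
      ∃ n, g.IsHomogeneous n ∧ aeval a g ∈ 𝔪 * Ideal.span (Set.range a) ^ n} ⊔
        idealOfVars σ k ^ n)) ≤ Module.finrank k (A ⧸ Ideal.span (Set.range a) ^ n) := by
  set I := Ideal.span (Set.range a) with hIdef
  set 𝔞 := Ideal.span {g : MvPolynomial σ k | ∃ n, g.IsHomogeneous n ∧ aeval a g ∈ 𝔪 * I ^ n}
  have hfinQ := finite_quot_sup 𝔞
  induction n with
  | zero =>
    have : 𝔞 ⊔ idealOfVars σ k ^ 0 = ⊤ := by rw [pow_zero, Ideal.one_eq_top, sup_top_eq]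
    have hs : Subsingleton (MvPolynomial σ k ⧸ (𝔞 ⊔ idealOfVars σ k ^ 0)) := by
      rw [this]; infer_instance
    rw [Module.finrank_zero_of_subsingleton]
    exact Nat.zero_le _
  | succ n ih =>
    have hle : 𝔞 ⊔ idealOfVars σ k ^ (n+1) ≤ 𝔞 ⊔ idealOfVars σ k ^ n :=
      sup_le_sup_left (Ideal.pow_le_pow_right n.le_succ) _
    have hle' : I ^ (n+1) ≤ I ^ n := Ideal.pow_le_pow_right n.le_succ
    let T := (Ideal.Quotient.factorₐ k hle).toLinearMap
    have hT : Function.Surjective T := Ideal.Quotient.factor_surjective hle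
    let T' := (Ideal.Quotient.factorₐ k hle').toLinearMap
    have hT' : Function.Surjective T' := Ideal.Quotient.factor_surjective hle'
    let U : homogeneousSubmodule σ k n →ₗ[k] (MvPolynomial σ k ⧸ (𝔞 ⊔ idealOfVars σ k ^ (n+1))) :=
      (Ideal.Quotient.mkₐ k _).toLinearMap ∘ₗ Submodule.subtype _
    let V : homogeneousSubmodule σ k n →ₗ[k] (A ⧸ I ^ (n+1)) :=
      (Ideal.Quotient.mkₐ k _).toLinearMap ∘ₗ (aeval a).toLinearMap ∘ₗ Submodule.subtype _
    have hVU : LinearMap.ker V ≤ LinearMap.ker U := by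
      rintro ⟨f, hf⟩ h
      have h1 : aeval a f ∈ I ^ (n+1) := Ideal.Quotient.eq_zero_iff_mem.1 h
      rw [pow_succ'] at h1
      refine Ideal.Quotient.eq_zero_iff_mem.2 (Ideal.mem_sup_left (Ideal.subset_span ⟨n, hf, ?_⟩))
      exact Ideal.mul_mono_left hI h1
    have hTU : LinearMap.ker T ≤ LinearMap.range U := by
      intro x hx
      obtain ⟨f, rfl⟩ := Ideal.Quotient.mk_surjective x
      have hf : f ∈ 𝔞 ⊔ idealOfVars σ k ^ n := Ideal.Quotient.eq_zero_iff_mem.1 hx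
      obtain ⟨u, hu, v, hv, rfl⟩ := Submodule.mem_sup.1 hf
      refine ⟨⟨homogeneousComponent n v, homogeneousComponent_mem n v⟩, ?_⟩
      change Ideal.Quotient.mk _ (homogeneousComponent n v) = Ideal.Quotient.mk _ (u + v)
      rw [Ideal.Quotient.eq]
      have : homogeneousComponent n v - (u + v) = -u + (homogeneousComponent n v - v) := by ring
      rw [this]
      refine Submodule.add_mem_sup (neg_mem hu) ?_
      rw [mem_pow_idealOfVars_iff']
      intro x hx
      rw [coeff_sub, coeff_homogeneousComponent]
      split_ifs with h
      · simp
      · rw [(mem_pow_idealOfVars_iff' n v).1 hv x (by omega)]; simp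
    have hVT : LinearMap.range V ≤ LinearMap.ker T' := by
      rintro _ ⟨⟨f, hf⟩, rfl⟩
      exact Ideal.Quotient.eq_zero_iff_mem.2 (aeval_mem_pow a hf)
    have hfg : Module.Finite k (homogeneousSubmodule σ k n) :=
      Module.Finite.iff_fg.2 (homogeneousSubmodule_fg σ k n)
    have h1 := LinearMap.finrank_range_add_finrank_ker T
    have h2 := LinearMap.finrank_range_add_finrank_ker T'
    have h3 := LinearMap.finrank_range_add_finrank_ker U
    have h4 := LinearMap.finrank_range_add_finrank_ker V
    have h5 := Submodule.finrank_mono hVU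
    have h6 := Submodule.finrank_mono hTU
    have h7 := Submodule.finrank_mono hVT
    rw [LinearMap.range_eq_top.2 hT, finrank_top] at h1
    rw [LinearMap.range_eq_top.2 hT', finrank_top] at h2
    omega

theorem exists_reduction [IsLocalRing A] [IsNoetherianRing A] (I : Ideal A)
    (hI : I ≤ IsLocalRing.maximalIdeal A) (hfin : ∀ n, Module.Finite k (A ⧸ I ^ n)) (c d : ℕ)
    (hb : ∀ n, 0 < n → Module.finrank k (A ⧸ I ^ n) ≤ c * n ^ d) :
    ∃ (N : ℕ) (y : Fin d → A) (m : ℕ), 0 < N ∧ (∀ i, y i ∈ I ^ N) ∧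
      ∀ n, I ^ (N * (n + m)) ≤ Ideal.span (Set.range y) ^ n := by
  obtain ⟨s, a, ha⟩ := Submodule.fg_iff_exists_fin_generating_family.1
    (IsNoetherian.noetherian I)
  change Ideal.span (Set.range a) = I at ha
  subst ha
  set I := Ideal.span (Set.range a) with hIdef
  set 𝔪 := IsLocalRing.maximalIdeal A with h𝔪
  set G : Set (MvPolynomial (Fin s) k) := {g | ∃ n, g.IsHomogeneous n ∧ aeval a g ∈ 𝔪 * I ^ n}
    with hGdef
  obtain ⟨g, N, hN, hg, m, hm⟩ := hilb_main' d (Ideal.span G)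
    (Ideal.homogeneous_span _ _ (by rintro x ⟨n, hn, -⟩; exact ⟨n, hn⟩)) c
    (fun n hn => (hilb_le a 𝔪 hI hfin n).trans (hb n hn))
  rw [← Ideal.span_union] at hm
  set y : Fin d → A := fun i => aeval a (g i) with hy
  set J := Ideal.span (Set.range y) with hJ
  let K : ℕ → Ideal A := fun n => 𝔪 * I ^ n ⊔ (if N ≤ n then J * I ^ (n - N) else ⊥)
  have hK : ∀ i e, I ^ i * K e ≤ K (i + e) := by
    intro i e
    simp only [K]
    rw [Ideal.mul_sup]
    refine sup_le_sup ?_ ?_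
    · rw [pow_add]
      exact le_of_eq (by ring)
    · split_ifs with h1 h2 h2
      · have : i + e - N = i + (e - N) := by omega
        rw [this, pow_add]
        exact le_of_eq (by ring)
      · omega
      · simp
      · simp
  have hG' : ∀ f ∈ G ∪ Set.range g, ∃ e, f.IsHomogeneous e ∧ aeval a f ∈ K e := by
    rintro f (⟨n, hn, hf⟩ | ⟨i, rfl⟩)
    · exact ⟨n, hn, Ideal.mem_sup_left hf⟩
    · refine ⟨N, hg i, Ideal.mem_sup_right ?_⟩
      simp only [le_refl, if_true, Nat.sub_self, pow_zero, mul_one]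
      exact Ideal.subset_span ⟨i, rfl⟩
  have hIK : ∀ n, m ≤ n → I ^ n ≤ K n := by
    intro n hn x hx
    rw [hIdef, Ideal.mem_span_pow_iff_exists_isHomogeneous] at hx
    obtain ⟨q, hq, rfl⟩ := hx
    rw [eval_eq]
    refine Ideal.sum_mem _ fun u hu => Ideal.mul_mem_left _ _ ?_
    have hu' : u.degree = n := by
      by_contra hne
      exact (mem_support_iff.1 hu) (hq.coeff_eq_zero hne)
    have hh : (monomial u (1:k)).IsHomogeneous n := isHomogeneous_monomial _ hu'
    have h1 := hm (homog_mem_pow hh hn)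
    have h2 := mem_span_comp a K hK _ hG' _ h1 n
    rw [homogeneousComponent_eq_self hh, aeval_monomial, map_one, one_mul, Finsupp.prod] at h2
    have h3 : ∏ i ∈ u.support, a i ^ u i = ∏ i, a i ^ u i :=
      Finset.prod_subset (Finset.subset_univ _) (fun i _ hi => by simp [Finsupp.notMem_support_iff.1 hi])
    first
      | exact h2
      | (rw [h3] at h2; exact h2)
  have hJI : ∀ n, max m N ≤ n → I ^ n ≤ J * I ^ (n - N) := by
    intro n hn
    have h1 := hIK n (le_trans (le_max_left _ _) hn)
    simp only [K] at h1
    rw [if_pos (le_trans (le_max_right _ _) hn), sup_comm] at h1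
    exact Submodule.le_of_le_smul_of_le_jacobson_bot (IsNoetherian.noetherian _)
      (IsLocalRing.maximalIdeal_le_jacobson _) h1
  refine ⟨N, y, max m N, hN, fun i => aeval_mem_pow a (hg i), fun n => ?_⟩
  have h2 : ∀ t, I ^ (max m N + N * t) ≤ J ^ t * I ^ (max m N) := by
    intro t
    induction t with
    | zero => simp
    | succ t ih =>
      have := hJI (max m N + N * (t+1)) (by omega)
      refine this.trans ?_
      have h3 : max m N + N * (t+1) - N = max m N + N * t := by rw [mul_add]; omega
      rw [h3, pow_succ', mul_assoc]
      exact Ideal.mul_mono_right ih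
  refine le_trans (Ideal.pow_le_pow_right ?_) ((h2 n).trans Ideal.mul_le_left)
  rw [mul_add]
  have : 1 * max m N ≤ N * max m N := Nat.mul_le_mul_right _ hN
  omega

end red
end ReesCrit

namespace ReesCrit

/-- Elementwise complete integral closedness. -/
def CIC (R : Type*) [CommRing R] : Prop :=
  ∀ a b c : R, b ≠ 0 → c ≠ 0 → (∀ n : ℕ, b ^ n ∣ c * a ^ n) → b ∣ a

theorem CIC.of_equiv {R S : Type*} [CommRing R] [CommRing S] (e : R ≃+* S) (h : CIC S) : CIC R := by
  intro a b c hb hc hn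
  have := h (e a) (e b) (e c) (by simpa using hb) (by simpa using hc) (fun n => by
    have := map_dvd e (hn n)
    simpa using this)
  exact (map_dvd_iff e).1 this

theorem cic_field (k : Type*) [Field k] : CIC k := fun a _ _ hb _ _ =>
  (IsUnit.mk0 _ hb).dvd

open PowerSeries in
theorem CIC.powerSeries {R : Type*} [CommRing R] [IsDomain R] (h : CIC R) : CIC (PowerSeries R) := by
  have hX : Prime (X : PowerSeries R) := X_prime
  -- divisor coprime to X
  have hcop : ∀ (b u : PowerSeries R) (s n : ℕ), ¬ X ∣ b → b ^ n ∣ X ^ s * u → b ^ n ∣ u := by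
    rintro b u s n hb ⟨v, hv⟩
    have h1 : X ^ s ∣ b ^ n * v := ⟨u, hv.symm⟩
    obtain ⟨w, rfl⟩ := hX.pow_dvd_of_dvd_mul_left s (fun hc => hb (hX.dvd_of_dvd_pow hc)) h1
    refine ⟨w, mul_left_cancel₀ (pow_ne_zero s hX.ne_zero) ?_⟩
    rw [hv]; ring
  have hfac : ∀ c : PowerSeries R, c ≠ 0 → ∃ (s : ℕ) (c' : PowerSeries R), c = X ^ s * c' ∧ ¬ X ∣ c' := by
    intro c hc
    have hfm : FiniteMultiplicity X c := by
      obtain ⟨i, hi⟩ := exists_coeff_ne_zero_iff_ne_zero.2 hc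
      exact ⟨i, fun hd => hi (X_pow_dvd_iff.1 hd i (by omega))⟩
    obtain ⟨c', hc', h2⟩ := hfm.exists_eq_pow_mul_and_not_dvd
    exact ⟨_, c', hc', h2⟩
  -- main case
  have main : ∀ a b c : PowerSeries R, ¬ X ∣ b → ¬ X ∣ c → (∀ n : ℕ, b ^ n ∣ c * a ^ n) → b ∣ a := by
    intro a b c hb hc hn
    have hb0 : constantCoeff b ≠ 0 := fun h0 => hb (X_dvd_iff.2 h0)
    have hc0 : constantCoeff c ≠ 0 := fun h0 => hc (X_dvd_iff.2 h0)
    have hq : ∀ m : ℕ, ∃ q, X ^ m ∣ a - b * q := by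
      intro m
      induction m with
      | zero => exact ⟨0, by simp⟩
      | succ m ih =>
        obtain ⟨q, r, hr⟩ := ih
        have h1 : ∀ n : ℕ, b ^ n ∣ c * r ^ n := by
          intro n
          refine hcop b _ (m * n) n hb ?_
          have h2 : X ^ (m * n) * (c * r ^ n) = c * (a + -(b * q)) ^ n := by
            rw [← sub_eq_add_neg, hr, mul_pow, pow_mul]; ring
          rw [h2, add_pow, Finset.mul_sum]
          refine Finset.dvd_sum fun i hi => ?_
          obtain ⟨u, hu⟩ := hn i
          have hin : i ≤ n := Nat.lt_succ_iff.1 (Finset.mem_range.1 hi)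
          refine ⟨u * (-q) ^ (n - i) * (n.choose i), ?_⟩
          have h3 : b ^ n = b ^ i * b ^ (n - i) := by rw [← pow_add]; congr 1; omega
          have h4 : (-(b * q)) ^ (n - i) = b ^ (n - i) * (-q) ^ (n - i) := by
            rw [← mul_pow]; congr 1; ring
          rw [h4, h3]
          linear_combination (b ^ (n-i) * (-q) ^ (n-i) * (n.choose i : PowerSeries R)) * hu
        obtain ⟨t, ht⟩ := h (constantCoeff r) (constantCoeff b) (constantCoeff c) hb0 hc0 (fun n => by
          have := map_dvd (constantCoeff (R := R)) (h1 n)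
          simpa using this)
        refine ⟨q + X ^ m * C t, ?_⟩
        have h5 : X ∣ r - b * C t := X_dvd_iff.2 (by simp [ht])
        have h6 : a - b * (q + X ^ m * C t) = X ^ m * (r - b * C t) := by
          rw [mul_sub, ← hr]; ring
        rw [h6, pow_succ]
        exact mul_dvd_mul_left _ h5
    choose q hq using hq
    have hqq : ∀ m n, m ≤ n → X ^ m ∣ q m - q n := by
      intro m n hmn
      refine hX.pow_dvd_of_dvd_mul_left m hb ?_
      have h1 : b * (q m - q n) = (a - b * q n) - (a - b * q m) := by ring
      rw [h1]
      exact dvd_sub ((pow_dvd_pow X hmn).trans (hq n)) (hq m)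
    refine ⟨PowerSeries.mk fun i => coeff i (q (i+1)), ?_⟩
    rw [← sub_eq_zero]
    ext i
    have h1 : X ^ (i+1) ∣ a - b * PowerSeries.mk fun i => coeff i (q (i+1)) := by
      have h2 : X ^ (i+1) ∣ q (i+1) - PowerSeries.mk fun i => coeff i (q (i+1)) := by
        rw [X_pow_dvd_iff]
        intro j hj
        rw [map_sub, coeff_mk]
        have := X_pow_dvd_iff.1 (hqq (j+1) (i+1) (by omega)) j (by omega)
        rw [map_sub] at this
        rw [← neg_sub, this, neg_zero]
      have h3 : (a - b * PowerSeries.mk fun i => coeff i (q (i+1))) =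
        (a - b * q (i+1)) + b * (q (i+1) - PowerSeries.mk fun i => coeff i (q (i+1))) := by ring
      rw [h3]
      exact dvd_add (hq _) (h2.mul_left b)
    rw [X_pow_dvd_iff.1 h1 i (by omega), map_zero]
  intro a b c hb hc hn
  by_cases ha : a = 0
  · simp [ha]
  obtain ⟨s, c', rfl, hc'⟩ := hfac c hc
  obtain ⟨v, b', rfl, hb'⟩ := hfac b hb
  obtain ⟨w, a', rfl, ha'⟩ := hfac a ha
  have hvw : v ≤ w := by
    have h1 := hn (s+1)
    have h2 : X ^ (v * (s+1)) ∣ (c' * a' ^ (s+1)) * X ^ (s + w * (s+1)) := by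
      refine Dvd.dvd.trans ⟨b' ^ (s+1), ?_⟩ (h1.trans (dvd_of_eq ?_))
      · rw [mul_pow, pow_mul]
      · rw [mul_pow, pow_add X s, pow_mul]; ring
    have h3 : X ^ (v * (s+1)) ∣ (X : PowerSeries R) ^ (s + w * (s+1)) := by
      refine hX.pow_dvd_of_dvd_mul_left _ (fun hc => ?_) h2
      rcases hX.dvd_or_dvd hc with h | h
      · exact hc' h
      · exact ha' (hX.dvd_of_dvd_pow h)
    have h4 := (pow_dvd_pow_iff hX.ne_zero hX.not_isUnit).1 h3
    by_contra hlt
    have : (w + 1) * (s+1) ≤ v * (s+1) := Nat.mul_le_mul_right _ (by omega)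
    nlinarith
  obtain ⟨u, rfl⟩ := Nat.exists_eq_add_of_le hvw
  have : b' ∣ X ^ u * a' := by
    refine main (X ^ u * a') b' c' hb' hc' (fun n => ?_)
    refine hcop b' _ (s + v * n) n hb' ?_
    refine Dvd.dvd.trans (Dvd.intro_left (X ^ (v * n)) rfl) (b := X ^ (v*n) * b' ^ n) ?_
    refine Dvd.dvd.trans (dvd_of_eq ?_) ((hn n).trans (dvd_of_eq ?_))
    · rw [mul_pow, pow_mul]
    · rw [pow_add X v u, pow_add X s (v*n), pow_mul]; ring
  rw [pow_add, mul_assoc]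
  exact mul_dvd_mul_left _ this

instance isDomain_mvPowerSeries (k σ : Type*) [Field k] : IsDomain (MvPowerSeries σ k) :=
  NoZeroDivisors.to_isDomain _

theorem cic_mvPowerSeries (k : Type*) [Field k] (d : ℕ) : CIC (MvPowerSeries (Fin d) k) := by
  induction d with
  | zero => exact CIC.of_equiv (MvPowerSeries.isEmptyEquiv (σ := Fin 0) (R := k)).toRingEquiv (cic_field k)
  | succ d ih =>
    exact CIC.of_equiv (MvPowerSeries.finSuccEquiv k d).toRingEquiv ih.powerSeries

theorem CIC.isIntegrallyClosed {R : Type*} [CommRing R] [IsDomain R] (h : CIC R) :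
    IsIntegrallyClosed R := by
  rw [isIntegrallyClosed_iff (FractionRing R)]
  intro x hx
  obtain ⟨r, hr, hrn⟩ := hx.isAlmostIntegral
  obtain ⟨a, b, hb, rfl⟩ := IsFractionRing.div_surjective (A := R) x
  have hb0 : algebraMap R (FractionRing R) b ≠ 0 := by
    simpa using nonZeroDivisors.ne_zero hb
  obtain ⟨q, rfl⟩ := h a b r (nonZeroDivisors.ne_zero hb) (nonZeroDivisors.ne_zero hr) (by
    intro n
    obtain ⟨s, hs⟩ := hrn n
    refine ⟨s, IsFractionRing.injective R (FractionRing R) ?_⟩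
    rw [Algebra.smul_def, div_pow] at hs
    rw [map_mul, map_mul, map_pow, map_pow, hs]
    field_simp)
  exact ⟨q, by rw [map_mul]; field_simp⟩

instance (k : Type*) [Field k] (d : ℕ) : IsIntegrallyClosed (MvPowerSeries (Fin d) k) :=
  (cic_mvPowerSeries k d).isIntegrallyClosed

end ReesCrit

namespace ReesCrit
open MvPowerSeries

section
variable {σ k : Type*} [Field k] [Finite σ]

/-- the ideal generated by the variables -/
noncomputable abbrev nn (σ k : Type*) [Field k] : Ideal (MvPowerSeries σ k) := Ideal.span (Set.range X)

theorem le_order_of_mem_pow {n : ℕ} : ∀ {f : MvPowerSeries σ k}, f ∈ nn σ k ^ n → (n : ℕ∞) ≤ f.order := by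
  induction n with
  | zero => intro f _; simp
  | succ n ih =>
    intro f hf
    rw [pow_succ] at hf
    refine Submodule.mul_induction_on hf ?_ ?_
    · intro a ha b hb
      refine le_trans ?_ le_order_mul
      push_cast
      refine add_le_add (ih ha) ?_
      rw [one_le_order_iff_constCoeff_eq_zero]
      have : nn σ k ≤ RingHom.ker (constantCoeff (σ := σ) (R := k)) := by
        rw [Ideal.span_le]
        rintro _ ⟨i, rfl⟩
        simp
      exact this hb
    · intro a b ha hb
      exact le_trans (le_min ha hb) min_order_le_add

theorem mem_pow_of_le_order {n : ℕ} : ∀ {f : MvPowerSeries σ k}, (n : ℕ∞) ≤ f.order → f ∈ nn σ k ^ n := by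
  classical
  have := Fintype.ofFinite σ
  induction n with
  | zero => intro f _; simp
  | succ n ih =>
    intro f hf
    have hc : ∀ x : σ →₀ ℕ, x ≠ 0 → ∃ i, x i ≠ 0 := fun x hx => by
      by_contra h; push Not at h; exact hx (Finsupp.ext h)
    rcases isEmpty_or_nonempty σ with he | hne
    · have : f = 0 := by
        ext x
        have : x = 0 := Subsingleton.elim _ _
        subst this
        rw [coeff_of_lt_order]
        · rfl
        · refine lt_of_lt_of_le ?_ hf
          simp
      rw [this]; exact zero_mem _
    choose! c hc using hc
    let F : σ → MvPowerSeries σ k := fun i y => if c (y + Finsupp.single i 1) = i then coeff (y + Finsupp.single i 1) f else 0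
    have hF : f = ∑ i, X i * F i := by
      ext x
      rw [map_sum]
      have : ∀ i, coeff x (X i * F i) = if x i ≠ 0 ∧ c x = i then coeff x f else 0 := by
        intro i
        rw [X, coeff_monomial_mul]
        have hle : Finsupp.single i 1 ≤ x ↔ x i ≠ 0 := by
          rw [Finsupp.single_le_iff]; omega
        by_cases hx : x i ≠ 0
        · have hxe : x - Finsupp.single i 1 + Finsupp.single i 1 = x := tsub_add_cancel_of_le (hle.2 hx)
          rw [if_pos (hle.2 hx), one_mul]
          change (if c (x - Finsupp.single i 1 + Finsupp.single i 1) = i then coeff (x - Finsupp.single i 1 + Finsupp.single i 1) f else 0) = _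
          rw [hxe]; simp [hx]
        · rw [if_neg (by rwa [hle]), if_neg (by tauto)]
      simp only [this]
      by_cases hx : x = 0
      · subst hx
        simp only [Finsupp.coe_zero, Pi.zero_apply, ne_eq, not_true, false_and, if_false, Finset.sum_const_zero]
        rw [coeff_of_lt_order]
        refine lt_of_lt_of_le ?_ hf
        simp
      · rw [Finset.sum_eq_single (c x)]
        · simp [hc x hx]
        · intro b _ hb; rw [if_neg]; rintro ⟨_, h⟩; exact hb h.symm
        · simp
    rw [hF, pow_succ']
    refine sum_mem fun i _ => Ideal.mul_mem_mul (Ideal.subset_span ⟨i, rfl⟩) (ih ?_)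
    refine nat_le_order ?_
    intro y hy
    change (if c (y + Finsupp.single i 1) = i then coeff (y + Finsupp.single i 1) f else 0) = 0
    split_ifs
    · apply coeff_of_lt_order
      refine lt_of_lt_of_le ?_ hf
      rw [map_add, Finsupp.degree_single]
      exact_mod_cast Nat.succ_lt_succ hy
    · rfl

theorem mem_pow_iff {n : ℕ} {f : MvPowerSeries σ k} : f ∈ nn σ k ^ n ↔ ∀ x, Finsupp.degree x < n → coeff x f = 0 := by
  constructor
  · intro h x hx
    exact coeff_of_lt_order (lt_of_lt_of_le (by exact_mod_cast hx) (le_order_of_mem_pow h))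
  · intro h
    exact mem_pow_of_le_order (nat_le_order h)

theorem mul_mem_pow {o n : ℕ} {f g : MvPowerSeries σ k} (ho : f.order = o) (h : g * f ∈ nn σ k ^ n) :
    g ∈ nn σ k ^ (n - o) := by
  by_cases hg0 : g = 0
  · rw [hg0]; exact zero_mem _
  apply mem_pow_of_le_order
  by_contra hlt
  push Not at hlt
  have hq := (ne_zero_iff_order_finite (f := g)).1 hg0
  set q := g.order.toNat
  have h1 := homogeneousComponent_mul_of_le_order (f := g) (g := f) (p := q) (q := o) hq.le ho.ge
  have h2 : homogeneousComponent q g ≠ 0 := homogeneousComponent_of_order hq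
  have h3 : homogeneousComponent o f ≠ 0 := homogeneousComponent_of_order ho.symm
  have h4 : homogeneousComponent (q + o) (g * f) = 0 := by
    apply homogeneousComponent_of_lt_order_eq_zero
    refine lt_of_lt_of_le ?_ (le_order_of_mem_pow h)
    rw [← hq] at hlt
    have : q < n - o := by exact_mod_cast hlt
    have : q + o < n := by omega
    exact_mod_cast this
  rw [h4] at h1
  exact mul_ne_zero h2 h3 h1.symm

/-- number of exponents of degree `< n` -/
noncomputable def hh (σ : Type*) (n : ℕ) : ℕ := Nat.card {x : σ →₀ ℕ // Finsupp.degree x < n}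

instance finite_deg (n : ℕ) : Finite {x : σ →₀ ℕ // Finsupp.degree x < n} := by
  exact (Finsupp.finite_of_degree_le (σ := σ) n).subset (fun x (hx : Finsupp.degree x < n) => (le_of_lt hx : Finsupp.degree x ≤ n))

noncomputable def coeffMap (σ k : Type*) [Field k] (n : ℕ) :
    MvPowerSeries σ k →ₗ[k] ({x : σ →₀ ℕ // Finsupp.degree x < n} → k) :=
  LinearMap.pi fun x => coeff (x : σ →₀ ℕ)

theorem ker_coeffMap (n : ℕ) : LinearMap.ker (coeffMap σ k n) = (nn σ k ^ n).restrictScalars k := by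
  ext f
  rw [LinearMap.mem_ker, Submodule.restrictScalars_mem, mem_pow_iff, funext_iff]
  simp [coeffMap]

theorem coeffMap_surj (n : ℕ) : Function.Surjective (coeffMap σ k n) := by
  classical
  intro v
  refine ⟨fun x => if h : Finsupp.degree x < n then v ⟨x, h⟩ else 0, ?_⟩
  ext ⟨x, hx⟩
  change (if h : Finsupp.degree x < n then v ⟨x, h⟩ else 0) = _
  rw [dif_pos hx]

noncomputable def quotEquiv (n : ℕ) : (MvPowerSeries σ k ⧸ nn σ k ^ n) ≃ₗ[k] ({x : σ →₀ ℕ // Finsupp.degree x < n} → k) :=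
  (Submodule.Quotient.restrictScalarsEquiv k (nn σ k ^ n)).symm.trans
    ((Submodule.quotEquivOfEq _ _ (ker_coeffMap n).symm).trans
      ((coeffMap σ k n).quotKerEquivOfSurjective (coeffMap_surj n)))

instance finite_quot_nn (n : ℕ) : Module.Finite k (MvPowerSeries σ k ⧸ nn σ k ^ n) :=
  Module.Finite.equiv (quotEquiv n).symm

theorem finrank_quot_nn (n : ℕ) : Module.finrank k (MvPowerSeries σ k ⧸ nn σ k ^ n) = hh σ n := by
  have := Fintype.ofFinite {x : σ →₀ ℕ // Finsupp.degree x < n}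
  rw [(quotEquiv n).finrank_eq, Module.finrank_fintype_fun_eq_card, hh, Nat.card_eq_fintype_card]

theorem hh_mono {m n : ℕ} (h : m ≤ n) : hh σ m ≤ hh σ n :=
  Nat.card_le_card_of_injective (fun x : {x : σ →₀ ℕ // Finsupp.degree x < m} =>
    (⟨x.1, lt_of_lt_of_le x.2 h⟩ : {x : σ →₀ ℕ // Finsupp.degree x < n}))
    (fun a b hab => Subtype.ext (by simpa using hab))

theorem finrank_quot_sup {o : ℕ} {f : MvPowerSeries σ k} (ho : f.order = o) (n : ℕ) :
    Module.finrank k (MvPowerSeries σ k ⧸ (nn σ k ^ n ⊔ Ideal.span {f})) + hh σ (n - o) ≤ hh σ n := by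
  rw [← finrank_quot_nn (k := k), ← finrank_quot_nn (k := k)]
  exact finrank_colon f fun g hg => mul_mem_pow ho hg

end
end ReesCrit

namespace ReesCrit
section

theorem hh_option {σ : Type*} [Finite σ] (n : ℕ) : hh (Option σ) (n + 1) = hh (Option σ) n + hh σ (n + 1) := by
  classical
  have := Fintype.ofFinite σ
  unfold hh
  rw [← Nat.card_sum]
  symm
  let F : {x : Option σ →₀ ℕ // Finsupp.degree x < n} ⊕ {x : σ →₀ ℕ // Finsupp.degree x < n + 1} →
      {x : Option σ →₀ ℕ // Finsupp.degree x < n + 1} :=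
    Sum.elim (fun y => ⟨y.1 + Finsupp.single none 1, by
      rw [map_add, Finsupp.degree_single]; have := y.2; omega⟩)
      (fun y => ⟨y.1.optionElim 0, by
        have := y.2
        rw [Finsupp.degree_eq_sum, Fintype.sum_option] at *
        simpa [Finsupp.degree_eq_sum] using this⟩)
  refine Nat.card_congr (Equiv.ofBijective F ⟨?_, ?_⟩)
  · rintro (⟨x, hx⟩ | ⟨x, hx⟩) (⟨y, hy⟩ | ⟨y, hy⟩) h
    · have h := congrArg Subtype.val h
      simp only [F, Sum.elim_inl] at h
      have := add_right_cancel h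
      subst this; rfl
    · have h := DFunLike.congr_fun (congrArg Subtype.val h) none
      simp [F] at h
    · have h := DFunLike.congr_fun (congrArg Subtype.val h) none
      simp [F] at h
    · have h := congrArg Finsupp.some (congrArg Subtype.val h)
      simp [F] at h
      subst h; rfl
  · rintro ⟨x, hx⟩
    by_cases h0 : x none = 0
    · refine ⟨Sum.inr ⟨x.some, ?_⟩, ?_⟩
      · rw [Finsupp.degree_eq_sum, Fintype.sum_option] at hx
        simpa [Finsupp.degree_eq_sum, h0] using hx
      · apply Subtype.ext
        ext (_ | i)
        · simp [F, h0]
        · simp [F]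
    · have hle : Finsupp.single none 1 ≤ x := by rw [Finsupp.single_le_iff]; omega
      have hxe : x - Finsupp.single none 1 + Finsupp.single none 1 = x := tsub_add_cancel_of_le hle
      refine ⟨Sum.inl ⟨x - Finsupp.single none 1, ?_⟩, Subtype.ext hxe⟩
      have := congrArg Finsupp.degree hxe
      rw [map_add, Finsupp.degree_single] at this
      omega

theorem hh_congr {σ τ : Type*} (e : σ ≃ τ) (n : ℕ) : hh σ n = hh τ n := by
  unfold hh
  refine Nat.card_congr ((Finsupp.domCongr e : (σ →₀ ℕ) ≃+ (τ →₀ ℕ)).toEquiv.subtypeEquiv ?_)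
  intro x
  have : Finsupp.degree (Finsupp.domCongr e x) = Finsupp.degree x := by
    simp [Finsupp.domCongr, Finsupp.equivMapDomain_eq_mapDomain, Finsupp.degree_mapDomain]
  change _ ↔ Finsupp.degree (Finsupp.domCongr e x) < n
  rw [this]

theorem hh_zero (σ : Type*) : hh σ 0 = 0 := by
  unfold hh
  have : IsEmpty {x : σ →₀ ℕ // Finsupp.degree x < 0} := ⟨fun x => by simpa using x.2⟩
  exact Nat.card_of_isEmpty

theorem hh_fin_succ (d n : ℕ) : hh (Fin (d + 1)) (n + 1) = hh (Fin (d + 1)) n + hh (Fin d) (n + 1) := by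
  rw [hh_congr (finSuccEquiv d), hh_option, hh_congr (finSuccEquiv d)]

theorem hh_fin (d : ℕ) : ∀ n, hh (Fin d) (n + 1) = (n + d).choose d := by
  induction d with
  | zero =>
    intro n
    unfold hh
    rw [Nat.choose_zero_right, Nat.card_eq_one_iff_unique]
    exact ⟨⟨fun a b => Subtype.ext (Subsingleton.elim _ _)⟩, ⟨0, by simp⟩⟩
  | succ d ih =>
    intro n
    induction n with
    | zero => rw [hh_fin_succ, hh_zero, ih]; simp
    | succ n ihn =>
      rw [hh_fin_succ, ihn, ih, show n + 1 + (d + 1) = (n + d + 1) + 1 by ring, Nat.choose_succ_succ (n + d + 1) d]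
      rw [show n + 1 + d = n + d + 1 by ring, show n + (d + 1) = n + d + 1 by ring]
      ring

theorem factorial_mul_hh (d n : ℕ) : d.factorial * hh (Fin d) (n + 1) = (n + 1).ascFactorial d := by
  rw [hh_fin, Nat.ascFactorial_eq_factorial_mul_choose]

theorem le_factorial_mul_hh (d n : ℕ) (hn : 0 < n) : n ^ d ≤ d.factorial * hh (Fin d) n := by
  obtain ⟨n, rfl⟩ : ∃ m, n = m + 1 := ⟨n - 1, by omega⟩
  rw [factorial_mul_hh]
  exact Nat.pow_succ_le_ascFactorial (n+1) d

theorem factorial_mul_hh_le (d n : ℕ) : d.factorial * hh (Fin d) n ≤ (n + d) ^ d := by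
  obtain rfl | ⟨n, rfl⟩ : n = 0 ∨ ∃ m, n = m + 1 := by
    rcases n with _ | n
    · simp
    · right; exact ⟨n, rfl⟩
  · simp [hh_zero]
  rw [factorial_mul_hh]
  exact (Nat.ascFactorial_le_pow_add n d).trans (Nat.pow_le_pow_left (by omega) _)

theorem hh_diff (a b : ℕ → ℕ) (hb : Monotone b) (h : ∀ n, a (n + 1) = a n + b (n + 1)) (n o : ℕ) :
    a n ≤ a (n - o) + o * b n := by
  induction o with
  | zero => simp
  | succ o ih =>
    refine ih.trans ?_
    rw [Nat.succ_mul, ← add_assoc, add_right_comm]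
    refine Nat.add_le_add_right ?_ _
    rcases Nat.eq_zero_or_pos (n - o) with h0 | h0
    · have : n - (o + 1) = n - o := by omega
      rw [this]; omega
    · have h1 := h (n - (o + 1))
      rw [show n - (o + 1) + 1 = n - o by omega] at h1
      rw [h1]
      exact Nat.add_le_add_left (hb (by omega)) _

theorem finrank_quot_sup_option {k σ : Type*} [Field k] [Finite σ] {o : ℕ} {f : MvPowerSeries (Option σ) k} (ho : f.order = o) (n : ℕ) :
    Module.finrank k (MvPowerSeries (Option σ) k ⧸ (nn (Option σ) k ^ n ⊔ Ideal.span {f})) ≤ o * hh σ n := by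
  have h1 := finrank_quot_sup ho n
  have h2 := hh_diff (hh (Option σ)) (hh σ) (fun _ _ h => hh_mono h) hh_option n o
  omega

theorem finrank_quot_sup_fin {k : Type*} [Field k] {d : ℕ} {o : ℕ} {f : MvPowerSeries (Fin (d + 1)) k} (ho : f.order = o) (n : ℕ) (hn : 0 < n) :
    Module.finrank k (MvPowerSeries (Fin (d + 1)) k ⧸ (nn (Fin (d + 1)) k ^ n ⊔ Ideal.span {f})) ≤ (o * (d + 1) ^ d) * n ^ d := by
  have h1 := finrank_quot_sup ho n
  have h2 := hh_diff (hh (Fin (d + 1))) (hh (Fin d)) (fun _ _ h => hh_mono h) (hh_fin_succ d) n o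
  have h3 : hh (Fin d) n ≤ (n + d) ^ d :=
    (Nat.le_mul_of_pos_left _ d.factorial_pos).trans (factorial_mul_hh_le d n)
  have h4 : (n + d) ^ d ≤ (d + 1) ^ d * n ^ d := by
    rw [← mul_pow]
    exact Nat.pow_le_pow_left (by nlinarith) _
  rw [mul_assoc]
  have h5 := Nat.mul_le_mul_left o (h3.trans h4)
  omega

end
end ReesCrit

namespace ReesCrit
open MvPowerSeries

theorem exists_psMap {σ k A : Type*} [Finite σ] [Field k] [CommRing A] [Algebra k A] (I : Ideal A)
    [IsAdicComplete I A] (a : σ → A) (ha : ∀ i, a i ∈ I) :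
    ∃ ψ : MvPowerSeries σ k →ₐ[k] A, ∀ i, ψ (X i) = a i := by
  have hle : ∀ n, MvPolynomial.idealOfVars σ k ^ n ≤ (I ^ n).comap (MvPolynomial.aeval (R := k) a) := by
    intro n
    refine le_trans (Ideal.pow_right_mono ?_ n) (Ideal.le_comap_pow _ n)
    rw [MvPolynomial.idealOfVars, Ideal.span_le]
    rintro _ ⟨i, rfl⟩
    simpa using ha i
  let f : (n : ℕ) → MvPowerSeries σ k →ₐ[k] A ⧸ I ^ n := fun n =>
    (Ideal.quotientMapₐ (I ^ n) (MvPolynomial.aeval (R := k) a) (hle n)).comp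
      ((truncTotalAlgHom σ k n).restrictScalars k)
  have hf : ∀ n x, f n x = Ideal.Quotient.mk (I ^ n) (MvPolynomial.aeval a (truncTotal n x)) := by
    intro n x
    rfl
  refine ⟨IsAdicComplete.liftAlgHom I f ?_, ?_⟩
  · intro m n hmn
    ext x
    simp only [AlgHom.comp_apply, hf]
    change Ideal.Quotient.mk (I ^ m) _ = _
    rw [Ideal.Quotient.eq, ← map_sub]
    exact hle m (truncTotal_sub_truncTotal_mem_pow_idealOfVars hmn le_rfl x)
  · intro i
    rw [← sub_eq_zero]
    apply IsHausdorff.haus (I := I) inferInstance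
    intro n
    rw [SModEq.zero, smul_eq_mul, Ideal.mul_top, ← Ideal.Quotient.eq_zero_iff_mem, map_sub,
      IsAdicComplete.mk_liftAlgHom, hf, ← map_sub, Ideal.Quotient.eq_zero_iff_mem]
    have : a i = MvPolynomial.aeval (R := k) a (MvPolynomial.X i) := by simp
    rw [this, ← map_sub]
    apply hle
    rw [MvPolynomial.mem_pow_idealOfVars_iff']
    intro x hx
    rw [MvPolynomial.coeff_sub, coeff_truncTotal _ hx, ← MvPolynomial.coe_X, MvPolynomial.coeff_coe, sub_self]

theorem mem_smul_top_pi {R : Type*} [CommRing R] (I : Ideal R) {s : ℕ} (v : Fin s → R) :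
    v ∈ (I • ⊤ : Submodule R (Fin s → R)) ↔ ∀ i, v i ∈ I := by
  classical
  constructor
  · intro h i
    have : (I • ⊤ : Submodule R (Fin s → R)) ≤ Submodule.comap (LinearMap.proj i) I := by
      rw [Submodule.smul_le]
      intro r hr x _
      simpa using I.mul_mem_right (x i) hr
    exact this h
  · intro h
    rw [pi_eq_sum_univ' v]
    exact Submodule.sum_mem _ fun i _ => Submodule.smul_mem_smul (h i) trivial

instance isPrecomplete_pi {R : Type*} [CommRing R] (I : Ideal R) [IsPrecomplete I R] (s : ℕ) :
    IsPrecomplete I (Fin s → R) := by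
  refine ⟨fun f hf => ?_⟩
  have h1 : ∀ i, ∃ L, ∀ n, f n i ≡ L [SMOD (I ^ n • ⊤ : Submodule R R)] := by
    intro i
    refine IsPrecomplete.prec (I := I) inferInstance (f := fun n => f n i) ?_
    intro m n hmn
    have := hf hmn
    rw [SModEq.sub_mem, mem_smul_top_pi] at this
    rw [SModEq.sub_mem, smul_eq_mul, Ideal.mul_top]
    exact this i
  choose L hL using h1
  refine ⟨L, fun n => ?_⟩
  rw [SModEq.sub_mem, mem_smul_top_pi]
  intro i
  have := hL i n
  rw [SModEq.sub_mem, smul_eq_mul, Ideal.mul_top] at this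
  exact this

theorem finite_of_complete {R A : Type*} [CommRing R] [CommRing A] [Algebra R A] (n : Ideal R)
    [IsAdicComplete n R] [IsHausdorff n A] [Module.Finite R (A ⧸ (n • ⊤ : Submodule R A))] : Module.Finite R A := by
  obtain ⟨s, f, hf⟩ := Module.Finite.exists_fin' R (A ⧸ (n • ⊤ : Submodule R A))
  obtain ⟨g, hg⟩ := Module.projective_lifting_property (n • ⊤ : Submodule R A).mkQ f (Submodule.mkQ_surjective _)
  have : IsPrecomplete n (Fin s → R) := inferInstance
  have := surjective_of_mkQ_comp_surjective (I := n) (f := g) (by rw [hg]; exact hf)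
  exact Module.Finite.of_surjective g this
end ReesCrit

namespace ReesCrit
open Polynomial

section
attribute [local instance] Polynomial.algebra

theorem exists_minpoly {R A : Type*} [CommRing R] [IsDomain R] [IsIntegrallyClosed R] [CommRing A] [Algebra R A]
    (htf : ∀ r : R, r ≠ 0 → ∀ a : A, algebraMap R A r * a = 0 → a = 0) (w : A) (hw : IsIntegral R w) :
    ∃ f : R[X], f.Monic ∧ aeval w f = 0 ∧ ∀ g : R[X], aeval w g = 0 → g.degree < f.degree → g = 0 := by
  let K := FractionRing R
  let a : Ideal R[X] := RingHom.ker (aeval w : R[X] →ₐ[R] A)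
  have hloc : IsLocalization ((nonZeroDivisors R).map C) K[X] := Polynomial.isLocalization _ _
  let b : Ideal K[X] := a.map (algebraMap R[X] K[X])
  have halg : ∀ p : R[X], algebraMap R[X] K[X] p = p.map (algebraMap R K) := fun p => by
    rw [Polynomial.algebraMap_def]; rfl
  obtain ⟨F, hF⟩ := (IsPrincipalIdealRing.principal b).principal
  rw [Ideal.submodule_span_eq] at hF
  obtain ⟨g, hgm, hg⟩ := hw
  have hdvd : ∀ p : R[X], aeval w p = 0 → F ∣ p.map (algebraMap R K) := by
    intro p hp
    rw [← Ideal.mem_span_singleton, ← hF, ← halg]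
    exact Ideal.mem_map_of_mem _ hp
  have hFg := hdvd g hg
  have hF0 : F ≠ 0 := ne_zero_of_dvd_ne_zero (hgm.map _).ne_zero hFg
  obtain ⟨f, hf⟩ := IsIntegrallyClosed.eq_map_mul_C_of_dvd K hgm hFg
  have hlc : F.leadingCoeff ≠ 0 := leadingCoeff_ne_zero.2 hF0
  have hinj : Function.Injective (algebraMap R K) := IsFractionRing.injective R K
  have hfm : f.Monic := by
    have := congrArg leadingCoeff hf
    rw [leadingCoeff_mul, leadingCoeff_C] at this
    have h1 : (f.map (algebraMap R K)).leadingCoeff = 1 := by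
      exact mul_right_cancel₀ hlc (by rw [this, one_mul])
    exact (Function.Injective.monic_map_iff hinj).2 h1
  have hdeg : F.degree = f.degree := by
    rw [← hf, degree_mul, degree_C hlc, add_zero, degree_map_eq_of_injective hinj]
  refine ⟨f, hfm, ?_, ?_⟩
  · have hmem : f.map (algebraMap R K) ∈ b := by
      rw [hF, Ideal.mem_span_singleton]
      refine ⟨C (F.leadingCoeff)⁻¹, ?_⟩
      have h2 : F * C (F.leadingCoeff)⁻¹ =
          f.map (algebraMap R K) * C F.leadingCoeff * C (F.leadingCoeff)⁻¹ := by rw [hf]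
      rw [h2, mul_assoc, ← C_mul, mul_inv_cancel₀ hlc, C_1, mul_one]
    rw [IsLocalization.mem_map_algebraMap_iff ((nonZeroDivisors R).map C)] at hmem
    obtain ⟨⟨⟨q, hq⟩, ⟨_, c, hc, rfl⟩⟩, hx⟩ := hmem
    simp only at hx
    rw [← halg, ← map_mul] at hx
    have hx' : f * C c = q := by
      simp only [halg] at hx
      exact map_injective _ hinj hx
    have : aeval w (f * C c) = 0 := by rw [hx']; exact hq
    rw [map_mul, aeval_C, mul_comm] at this
    exact htf c (nonZeroDivisors.ne_zero hc) _ this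
  · intro p hp hlt
    by_contra hp0
    have h1 := degree_le_of_dvd (hdvd p hp) (by rwa [Ne, Polynomial.map_eq_zero_iff hinj])
    rw [hdeg, degree_map_eq_of_injective hinj] at h1
    exact absurd hlt (not_lt.2 h1)

end

theorem finrank_range_le_of_ker_le {k M V U : Type*} [Field k] [AddCommGroup M] [Module k M] [AddCommGroup V] [Module k V]
    [AddCommGroup U] [Module k U] (f : M →ₗ[k] V) (g : M →ₗ[k] U) (h : LinearMap.ker f ≤ LinearMap.ker g)
    [Module.Finite k (LinearMap.range f)] :
    Module.finrank k (LinearMap.range g) ≤ Module.finrank k (LinearMap.range f) := by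
  let e := f.quotKerEquivRange
  let T : (M ⧸ LinearMap.ker f) →ₗ[k] LinearMap.range g :=
    (LinearMap.ker f).liftQ g.rangeRestrict (by rwa [LinearMap.ker_rangeRestrict])
  have : Function.Surjective (T ∘ₗ e.symm.toLinearMap) := by
    rintro ⟨_, x, rfl⟩
    refine ⟨e (Submodule.Quotient.mk x), ?_⟩
    simp [T]
    rfl
  exact LinearMap.finrank_le_finrank_of_surjective this
end ReesCrit

namespace ReesCrit
open MvPowerSeries IsLocalRing

theorem ringKrullDim_le_of_pow_le {B : Type*} [CommRing B] [IsLocalRing B] [IsNoetherianRing B] {d : ℕ} (y : Fin d → B)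
    (hy : ∀ i, y i ∈ maximalIdeal B) (N : ℕ) (h : maximalIdeal B ^ N ≤ Ideal.span (Set.range y)) :
    ringKrullDim B ≤ d := by
  classical
  have hmin : maximalIdeal B ∈ (Ideal.span (Set.range y)).minimalPrimes := by
    refine ⟨⟨inferInstance, ?_⟩, ?_⟩
    · rw [Ideal.span_le]; rintro _ ⟨i, rfl⟩; exact hy i
    · rintro q ⟨hq, hle⟩ _
      exact Ideal.IsPrime.le_of_pow_le (h.trans hle)
  rw [← IsLocalRing.maximalIdeal_height_eq_ringKrullDim]
  have h1 : (maximalIdeal B).height ≤ ((Finset.univ.image y).card : ℕ∞) := by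
    apply Ideal.height_le_card_of_mem_minimalPrimes_span_finset
    simpa using hmin
  have h2 : (Finset.univ.image y).card ≤ d := by
    simpa using Finset.card_image_le (s := Finset.univ) (f := y)
  have h3 : (maximalIdeal B).height ≤ (d : ℕ∞) := h1.trans (by exact_mod_cast h2)
  exact_mod_cast h3

section
variable {k : Type*} [Field k]

theorem finite_quot_pow_of_finite {R B : Type*} [CommRing R] [Algebra k R] [CommRing B] [Algebra k B] [Algebra R B] [IsScalarTower k R B]
    {s : ℕ} (g : (Fin s → R) →ₗ[R] B) (hg : Function.Surjective g) (K : Ideal R) [Module.Finite k (R ⧸ K)] (Q : Ideal B)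
    (hK : K.map (algebraMap R B) ≤ Q) :
    Module.Finite k (B ⧸ Q) ∧ Module.finrank k (B ⧸ Q) ≤ s * Module.finrank k (R ⧸ K) := by
  let F : (Fin s → R) →ₗ[k] (Fin s → R ⧸ K) :=
    LinearMap.pi fun i => (Ideal.Quotient.mkₐ k K).toLinearMap ∘ₗ LinearMap.proj i
  let G : (Fin s → R) →ₗ[k] B ⧸ Q := (Ideal.Quotient.mkₐ k Q).toLinearMap ∘ₗ g.restrictScalars k
  have hG : LinearMap.range G = ⊤ := by
    rw [LinearMap.range_eq_top]
    exact (Ideal.Quotient.mkₐ_surjective k Q).comp hg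
  have hker : LinearMap.ker F ≤ LinearMap.ker G := by
    intro v hv
    have h1 : ∀ i, v i ∈ K := fun i => by
      have := congrFun (LinearMap.mem_ker.1 hv) i
      exact Ideal.Quotient.eq_zero_iff_mem.1 this
    have h2 := (mem_smul_top_pi K v).2 h1
    have h3 : (K • ⊤ : Submodule R (Fin s → R)) ≤ Submodule.comap g (Q.restrictScalars R) := by
      rw [Submodule.smul_le]
      intro r hr x _
      rw [Submodule.mem_comap, map_smul, Algebra.smul_def]
      exact Q.mul_mem_right _ (hK (Ideal.mem_map_of_mem _ hr))
    exact Ideal.Quotient.eq_zero_iff_mem.2 (h3 h2)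
  have hfin : Module.Finite k (B ⧸ Q) := by
    let e := F.quotKerEquivRange
    have : Module.Finite k ((Fin s → R) ⧸ LinearMap.ker F) := Module.Finite.equiv e.symm
    refine Module.Finite.of_surjective ((LinearMap.ker F).liftQ G hker) ?_
    rw [← LinearMap.range_eq_top, Submodule.range_liftQ, hG]
  refine ⟨hfin, ?_⟩
  have h1 := finrank_range_le_of_ker_le F G hker
  rw [hG, finrank_top] at h1
  refine h1.trans ((Submodule.finrank_le _).trans ?_)
  rw [Module.finrank_pi_fintype]
  simp

theorem dim_le_of_ker {d : ℕ} {B : Type*} [CommRing B] [IsLocalRing B] [IsNoetherianRing B] [Algebra k B]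
    [Algebra (MvPowerSeries (Fin (d + 1)) k) B] [IsScalarTower k (MvPowerSeries (Fin (d + 1)) k) B]
    [Module.Finite (MvPowerSeries (Fin (d + 1)) k) B]
    (hm : (nn (Fin (d + 1)) k).map (algebraMap _ B) ≤ maximalIdeal B)
    (N : ℕ) (hN : maximalIdeal B ^ N ≤ (nn (Fin (d + 1)) k).map (algebraMap _ B))
    (f : MvPowerSeries (Fin (d + 1)) k) (hf0 : f ≠ 0) (hf : algebraMap _ B f = 0) :
    ringKrullDim B ≤ d := by
  obtain ⟨s, g, hg⟩ := Module.Finite.exists_fin' (MvPowerSeries (Fin (d + 1)) k) B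
  set J := (nn (Fin (d + 1)) k).map (algebraMap _ B) with hJ
  have ho := (ne_zero_iff_order_finite (f := f)).1 hf0
  have key : ∀ n, Module.Finite k (B ⧸ J ^ n) ∧ Module.finrank k (B ⧸ J ^ n) ≤ s * Module.finrank k (MvPowerSeries (Fin (d + 1)) k ⧸ (nn (Fin (d + 1)) k ^ n ⊔ Ideal.span {f})) := by
    intro n
    have := finite_quot_of_le (k := k) (le_sup_left : nn (Fin (d + 1)) k ^ n ≤ nn (Fin (d + 1)) k ^ n ⊔ Ideal.span {f})
    refine finite_quot_pow_of_finite g hg _ _ ?_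
    have h0 : (Ideal.span {f}).map (algebraMap _ B) = ⊥ := by
      rw [Ideal.map_span, Set.image_singleton, hf]; simp
    rw [Ideal.map_sup, Ideal.map_pow, h0, ← hJ]
    simp
  obtain ⟨M, y, m, hM, hy, hred⟩ := exists_reduction (k := k) J hm (fun n => (key n).1)
    (s * (f.order.toNat * (d + 1) ^ d)) d (fun n hn => by
      refine (key n).2.trans ?_
      rw [mul_assoc]
      exact Nat.mul_le_mul_left _ (finrank_quot_sup_fin ho.symm n hn))
  refine ringKrullDim_le_of_pow_le y (fun i => ?_) (N * (M * (1 + m))) ?_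
  · exact hm (Ideal.pow_le_self hM.ne' (hy i))
  · rw [pow_mul]
    refine (Ideal.pow_right_mono hN _).trans ?_
    simpa using hred 1

theorem comap_eq_bot {d : ℕ} {A : Type*} [CommRing A] [IsLocalRing A] [IsNoetherianRing A] [Algebra k A]
    [Algebra (MvPowerSeries (Fin d) k) A] [IsScalarTower k (MvPowerSeries (Fin d) k) A]
    [Module.Finite (MvPowerSeries (Fin d) k) A]
    (hm : (nn (Fin d) k).map (algebraMap _ A) ≤ maximalIdeal A)
    (N : ℕ) (hN : maximalIdeal A ^ N ≤ (nn (Fin d) k).map (algebraMap _ A))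
    (P : Ideal A) [hP : P.IsPrime] (hd : ringKrullDim (A ⧸ P) = d)
    (f : MvPowerSeries (Fin d) k) (hf0 : f ≠ 0) : algebraMap _ A f ∉ P := by
  intro hf
  rcases d with _ | d
  · have : IsUnit f := by
      rw [MvPowerSeries.isUnit_iff_constantCoeff, isUnit_iff_ne_zero]
      intro h
      apply hf0
      ext x
      rw [Subsingleton.elim x 0]
      simpa using h
    exact hP.ne_top (Ideal.eq_top_of_isUnit_mem _ hf (this.map _))
  · have : IsLocalRing (A ⧸ P) := IsLocalRing.of_surjective' (Ideal.Quotient.mk P) Ideal.Quotient.mk_surjective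
    have hmax : maximalIdeal (A ⧸ P) = (maximalIdeal A).map (Ideal.Quotient.mk P) :=
      (IsLocalRing.map_maximalIdeal_of_surjective _ Ideal.Quotient.mk_surjective).symm
    have hmap : (nn (Fin (d + 1)) k).map (algebraMap _ (A ⧸ P)) = ((nn (Fin (d + 1)) k).map (algebraMap _ A)).map (Ideal.Quotient.mk P) := by
      rw [Ideal.map_map]; rfl
    have := dim_le_of_ker (B := A ⧸ P) (k := k) (d := d) (by
      rw [hmap, hmax]; exact Ideal.map_mono hm) N (by
      rw [hmap, hmax, ← Ideal.map_pow]; exact Ideal.map_mono hN) f hf0 (by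
      exact Ideal.Quotient.eq_zero_iff_mem.2 hf)
    rw [hd] at this
    have : d + 1 ≤ d := by exact_mod_cast this
    omega

theorem torsion_free {d : ℕ} {A : Type*} [CommRing A] [IsLocalRing A] [IsNoetherianRing A] [IsReduced A] [Algebra k A]
    [Algebra (MvPowerSeries (Fin d) k) A] [IsScalarTower k (MvPowerSeries (Fin d) k) A]
    [Module.Finite (MvPowerSeries (Fin d) k) A]
    (hm : (nn (Fin d) k).map (algebraMap _ A) ≤ maximalIdeal A)
    (N : ℕ) (hN : maximalIdeal A ^ N ≤ (nn (Fin d) k).map (algebraMap _ A))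
    (hequi : ∀ P ∈ minimalPrimes A, ringKrullDim (A ⧸ P) = d)
    (f : MvPowerSeries (Fin d) k) (hf0 : f ≠ 0) (a : A) (ha : algebraMap _ A f * a = 0) : a = 0 := by
  have h1 : a ∈ sInf (minimalPrimes A) := by
    rw [Submodule.mem_sInf]
    intro P hP
    have : Ideal.IsPrime P := hP.1.1
    have h2 : algebraMap _ A f * a ∈ P := by rw [ha]; exact zero_mem _
    exact (this.mem_or_mem h2).resolve_left (comap_eq_bot hm N hN P (hequi P hP) f hf0)
  rw [minimalPrimes, Ideal.sInf_minimalPrimes] at h1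
  have : a ∈ nilradical A := h1
  simpa [nilradical_eq_zero] using this

end
end ReesCrit

namespace ReesCrit
open MvPowerSeries IsLocalRing

section
variable {k : Type*} [Field k] {d : ℕ} {A : Type*} [CommRing A] [Algebra k A]
    [Algebra (MvPowerSeries (Fin d) k) A] 

/-- a polynomial over the power series ring, as a power series in one more variable -/
noncomputable def hatp (f : Polynomial (MvPowerSeries (Fin d) k)) : MvPowerSeries (Option (Fin d)) k :=
  (optionEquivLeft (Fin d) k).symm (f : PowerSeries (MvPowerSeries (Fin d) k))

theorem psi_hatp (ψ : MvPowerSeries (Option (Fin d)) k →ₐ[k] A)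
    (hψ : ∀ g, ψ ((optionEquivLeft (Fin d) k).symm (PowerSeries.C g)) = algebraMap _ A g) (w : A) (hw : ψ (X none) = w)
    (f : Polynomial (MvPowerSeries (Fin d) k)) : ψ (hatp f) = Polynomial.aeval w f := by
  let F : Polynomial (MvPowerSeries (Fin d) k) →+* A :=
    (ψ : MvPowerSeries (Option (Fin d)) k →+* A).comp
      (((optionEquivLeft (Fin d) k).symm : PowerSeries (MvPowerSeries (Fin d) k) →+* _).comp Polynomial.coeToPowerSeries.ringHom)
  have : F = (Polynomial.aeval w : Polynomial (MvPowerSeries (Fin d) k) →ₐ[_] A) := by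
    refine Polynomial.ringHom_ext ?_ ?_
    · intro g
      simp [F, hψ]
    · have : (optionEquivLeft (Fin d) k).symm PowerSeries.X = X none := by
        rw [AlgEquiv.symm_apply_eq, optionEquivLeft_X_none]
      simp [F, this, hw]
  exact DFunLike.congr_fun this f

theorem order_hatp_lt (f : Polynomial (MvPowerSeries (Fin d) k)) (r i : ℕ) (h : f.coeff i ∉ nn (Fin d) k ^ (r - i)) :
    ∃ o : ℕ, (hatp f).order = o ∧ o < r := by
  rw [mem_pow_iff] at h
  push Not at h
  obtain ⟨x, hx, hne⟩ := h
  have h1 : coeff (x.optionElim i) (hatp f) ≠ 0 := by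
    rw [hatp, ← coeff_coeff_optionEquivLeft, AlgEquiv.apply_symm_apply, Polynomial.coeff_coe]
    exact hne
  have h2 := order_le h1
  have h3 : Finsupp.degree (x.optionElim i) = i + Finsupp.degree x := by
    rw [Finsupp.degree_eq_sum, Fintype.sum_option, Finsupp.degree_eq_sum]
    simp
  rw [h3] at h2
  have hne : (hatp f).order ≠ ⊤ := ne_top_of_le_ne_top (ENat.natCast_ne_top _) h2
  obtain ⟨o, ho⟩ := ENat.ne_top_iff_exists.1 hne
  refine ⟨o, ho.symm, ?_⟩
  rw [← ho] at h2
  have : o ≤ i + Finsupp.degree x := by exact_mod_cast h2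
  omega

/-- the map `R ^ r → A` given by powers of `w` -/
noncomputable def powMap (w : A) (r : ℕ) : (Fin r → MvPowerSeries (Fin d) k) →ₗ[MvPowerSeries (Fin d) k] A :=
  Fintype.linearCombination _ (fun i : Fin r => w ^ (i : ℕ))

theorem powMap_eq (w : A) (r : ℕ) (v : Fin r → MvPowerSeries (Fin d) k) :
    powMap w r v = Polynomial.aeval w (∑ i : Fin r, Polynomial.C (v i) * Polynomial.X ^ (i : ℕ)) := by
  simp [powMap, Fintype.linearCombination_apply, Algebra.smul_def]

theorem coeff_sum_fin {R : Type*} [CommRing R] (r : ℕ) (v : Fin r → R) (j : Fin r) :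
    (∑ i : Fin r, Polynomial.C (v i) * Polynomial.X ^ (i : ℕ)).coeff j = v j := by
  rw [Polynomial.finsetSum_coeff]
  simp only [Polynomial.coeff_C_mul_X_pow]
  rw [Finset.sum_eq_single j]
  · simp
  · intro b _ hb
    rw [if_neg]
    intro h; exact hb (Fin.ext h.symm)
  · simp

theorem powMap_inj (w : A) (f : Polynomial (MvPowerSeries (Fin d) k)) (hf : f.Monic)
    (hmin : ∀ g : Polynomial (MvPowerSeries (Fin d) k), Polynomial.aeval w g = 0 → g.degree < f.degree → g = 0) :
    Function.Injective (powMap (k := k) (d := d) w f.natDegree) := by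
  rw [← LinearMap.ker_eq_bot, LinearMap.ker_eq_bot']
  intro v hv
  rw [powMap_eq] at hv
  have h0 := hmin _ hv (by
    rw [Polynomial.degree_eq_natDegree hf.ne_zero]
    refine (Polynomial.degree_sum_le _ _).trans_lt ?_
    rw [Finset.sup_lt_iff (by exact WithBot.bot_lt_coe _)]
    intro i _
    refine (Polynomial.degree_C_mul_X_pow_le _ _).trans_lt ?_
    exact_mod_cast i.2)
  ext1 j
  rw [← coeff_sum_fin f.natDegree v j, h0]
  simp

theorem artin_rees_lower [Module.Finite (MvPowerSeries (Fin d) k) A] (w : A) (r : ℕ) (hinj : Function.Injective (powMap (k := k) (d := d) w r)) :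
    ∃ s : ℕ, ∀ n, s ≤ n → ∀ v, powMap (k := k) (d := d) w r v ∈ ((nn (Fin d) k).map (algebraMap _ A)) ^ n → ∀ i, v i ∈ nn (Fin d) k ^ (n - s) := by
  obtain ⟨s, hs⟩ := Ideal.exists_pow_inf_eq_pow_smul (nn (Fin d) k) (LinearMap.range (powMap (k := k) (d := d) w r))
  refine ⟨s, fun n hn v hv => ?_⟩
  have h1 : powMap w r v ∈ (nn (Fin d) k ^ n • ⊤ ⊓ LinearMap.range (powMap (k := k) (d := d) w r) : Submodule (MvPowerSeries (Fin d) k) A) := by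
    refine ⟨?_, LinearMap.mem_range_self _ _⟩
    rw [Ideal.smul_top_eq_map, Ideal.map_pow]
    exact hv
  rw [hs n hn] at h1
  have h2 := Submodule.smul_mono (le_refl (nn (Fin d) k ^ (n - s))) (inf_le_right : (nn (Fin d) k ^ s • ⊤ ⊓ LinearMap.range (powMap (k := k) (d := d) w r) : Submodule (MvPowerSeries (Fin d) k) A) ≤ _) h1
  rw [LinearMap.range_eq_map, ← Submodule.map_smul''] at h2
  obtain ⟨v', hv', he⟩ := h2
  rw [hinj he] at hv'
  exact (mem_smul_top_pi _ v).1 hv'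

theorem count_core [IsScalarTower k (MvPowerSeries (Fin d) k) A] [Module.Finite (MvPowerSeries (Fin d) k) A]
    (ψ : MvPowerSeries (Option (Fin d)) k →ₐ[k] A)
    (hψ : ∀ g, ψ ((optionEquivLeft (Fin d) k).symm (PowerSeries.C g)) = algebraMap _ A g) (w : A) (hw : ψ (X none) = w)
    (f : Polynomial (MvPowerSeries (Fin d) k)) (hf : f.Monic) (hf0 : Polynomial.aeval w f = 0)
    (hmin : ∀ g : Polynomial (MvPowerSeries (Fin d) k), Polynomial.aeval w g = 0 → g.degree < f.degree → g = 0)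
    (o : ℕ) (ho : (hatp f).order = o) (J L : Ideal A) (hJ : J = (nn (Fin d) k).map (algebraMap _ A)) (hJL : J ≤ L)
    (hL : (nn (Option (Fin d)) k).map ψ ≤ L)
    (hfin : ∀ n, Module.Finite k (A ⧸ J ^ n)) :
    ∃ s : ℕ, ∀ n, s ≤ n → Module.finrank k (A ⧸ L ^ n) + f.natDegree * hh (Fin d) (n - s) ≤ Module.finrank k (A ⧸ J ^ n) + o * hh (Fin d) n := by
  set r := f.natDegree with hr
  obtain ⟨s, hs⟩ := artin_rees_lower w r (powMap_inj w f hf hmin)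
  refine ⟨s, fun n hn => ?_⟩
  have hfn := hfin n
  have hLn : Module.Finite k (A ⧸ L ^ n) := finite_quot_of_le (Ideal.pow_right_mono hJL n)
  -- the maps
  let q : (A ⧸ J ^ n) →ₗ[k] (A ⧸ L ^ n) := (Ideal.Quotient.factorₐ k (Ideal.pow_right_mono hJL n)).toLinearMap
  let SV : MvPowerSeries (Option (Fin d)) k →ₗ[k] (A ⧸ J ^ n) := (Ideal.Quotient.mkₐ k (J ^ n)).toLinearMap ∘ₗ ψ.toLinearMap
  let SW : MvPowerSeries (Option (Fin d)) k →ₗ[k] (A ⧸ L ^ n) := (Ideal.Quotient.mkₐ k (L ^ n)).toLinearMap ∘ₗ ψ.toLinearMap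
  have hqS : SW = q ∘ₗ SV := by ext x; rfl
  have hqsurj : Function.Surjective q := by
    intro x
    obtain ⟨a, rfl⟩ := Ideal.Quotient.mk_surjective x
    exact ⟨Ideal.Quotient.mk _ a, rfl⟩
  -- upper bound
  have hup : Module.finrank k (LinearMap.range SW) ≤ o * hh (Fin d) n := by
    refine le_trans ?_ (finrank_quot_sup_option ho n)
    have hfinS := finite_quot_of_le (k := k) (le_sup_left : nn (Option (Fin d)) k ^ n ≤ nn (Option (Fin d)) k ^ n ⊔ Ideal.span {hatp f})
    let π : MvPowerSeries (Option (Fin d)) k →ₗ[k] _ := (Ideal.Quotient.mkₐ k (nn (Option (Fin d)) k ^ n ⊔ Ideal.span {hatp f})).toLinearMap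
    refine (finrank_range_le_of_ker_le π SW ?_).trans (Submodule.finrank_le _)
    intro x hx
    have hx : x ∈ nn (Option (Fin d)) k ^ n ⊔ Ideal.span {hatp f} := Ideal.Quotient.eq_zero_iff_mem.1 hx
    have hle : nn (Option (Fin d)) k ^ n ⊔ Ideal.span {hatp f} ≤ (L ^ n).comap ψ := by
      refine sup_le ?_ ?_
      · rw [← Ideal.map_le_iff_le_comap, Ideal.map_pow]
        exact Ideal.pow_right_mono hL n
      · rw [Ideal.span_singleton_le_iff_mem, Ideal.mem_comap, psi_hatp ψ hψ w hw, hf0]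
        exact zero_mem _
    exact Ideal.Quotient.eq_zero_iff_mem.2 (hle hx)
  -- lower bound
  have hlow : r * hh (Fin d) (n - s) ≤ Module.finrank k (LinearMap.range SV) := by
    let RV : (Fin r → MvPowerSeries (Fin d) k) →ₗ[k] (A ⧸ J ^ n) :=
      (Ideal.Quotient.mkₐ k (J ^ n)).toLinearMap ∘ₗ (powMap w r).restrictScalars k
    let F : (Fin r → MvPowerSeries (Fin d) k) →ₗ[k] (Fin r → MvPowerSeries (Fin d) k ⧸ nn (Fin d) k ^ (n - s)) :=
      LinearMap.pi fun i => (Ideal.Quotient.mkₐ k _).toLinearMap ∘ₗ LinearMap.proj i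
    have h1 : LinearMap.range RV ≤ LinearMap.range SV := by
      rintro _ ⟨v, rfl⟩
      refine ⟨hatp (∑ i : Fin r, Polynomial.C (v i) * Polynomial.X ^ (i : ℕ)), ?_⟩
      change Ideal.Quotient.mk _ (ψ _) = Ideal.Quotient.mk _ (powMap w r v)
      rw [psi_hatp ψ hψ w hw, powMap_eq]
    have hFs : LinearMap.range F = ⊤ := by
      rw [LinearMap.range_eq_top]
      intro u
      choose v hv using fun i => Ideal.Quotient.mk_surjective (u i)
      exact ⟨v, funext hv⟩
    have h2 := finrank_range_le_of_ker_le RV F (by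
      intro v hv
      have hv : powMap w r v ∈ J ^ n := Ideal.Quotient.eq_zero_iff_mem.1 hv
      rw [hJ] at hv
      have := hs n hn v hv
      rw [LinearMap.mem_ker]
      funext i
      exact Ideal.Quotient.eq_zero_iff_mem.2 (this i))
    rw [hFs, finrank_top, Module.finrank_pi_fintype] at h2
    simp only [finrank_quot_nn, Finset.sum_const, Finset.card_univ, Fintype.card_fin, smul_eq_mul] at h2
    exact h2.trans (Submodule.finrank_mono h1)
  -- combine
  let q' : LinearMap.range SV →ₗ[k] (A ⧸ L ^ n) := q ∘ₗ (LinearMap.range SV).subtype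
  have e1 := q.finrank_range_add_finrank_ker
  have e2 := q'.finrank_range_add_finrank_ker
  have e3 : LinearMap.range q' = LinearMap.range SW := by
    rw [hqS, LinearMap.range_comp SV q, LinearMap.range_comp, Submodule.range_subtype]
  have e4 : Module.finrank k (LinearMap.ker q') ≤ Module.finrank k (LinearMap.ker q) := by
    let T : LinearMap.ker q' →ₗ[k] LinearMap.ker q :=
      ((LinearMap.range SV).subtype.domRestrict _).codRestrict _ (fun x => x.2)
    refine LinearMap.finrank_le_finrank_of_injective (f := T) ?_
    intro a b hab
    have := congrArg Subtype.val hab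
    exact Subtype.ext (Subtype.ext this)
  rw [LinearMap.range_eq_top.2 hqsurj, finrank_top] at e1
  rw [e3] at e2
  omega

end

theorem core {k : Type*} [Field k] {d : ℕ} {A : Type*} [CommRing A] [IsLocalRing A] [IsNoetherianRing A] [IsReduced A] [Algebra k A]
    (hcomp : IsAdicComplete (maximalIdeal A) A)
    (hequi : ∀ P ∈ minimalPrimes A, ringKrullDim (A ⧸ P) = d)
    (y : Fin d → A) (hy : ∀ i, y i ∈ maximalIdeal A) (N : ℕ) (hN : maximalIdeal A ^ N ≤ Ideal.span (Set.range y))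
    (hfin : ∀ n, Module.Finite k (A ⧸ Ideal.span (Set.range y) ^ n)) (w : A) (hw : w ∈ maximalIdeal A) :
    (∃ r, 0 < r ∧ ∃ a : ℕ → A, (∀ i, i < r → a i ∈ Ideal.span (Set.range y) ^ (r - i)) ∧ w ^ r + ∑ i ∈ Finset.range r, a i * w ^ i = 0) ∨
    ∃ r o s : ℕ, o < r ∧ ∀ n, s ≤ n → Module.finrank k (A ⧸ (Ideal.span (Set.range y) ⊔ Ideal.span {w}) ^ n) + r * hh (Fin d) (n - s) ≤
      Module.finrank k (A ⧸ Ideal.span (Set.range y) ^ n) + o * hh (Fin d) n := by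
  obtain ⟨ψ, hψX⟩ := exists_psMap (k := k) (σ := Option (Fin d)) (maximalIdeal A) (fun i => Option.elim i w y) (by
    rintro (_ | i)
    · exact hw
    · exact hy i)
  let φ : MvPowerSeries (Fin d) k →+* A := (ψ : MvPowerSeries (Option (Fin d)) k →+* A).comp
      (((optionEquivLeft (Fin d) k).symm : PowerSeries (MvPowerSeries (Fin d) k) →+* _).comp PowerSeries.C)
  letI : Algebra (MvPowerSeries (Fin d) k) A := φ.toAlgebra
  have halg : algebraMap (MvPowerSeries (Fin d) k) A = φ := rfl
  have hψ : ∀ g, ψ ((optionEquivLeft (Fin d) k).symm (PowerSeries.C g)) = algebraMap _ A g := fun g => rfl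
  have : IsScalarTower k (MvPowerSeries (Fin d) k) A := by
    refine IsScalarTower.of_algebraMap_eq fun c => ?_
    rw [← hψ, ← ψ.commutes]
    congr 1
    rw [AlgEquiv.eq_symm_apply, MvPowerSeries.algebraMap_apply, optionEquivLeft_C, MvPowerSeries.algebraMap_apply]
  set J := Ideal.span (Set.range y) with hJdef
  have hJ : J = (nn (Fin d) k).map (algebraMap _ A) := by
    rw [Ideal.map_span, ← Set.range_comp, hJdef]
    congr 2
    funext i
    rw [Function.comp_apply, ← hψ]
    have : (optionEquivLeft (Fin d) k).symm (PowerSeries.C (X i)) = X (some i) := by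
      rw [AlgEquiv.symm_apply_eq, optionEquivLeft_X_some]
    rw [this, hψX]
    rfl
  have hJm : J ≤ maximalIdeal A := by
    rw [hJdef, Ideal.span_le]; rintro _ ⟨i, rfl⟩; exact hy i
  have hfinR : Module.Finite (MvPowerSeries (Fin d) k) A := by
    have h1 : IsHausdorff (nn (Fin d) k) A := by
      rw [← IsHausdorff.map_algebraMap_iff (S := A), ← hJ]
      exact IsHausdorff.of_le_jacobson J A (hJm.trans (maximalIdeal_le_jacobson _))
    have h2 : Module.Finite (MvPowerSeries (Fin d) k) (A ⧸ (nn (Fin d) k • ⊤ : Submodule (MvPowerSeries (Fin d) k) A)) := by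
      have h3 := hfin 1
      rw [pow_one] at h3
      rw [Ideal.smul_top_eq_map, ← hJ]
      have : Module.Finite (MvPowerSeries (Fin d) k) (A ⧸ J) := Module.Finite.of_restrictScalars_finite k _ _
      exact this
    exact finite_of_complete (nn (Fin d) k)
  have htf := torsion_free (k := k) (A := A) (d := d) (hJ ▸ hJm) N (hJ ▸ hN) hequi
  obtain ⟨f, hf, hf0, hmin⟩ := exists_minpoly (R := MvPowerSeries (Fin d) k) htf w (Algebra.IsIntegral.isIntegral w)
  by_cases hinteg : ∀ i, f.coeff i ∈ nn (Fin d) k ^ (f.natDegree - i)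
  · left
    refine ⟨f.natDegree, ?_, fun i => algebraMap _ A (f.coeff i), ?_, ?_⟩
    · rw [Nat.pos_iff_ne_zero]
      intro h
      replace h := Polynomial.Monic.natDegree_eq_zero hf |>.1 h
      rw [h] at hf0
      simp at hf0
    · intro i _
      rw [hJ, ← Ideal.map_pow]
      exact Ideal.mem_map_of_mem _ (hinteg i)
    · have := hf0
      rw [hf.as_sum] at this
      simpa using this
  · right
    push Not at hinteg
    obtain ⟨i, hi⟩ := hinteg
    obtain ⟨o, ho, hlt⟩ := order_hatp_lt f _ i hi
    obtain ⟨s, hs⟩ := count_core ψ hψ w (hψX none) f hf hf0 hmin o ho J (J ⊔ Ideal.span {w}) hJ le_sup_left (by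
      rw [Ideal.map_span, Ideal.span_le]
      rintro _ ⟨_, ⟨i, rfl⟩, rfl⟩
      rw [hψX]
      rcases i with _ | i
      · exact Ideal.mem_sup_right (Ideal.mem_span_singleton_self w)
      · exact Ideal.mem_sup_left (Ideal.subset_span ⟨i, rfl⟩)) hfin
    exact ⟨f.natDegree, o, s, hlt, hs⟩
end ReesCrit

namespace ReesCrit
open IsLocalRing

theorem length_restrict {k A : Type*} [Field k] [CommRing A] [IsLocalRing A] [Algebra k A]
    (hs : Function.Surjective (algebraMap k (A ⧸ maximalIdeal A))) {M : Type*} [AddCommGroup M] [Module A M]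
    (h : IsFiniteLength A M) : ∀ [Module k M] [IsScalarTower k A M], Module.length k M = Module.length A M := by
  induction h with
  | of_subsingleton => intro _ _; rw [Module.length_eq_zero, Module.length_eq_zero]
  | @of_simple_quotient M _ _ N hsim hN ih =>
    intro _ _
    rw [Module.length_eq_add_of_exact (R := A) N.subtype N.mkQ N.subtype_injective N.mkQ_surjective
      (LinearMap.exact_subtype_mkQ N)]
    rw [Module.length_eq_add_of_exact (R := k) (N.subtype.restrictScalars k) (N.mkQ.restrictScalars k)
      N.subtype_injective N.mkQ_surjective (LinearMap.exact_subtype_mkQ N), ih]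
    congr 1
    rw [Module.length_eq_one A]
    obtain ⟨P, hP, ⟨e⟩⟩ := isSimpleModule_iff_quot_maximal.1 hsim
    obtain rfl := eq_maximalIdeal hP
    rw [(e.restrictScalars k).length_eq, Module.length_eq_of_surjective (R := A ⧸ maximalIdeal A) hs]
    have : Field (A ⧸ maximalIdeal A) := Ideal.Quotient.field _
    rw [← Module.length_eq_of_surjective (S := A) Ideal.Quotient.mk_surjective, Module.length_eq_one_iff]
    exact isSimpleModule_iff_quot_maximal.2 ⟨_, hP, ⟨LinearEquiv.refl _ _⟩⟩

theorem isFiniteLength_quot {A : Type*} [CommRing A] [IsLocalRing A] [IsNoetherianRing A] (K : Ideal A) (N : ℕ)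
    (hK : maximalIdeal A ^ N ≤ K) : IsFiniteLength A (A ⧸ K) := by
  rcases subsingleton_or_nontrivial (A ⧸ K) with h | h
  · exact .of_subsingleton
  have : IsLocalRing (A ⧸ K) := .of_surjective' (Ideal.Quotient.mk K) Ideal.Quotient.mk_surjective
  have : IsArtinianRing (A ⧸ K) := by
    rw [isArtinianRing_iff_isNilpotent_maximalIdeal]
    refine ⟨N, ?_⟩
    rw [← map_maximalIdeal_of_surjective (Ideal.Quotient.mk K) Ideal.Quotient.mk_surjective, ← Ideal.map_pow]
    exact (Ideal.map_eq_bot_iff_le_ker _).2 (by rwa [Ideal.mk_ker])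
  rw [isFiniteLength_iff_isNoetherian_isArtinian]
  exact ⟨inferInstance, isArtinian_of_surjective_algebraMap (R := A ⧸ K) Ideal.Quotient.mk_surjective⟩

theorem finite_and_length {k A : Type*} [Field k] [CommRing A] [IsLocalRing A] [IsNoetherianRing A] [Algebra k A]
    (hs : Function.Surjective (algebraMap k (A ⧸ maximalIdeal A))) (K : Ideal A) (N : ℕ)
    (hK : maximalIdeal A ^ N ≤ K) : Module.Finite k (A ⧸ K) ∧ (Module.length A (A ⧸ K)).toNat = Module.finrank k (A ⧸ K) := by
  have h1 := isFiniteLength_quot K N hK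
  have h2 := length_restrict hs h1
  have h3 : Module.Finite k (A ⧸ K) := by
    have := Module.length_ne_top_iff.2 h1
    rw [← h2, Module.length_ne_top_iff, isFiniteLength_iff_isNoetherian_isArtinian] at this
    have := this.1
    infer_instance
  refine ⟨h3, ?_⟩
  rw [← h2, Module.length_eq_finrank]
  rfl

end ReesCrit

namespace ReesCrit
open IsLocalRing Filter Topology

theorem pow_sup_le {A : Type*} [CommRing A] (K : Ideal A) (z : A) (j : ℕ) :
    (K ⊔ Ideal.span {z}) ^ (j + 1) ≤ K * (K ⊔ Ideal.span {z}) ^ j ⊔ Ideal.span {z ^ (j + 1)} := by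
  set L := K ⊔ Ideal.span {z} with hL
  induction j with
  | zero => simp [hL]
  | succ j ih =>
    have hz : Ideal.span {z ^ (j + 1)} ≤ L ^ (j + 1) := by
      rw [← Ideal.span_singleton_pow]
      exact Ideal.pow_right_mono le_sup_right _
    calc L ^ (j + 1 + 1) = L ^ (j + 1) * L := pow_succ _ _
      _ ≤ (K * L ^ j ⊔ Ideal.span {z ^ (j + 1)}) * L := Ideal.mul_mono_left ih
      _ = K * L ^ (j + 1) ⊔ (Ideal.span {z ^ (j + 1)} * K ⊔ Ideal.span {z ^ (j + 1)} * Ideal.span {z}) := by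
        rw [Ideal.sup_mul, mul_assoc, ← pow_succ]
        conv_lhs => rw [hL, Ideal.mul_sup, ← hL]
      _ ≤ _ := by
        refine sup_le le_sup_left (sup_le ?_ ?_)
        · rw [mul_comm]
          exact (Ideal.mul_mono_right hz).trans le_sup_left
        · rw [Ideal.span_singleton_mul_span_singleton, ← pow_succ]
          exact le_sup_right

theorem int_step {A : Type*} [CommRing A] {I K : Ideal A} (hIK : I ≤ K) {z : A} (hz : IsIntegralOverIdeal I z) :
    ∃ c, ∀ n, (K ⊔ Ideal.span {z}) ^ (n + c) ≤ K ^ n := by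
  obtain ⟨r, hr, a, ha, h0⟩ := hz
  obtain ⟨c, rfl⟩ : ∃ c, r = c + 1 := ⟨r - 1, by omega⟩
  have h1 := pow_sup_le K z c
  set L := K ⊔ Ideal.span {z} with hL
  have hKL : K ≤ L := le_sup_left
  have hzL : z ∈ L := le_sup_right (a := K) (Ideal.mem_span_singleton_self z)
  have h2 : L ^ (c + 1) ≤ K * L ^ c := by
    refine h1.trans (sup_le le_rfl ?_)
    rw [Ideal.span_singleton_le_iff_mem, eq_neg_of_add_eq_zero_left h0]
    refine neg_mem (sum_mem fun i hi => ?_)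
    have hi' := Finset.mem_Icc.1 hi
    have h3 : a i * z ^ (c + 1 - i) ∈ K ^ i * L ^ (c + 1 - i) :=
      Ideal.mul_mem_mul (Ideal.pow_right_mono hIK _ (ha i hi)) (Ideal.pow_mem_pow hzL _)
    obtain ⟨j, rfl⟩ : ∃ j, i = j + 1 := ⟨i - 1, by omega⟩
    have : K ^ (j + 1) * L ^ (c + 1 - (j + 1)) ≤ K * L ^ c := by
      rw [pow_succ', mul_assoc]
      refine Ideal.mul_mono_right ?_
      calc _ ≤ L ^ j * L ^ (c + 1 - (j + 1)) := Ideal.mul_mono_left (Ideal.pow_right_mono hKL _)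
        _ = L ^ c := by rw [← pow_add]; congr 1; omega
    exact this h3
  refine ⟨c, fun n => ?_⟩
  have : L ^ (n + c) ≤ K ^ n * L ^ c := by
    induction n with
    | zero => simp
    | succ n ih =>
      calc L ^ (n + 1 + c) = L ^ (n + c) * L := by rw [← pow_succ]; congr 1; omega
        _ ≤ K ^ n * L ^ c * L := Ideal.mul_mono_left ih
        _ = K ^ n * L ^ (c + 1) := by rw [mul_assoc, ← pow_succ]
        _ ≤ K ^ n * (K * L ^ c) := Ideal.mul_mono_right h2
        _ = _ := by rw [← mul_assoc, ← pow_succ]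
  exact this.trans Ideal.mul_le_left

theorem int_all {A : Type*} [CommRing A] [IsNoetherianRing A] {I I' : Ideal A} (hI : I ≤ I') (hz : ∀ z ∈ I', IsIntegralOverIdeal I z) :
    ∃ c, ∀ n, I' ^ (n + c) ≤ I ^ n := by
  classical
  obtain ⟨S, hS⟩ : I'.FG := IsNoetherian.noetherian I'
  have key : ∀ T : Finset A, (∀ t ∈ T, t ∈ I') → ∃ c, ∀ n, (I ⊔ Ideal.span (T : Set A)) ^ (n + c) ≤ I ^ n := by
    intro T
    induction T using Finset.induction_on with
    | empty => intro _; exact ⟨0, fun n => by simp⟩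
    | insert t T _ ih =>
      intro hT
      obtain ⟨c, hc⟩ := ih fun t ht => hT t (Finset.mem_insert_of_mem ht)
      obtain ⟨c', hc'⟩ := int_step (K := I ⊔ Ideal.span (T : Set A)) le_sup_left (hz t (hT t (Finset.mem_insert_self _ _)))
      refine ⟨c + c', fun n => ?_⟩
      have : I ⊔ Ideal.span ((insert t T : Finset A) : Set A) = (I ⊔ Ideal.span (T : Set A)) ⊔ Ideal.span {t} := by
        rw [Finset.coe_insert, Ideal.span_insert, sup_assoc, sup_comm (Ideal.span {t})]
      rw [this, ← add_assoc]
      exact (hc' _).trans (hc _)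
  obtain ⟨c, hc⟩ := key S fun t ht => by rw [← hS]; exact Ideal.subset_span ht
  refine ⟨c, fun n => ?_⟩
  have := hc n
  rwa [show I ⊔ Ideal.span (S : Set A) = I' from by rw [show Ideal.span (S : Set A) = I' from hS]; exact sup_eq_right.2 hI] at this

theorem tendsto_ratio (c d : ℕ) : Tendsto (fun n : ℕ => ((n + c : ℕ) : ℝ) ^ d / (n : ℝ) ^ d) atTop (𝓝 1) := by
  have h1 : Tendsto (fun n : ℕ => 1 + (c : ℝ) / n) atTop (𝓝 (1 + 0)) :=
    tendsto_const_nhds.add (tendsto_const_div_atTop_nhds_zero_nat _)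
  have h2 := h1.pow d
  rw [add_zero, one_pow] at h2
  refine h2.congr' ?_
  filter_upwards [eventually_gt_atTop 0] with n hn
  have : (n : ℝ) ≠ 0 := by positivity
  rw [← div_pow]
  congr 1
  push_cast
  field_simp

theorem tendsto_ratio_sub (c d : ℕ) : Tendsto (fun n : ℕ => ((n - c : ℕ) : ℝ) ^ d / (n : ℝ) ^ d) atTop (𝓝 1) := by
  have h1 : Tendsto (fun n : ℕ => 1 - (c : ℝ) / n) atTop (𝓝 (1 - 0)) :=
    tendsto_const_nhds.sub (tendsto_const_div_atTop_nhds_zero_nat _)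
  have h2 := h1.pow d
  rw [sub_zero, one_pow] at h2
  refine h2.congr' ?_
  filter_upwards [eventually_gt_atTop c] with n hn
  have : (n : ℝ) ≠ 0 := by
    have : 0 < n := by omega
    positivity
  rw [← div_pow]
  congr 1
  push_cast [hn.le]
  field_simp

theorem tendsto_shift {f : ℕ → ℝ} {d : ℕ} {e : ℝ} (h : Tendsto (fun n : ℕ => f n / (n : ℝ) ^ d) atTop (𝓝 e)) (N c : ℕ) (hN : 0 < N) :
    Tendsto (fun n : ℕ => f (N * (n + c)) / (n : ℝ) ^ d) atTop (𝓝 ((N : ℝ) ^ d * e)) := by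
  have h1 : Tendsto (fun n : ℕ => N * (n + c)) atTop atTop :=
    tendsto_atTop_mono (fun n => (Nat.le_add_right n c).trans (Nat.le_mul_of_pos_left _ hN)) tendsto_id
  have h2 := ((tendsto_ratio c d).const_mul ((N : ℝ) ^ d)).mul (h.comp h1)
  rw [mul_one] at h2
  refine h2.congr' ?_
  filter_upwards [eventually_gt_atTop 0] with n hn
  have : (n : ℝ) ≠ 0 := by positivity
  have : (N : ℝ) ≠ 0 := by positivity
  have : (n : ℝ) + c ≠ 0 := by positivity
  simp only [Function.comp_apply]
  push_cast
  rw [mul_pow]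
  field_simp

theorem int_of_pow {A : Type*} [CommRing A] {I J : Ideal A} {N r : ℕ} (hN : 0 < N) (hr : 0 < r) (hJ : J ≤ I ^ N) (z : A) (a : ℕ → A)
    (ha : ∀ i, i < r → a i ∈ J ^ (r - i)) (h : (z ^ N) ^ r + ∑ i ∈ Finset.range r, a i * (z ^ N) ^ i = 0) : IsIntegralOverIdeal I z := by
  classical
  refine ⟨N * r, Nat.mul_pos hN hr, fun j => if N ∣ j then a (r - j / N) else 0, ?_, ?_⟩
  · intro j hj
    rw [Finset.mem_Icc] at hj
    dsimp only
    split_ifs with hd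
    · obtain ⟨t, rfl⟩ := hd
      have ht : 0 < t := Nat.pos_of_ne_zero (by rintro rfl; omega)
      have ht' : t ≤ r := Nat.le_of_mul_le_mul_left hj.2 hN
      rw [Nat.mul_div_cancel_left _ hN, pow_mul]
      have := ha (r - t) (by omega)
      rw [show r - (r - t) = t by omega] at this
      exact Ideal.pow_right_mono hJ _ this
    · exact zero_mem _
  · refine Eq.trans ?_ h
    rw [← pow_mul]
    congr 1
    symm
    refine Finset.sum_of_injOn (fun i => N * (r - i)) ?_ ?_ ?_ ?_
    · intro i hi j hj hij
      simp only [Finset.coe_range, Set.mem_Iio] at hi hj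
      have := Nat.eq_of_mul_eq_mul_left hN hij
      omega
    · intro i hi
      simp only [Finset.coe_range, Set.mem_Iio] at hi
      simp only [Finset.coe_Icc, Set.mem_Icc]
      exact ⟨Nat.mul_pos hN (by omega), Nat.mul_le_mul_left _ (by omega)⟩
    · intro j hj hj'
      dsimp only
      rw [if_neg, zero_mul]
      rintro ⟨t, rfl⟩
      apply hj'
      rw [Finset.mem_Icc] at hj
      have ht : 0 < t := Nat.pos_of_ne_zero (by rintro rfl; omega)
      have ht' : t ≤ r := Nat.le_of_mul_le_mul_left hj.2 hN
      refine ⟨r - t, ?_, ?_⟩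
      · simp only [Finset.coe_range, Set.mem_Iio]; omega
      · show N * (r - (r - t)) = N * t
        congr 1; omega
    · intro i hi
      rw [Finset.mem_range] at hi
      dsimp only
      rw [if_pos (Dvd.intro _ rfl), Nat.mul_div_cancel_left _ hN, ← pow_mul]
      congr 2
      · omega
      · rw [← Nat.mul_sub]; congr 1; omega

end ReesCrit

/-- **Rees.** For `𝔪`-primary ideals `I ⊆ I'` of a `d`-dimensional complete
equidimensional reduced Noetherian local ring of characteristic `p`, one has
`e(I') = e(I)` if and only if every element of `I'` is integral over `I`. -/
theorem rees_multiplicity_criterion (A : Type*) [CommRing A] [IsLocalRing A]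
    [IsNoetherianRing A] [IsReduced A] (p : ℕ) [Fact p.Prime] [CharP A p]
    (hcomp : IsAdicComplete (IsLocalRing.maximalIdeal A) A)
    (d : ℕ) (hd : ringKrullDim A = d)
    (hequi : ∀ P ∈ minimalPrimes A, ringKrullDim (A ⧸ P) = d)
    (I I' : Ideal A) (hII' : I ≤ I')
    (hI : I.radical = IsLocalRing.maximalIdeal A)
    (hI' : I'.radical = IsLocalRing.maximalIdeal A)
    (eI eI' : ℝ)
    (heI : Filter.Tendsto
      (fun n : ℕ =>
        (d.factorial : ℝ) * ((moduleLength A (A ⧸ I ^ n)).toNat : ℝ) / (n : ℝ) ^ d)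
      Filter.atTop (nhds eI))
    (heI' : Filter.Tendsto
      (fun n : ℕ =>
        (d.factorial : ℝ) * ((moduleLength A (A ⧸ I' ^ n)).toNat : ℝ) / (n : ℝ) ^ d)
      Filter.atTop (nhds eI')) :
    eI' = eI ↔ ∀ z ∈ I', IsIntegralOverIdeal I z := by
  classical
  obtain ⟨g, hg⟩ := ReesCrit.exists_coefficientField A p hcomp
  let instAlg : Algebra (ResidueField A) A := g.toAlgebra
  have hs : Function.Surjective (algebraMap (ResidueField A) (A ⧸ maximalIdeal A)) := fun x => ⟨x, hg x⟩
  have hIm : I ≤ maximalIdeal A := hI ▸ Ideal.le_radical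
  have hI'm : I' ≤ maximalIdeal A := hI' ▸ Ideal.le_radical
  obtain ⟨t, ht⟩ : ∃ t, maximalIdeal A ^ t ≤ I := by
    have := Ideal.exists_radical_pow_le_of_fg I (IsNoetherian.noetherian _)
    rwa [hI] at this
  have hpow : ∀ n, maximalIdeal A ^ (t * n) ≤ I ^ n := fun n => by
    rw [pow_mul]; exact Ideal.pow_right_mono ht n
  have hpow' : ∀ n, maximalIdeal A ^ (t * n) ≤ I' ^ n := fun n =>
    (hpow n).trans (Ideal.pow_right_mono hII' n)
  have hlen : ∀ n, (moduleLength A (A ⧸ I ^ n)).toNat = Module.finrank (ResidueField A) (A ⧸ I ^ n) := fun n => by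
    rw [moduleLength, ← Module.length_eq_height]
    exact (ReesCrit.finite_and_length hs _ _ (hpow n)).2
  have hlen' : ∀ n, (moduleLength A (A ⧸ I' ^ n)).toNat = Module.finrank (ResidueField A) (A ⧸ I' ^ n) := fun n => by
    rw [moduleLength, ← Module.length_eq_height]
    exact (ReesCrit.finite_and_length hs _ _ (hpow' n)).2
  have hfinI : ∀ n, Module.Finite (ResidueField A) (A ⧸ I ^ n) := fun n =>
    (ReesCrit.finite_and_length hs _ _ (hpow n)).1
  have hfinI' : ∀ n, Module.Finite (ResidueField A) (A ⧸ I' ^ n) := fun n =>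
    (ReesCrit.finite_and_length hs _ _ (hpow' n)).1
  simp only [hlen] at heI
  simp only [hlen'] at heI'
  constructor
  · rintro heq z hz
    obtain ⟨B, hB⟩ := heI.bddAbove_range
    have hb : ∀ n, 0 < n → Module.finrank (ResidueField A) (A ⧸ I ^ n) ≤ ⌈B⌉₊ * n ^ d := by
      intro n hn
      have h1 := hB ⟨n, rfl⟩
      dsimp only at h1
      have hn' : (0 : ℝ) < (n : ℝ) ^ d := by positivity
      rw [div_le_iff₀ hn'] at h1
      have h2 : (1 : ℝ) ≤ d.factorial := by exact_mod_cast Nat.factorial_pos d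
      have h3 : (0 : ℝ) ≤ (Module.finrank (ResidueField A) (A ⧸ I ^ n) : ℝ) := by positivity
      have h4 : B * (n : ℝ) ^ d ≤ ⌈B⌉₊ * (n : ℝ) ^ d := mul_le_mul_of_nonneg_right (Nat.le_ceil B) hn'.le
      have h5 : (Module.finrank (ResidueField A) (A ⧸ I ^ n) : ℝ) ≤ ⌈B⌉₊ * (n : ℝ) ^ d := by nlinarith
      exact_mod_cast h5
    obtain ⟨N, y, m0, hN, hyI, hred⟩ := ReesCrit.exists_reduction I hIm hfinI _ d hb
    have hJI : Ideal.span (Set.range y) ≤ I ^ N := by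
      rw [Ideal.span_le]; rintro _ ⟨i, rfl⟩; exact hyI i
    have hym : ∀ i, y i ∈ maximalIdeal A := fun i => (Ideal.pow_le_self hN.ne').trans hIm (hyI i)
    have hJpow : ∀ n, maximalIdeal A ^ (t * (N * (n + m0))) ≤ Ideal.span (Set.range y) ^ n := fun n =>
      (hpow _).trans (hred n)
    have hfinJ : ∀ n, Module.Finite (ResidueField A) (A ⧸ Ideal.span (Set.range y) ^ n) := fun n =>
      (ReesCrit.finite_and_length hs _ _ (hJpow n)).1
    have hJ1 := hJpow 1
    rw [pow_one] at hJ1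
    rcases ReesCrit.core hcomp hequi y hym _ hJ1 hfinJ (z ^ N) (Ideal.pow_mem_of_mem _ (hI'm hz) N hN) with
      ⟨r, hr, a, ha, h0⟩ | ⟨r, o, s, hor, hmain⟩
    · exact ReesCrit.int_of_pow hN hr hJI z a ha h0
    · exfalso
      have hL : Ideal.span (Set.range y) ⊔ Ideal.span {z ^ N} ≤ I' ^ N := by
        refine sup_le (hJI.trans (Ideal.pow_right_mono hII' N)) ?_
        rw [Ideal.span_singleton_le_iff_mem]
        exact Ideal.pow_mem_pow hz N
      have t1 := ReesCrit.tendsto_shift heI' N 0 hN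
      have t2 := ReesCrit.tendsto_shift heI N m0 hN
      have t3 := (ReesCrit.tendsto_ratio_sub s d).const_mul (r : ℝ)
      have t4 := (ReesCrit.tendsto_ratio d d).const_mul (o : ℝ)
      have t5 := le_of_tendsto_of_tendsto (t1.add t3) (t2.add t4) (by
        filter_upwards [eventually_gt_atTop s] with n hn
        have e1 := hmain n hn.le
        have e2 : Module.finrank (ResidueField A) (A ⧸ I' ^ (N * (n + 0))) ≤
            Module.finrank (ResidueField A) (A ⧸ (Ideal.span (Set.range y) ⊔ Ideal.span {z ^ N}) ^ n) := by
          have : Module.Finite (ResidueField A) (A ⧸ (Ideal.span (Set.range y) ⊔ Ideal.span {z ^ N}) ^ n) :=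
            ReesCrit.finite_quot_of_le (Ideal.pow_right_mono le_sup_left n : Ideal.span (Set.range y) ^ n ≤ _)
          refine ReesCrit.finrank_quot_le ?_
          rw [add_zero, pow_mul]
          exact Ideal.pow_right_mono hL n
        have e3 : Module.finrank (ResidueField A) (A ⧸ Ideal.span (Set.range y) ^ n) ≤
            Module.finrank (ResidueField A) (A ⧸ I ^ (N * (n + m0))) :=
          ReesCrit.finrank_quot_le (hred n)
        have e4 := ReesCrit.le_factorial_mul_hh d (n - s) (by omega)
        have e5 := ReesCrit.factorial_mul_hh_le d n
        have e6 : d.factorial * Module.finrank (ResidueField A) (A ⧸ I' ^ (N * (n + 0))) + r * (n - s) ^ d ≤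
            d.factorial * Module.finrank (ResidueField A) (A ⧸ I ^ (N * (n + m0))) + o * (n + d) ^ d := by
          calc _ ≤ d.factorial * Module.finrank (ResidueField A) (A ⧸ (Ideal.span (Set.range y) ⊔ Ideal.span {z ^ N}) ^ n)
                + r * (d.factorial * ReesCrit.hh (Fin d) (n - s)) :=
                add_le_add (Nat.mul_le_mul_left _ e2) (Nat.mul_le_mul_left _ e4)
            _ = d.factorial * (Module.finrank (ResidueField A) (A ⧸ (Ideal.span (Set.range y) ⊔ Ideal.span {z ^ N}) ^ n)
                + r * ReesCrit.hh (Fin d) (n - s)) := by ring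
            _ ≤ d.factorial * (Module.finrank (ResidueField A) (A ⧸ Ideal.span (Set.range y) ^ n) +
                o * ReesCrit.hh (Fin d) n) := Nat.mul_le_mul_left _ e1
            _ = d.factorial * Module.finrank (ResidueField A) (A ⧸ Ideal.span (Set.range y) ^ n) +
                o * (d.factorial * ReesCrit.hh (Fin d) n) := by ring
            _ ≤ _ := add_le_add (Nat.mul_le_mul_left _ e3) (Nat.mul_le_mul_left _ e5)
        have e7 : (d.factorial : ℝ) * Module.finrank (ResidueField A) (A ⧸ I' ^ (N * (n + 0))) + r * ((n - s : ℕ) : ℝ) ^ d ≤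
            d.factorial * Module.finrank (ResidueField A) (A ⧸ I ^ (N * (n + m0))) + o * ((n + d : ℕ) : ℝ) ^ d := by
          exact_mod_cast e6
        have hn' : (0 : ℝ) ≤ (n : ℝ) ^ d := by positivity
        have e8 := div_le_div_of_nonneg_right e7 hn'
        simpa only [add_div, mul_div_assoc] using e8)
      have hor' : (o : ℝ) < r := by exact_mod_cast hor
      rw [heq] at t5
      linarith
  · intro hinteg
    obtain ⟨c, hc⟩ := ReesCrit.int_all hII' hinteg
    refine le_antisymm ?_ ?_
    · refine le_of_tendsto_of_tendsto' heI' heI fun n => ?_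
      have e1 : Module.finrank (ResidueField A) (A ⧸ I' ^ n) ≤ Module.finrank (ResidueField A) (A ⧸ I ^ n) :=
        ReesCrit.finrank_quot_le (Ideal.pow_right_mono hII' n)
      gcongr
    · have t1 := ReesCrit.tendsto_shift heI' 1 c one_pos
      rw [Nat.cast_one, one_pow, one_mul] at t1
      refine le_of_tendsto_of_tendsto' heI t1 fun n => ?_
      have e1 : Module.finrank (ResidueField A) (A ⧸ I ^ n) ≤ Module.finrank (ResidueField A) (A ⧸ I' ^ (1 * (n + c))) :=
        ReesCrit.finrank_quot_le (by rw [one_mul]; exact hc n)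
      gcongr
end
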